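/- Let K be a number field and let f be a quadratic form in 4 variables over K such that det M_f is a nonzero square in K (i.e. f is nondegenerate with discriminant 1), and such that for every ring homomorphism v : K → ℝ there exists x ∈ K⁴ with v(f(x)) > 0 (f is not negative definite at any real place). Then there exist nonzero a, b ∈ K such that f is isometric over K to the quaternion norm form ⟨1,−a,−b,ab⟩. -/

import Mathlib

open Quaternion

/-- The Gram matrix `M_f` of a quadratic form `f` in `n` variables: the matrix of the polar
bilinear form `B_f(x, y) = f(x + y) - f(x) - f(y)` in the standard basis. -/
noncomputable def gramMatrix {R : Type*} [CommRing R] {n : ℕ}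
    (f : QuadraticForm R (Fin n → R)) : Matrix (Fin n) (Fin n) R :=
  Matrix.of fun i j => QuadraticMap.polar f (Pi.single i 1) (Pi.single j 1)
set_option linter.unusedSectionVars false
set_option linter.style.haveILetI false
set_option linter.deprecated false
set_option linter.unusedSimpArgs false

namespace HS
open NumberField IsDedekindDomain HeightOneSpectrum WithZero

/-- Finite primes of a number field. -/
abbrev Pr (K : Type*) [Field K] := HeightOneSpectrum (𝓞 K)

section basics
variable {K : Type*} [Field K] [NumberField K]

/-- The additive order of a unit at a prime. -/
noncomputable def ord (v : Pr K) (x : Kˣ) : ℤ := - (Multiplicative.toAdd (v.valuationOfNeZero x))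

lemma val_eq (v : Pr K) (x : Kˣ) : v.valuation K (x : K) = exp (- ord v x) := by
  rw [← valuationOfNeZero_eq]; simp [ord, exp]

@[simp] lemma ord_mul (v : Pr K) (x y : Kˣ) : ord v (x * y) = ord v x + ord v y := by
  simp [ord]; ring

@[simp] lemma ord_one (v : Pr K) : ord v (1 : Kˣ) = 0 := by simp [ord]

@[simp] lemma ord_inv (v : Pr K) (x : Kˣ) : ord v (x⁻¹) = - ord v x := by simp [ord]

@[simp] lemma ord_div (v : Pr K) (x y : Kˣ) : ord v (x / y) = ord v x - ord v y := by
  simp [div_eq_mul_inv]; ring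

@[simp] lemma ord_pow (v : Pr K) (x : Kˣ) (n : ℕ) : ord v (x ^ n) = n * ord v x := by
  simp [ord]

@[simp] lemma ord_zpow (v : Pr K) (x : Kˣ) (n : ℤ) : ord v (x ^ n) = n * ord v x := by
  simp [ord]

lemma val_eq_one_iff (v : Pr K) (x : Kˣ) : v.valuation K (x : K) = 1 ↔ ord v x = 0 := by
  rw [val_eq, ← exp_zero, exp_inj]; omega

lemma val_lt_iff (v : Pr K) (x y : Kˣ) :
    v.valuation K (x : K) < v.valuation K (y : K) ↔ ord v y < ord v x := by
  rw [val_eq, val_eq, exp_lt_exp]; omega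

lemma val_eq_iff (v : Pr K) (x y : Kˣ) :
    v.valuation K (x : K) = v.valuation K (y : K) ↔ ord v x = ord v y := by
  rw [val_eq, val_eq, exp_inj]; omega

lemma exists_ord_eq_one (v : Pr K) : ∃ x : Kˣ, ord v x = 1 := by
  obtain ⟨p, hp⟩ := v.valuation_exists_uniformizer K
  have : p ≠ 0 := by
    rintro rfl
    rw [map_zero] at hp
    exact exp_ne_zero hp.symm
  refine ⟨Units.mk0 p this, ?_⟩
  have h := val_eq v (Units.mk0 p this)
  rw [Units.val_mk0, hp, exp_inj] at h; omega

lemma supp_finite (x : Kˣ) : {v : Pr K | ord v x ≠ 0}.Finite := by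
  obtain ⟨a, b, hb, hx⟩ := IsFractionRing.div_surjective (A := 𝓞 K) (x : K)
  have hb0 : b ≠ 0 := nonZeroDivisors.ne_zero hb
  have ha0 : a ≠ 0 := by
    rintro rfl
    exact x.ne_zero (by rw [← hx]; simp)
  have h1 := Ideal.finite_factors (R := 𝓞 K) (I := Ideal.span {a}) (by simpa using ha0)
  have h2 := Ideal.finite_factors (R := 𝓞 K) (I := Ideal.span {b}) (by simpa using hb0)
  refine (h1.union h2).subset ?_
  intro v hv
  by_contra hcon
  simp only [Set.mem_union, Set.mem_ofPred_eq, not_or] at hcon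
  apply hv
  rw [← val_eq_one_iff, ← hx, map_div₀]
  have e1 : v.valuation K (algebraMap (𝓞 K) K a) = 1 := by
    apply le_antisymm (v.valuation_le_one a)
    rw [← not_lt]; intro h; exact hcon.1 ((v.valuation_lt_one_iff_dvd a).1 h)
  have e2 : v.valuation K (algebraMap (𝓞 K) K b) = 1 := by
    apply le_antisymm (v.valuation_le_one b)
    rw [← not_lt]; intro h; exact hcon.2 ((v.valuation_lt_one_iff_dvd b).1 h)
  rw [e1, e2]; simp

lemma val_natCast_le (v : Pr K) (n : ℕ) : v.valuation K (n : K) ≤ 1 := by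
  have := v.valuation_le_one (K := K) (n : 𝓞 K)
  simpa using this

lemma exists_prime_over (p : ℕ) (hp : p.Prime) : ∃ v : Pr K, v.valuation K (p : K) < 1 := by
  have hpI : (Ideal.span {(p : ℤ)}).IsPrime := by
    rw [Ideal.span_singleton_prime (by exact_mod_cast hp.ne_zero)]
    exact Nat.prime_iff_prime_int.1 hp
  obtain ⟨Q, -, hQ, hQc⟩ := Ideal.exists_ideal_over_prime_of_isIntegral
    (S := 𝓞 K) (Ideal.span {(p : ℤ)}) (⊥ : Ideal (𝓞 K)) (by
      rw [Ideal.comap_bot_of_injective _ (FaithfulSMul.algebraMap_injective ℤ (𝓞 K))]; exact bot_le)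
  have hmem : (p : 𝓞 K) ∈ Q := by
    have : (p : ℤ) ∈ Ideal.comap (algebraMap ℤ (𝓞 K)) Q := by
      rw [hQc]; exact Ideal.mem_span_singleton_self _
    simpa using this
  have hb : Q ≠ ⊥ := by
    rintro rfl
    simp at hmem
    exact hp.ne_zero hmem
  refine ⟨⟨Q, hQ, hb⟩, ?_⟩
  have := (HeightOneSpectrum.valuation_lt_one_iff_mem (K := K) ⟨Q, hQ, hb⟩ (p : 𝓞 K)).2 hmem
  simpa using this

lemma infinite_primes : Infinite (Pr K) := by
  choose f hf using fun p : Nat.Primes => exists_prime_over (K := K) p.1 p.2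
  refine Infinite.of_injective f ?_
  intro p q hpq
  by_contra hne
  have hc : Nat.Coprime p.1 q.1 := (Nat.coprime_primes p.2 q.2).2 (fun h => hne (Subtype.ext h))
  have hi : IsCoprime (p.1 : ℤ) (q.1 : ℤ) := Nat.isCoprime_iff_coprime.2 hc
  obtain ⟨a, b, hab⟩ := hi
  have h1 := hf p
  have h2 := hf q
  rw [← hpq] at h2
  set v := f p
  have key : v.valuation K ((a : K) * (p.1 : K) + (b : K) * (q.1 : K)) < 1 := by
    have hz : ∀ n : ℤ, v.valuation K (n : K) ≤ 1 := fun n => by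
      have := v.valuation_le_one (K := K) (n : 𝓞 K)
      simpa using this
    apply Valuation.map_add_lt
    · rw [map_mul]; exact (mul_le_of_le_one_left' (hz a)).trans_lt h1
    · rw [map_mul]; exact (mul_le_of_le_one_left' (hz b)).trans_lt h2
  have : ((a : K) * (p.1 : K) + (b : K) * (q.1 : K)) = 1 := by exact_mod_cast congrArg (Int.cast : ℤ → K) hab
  rw [this, map_one] at key
  exact lt_irrefl _ key

lemma exists_prime_notMem (S : Finset (Pr K)) : ∃ v : Pr K, v ∉ S := by
  haveI := infinite_primes (K := K)
  exact Infinite.exists_notMem_finset S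

/-- Weak approximation. -/
lemma weak_approx (S : Finset (Pr K)) (x : Pr K → K) (ε : Pr K → ℤᵐ⁰) (hε : ∀ v, ε v ≠ 0)
    (y : InfinitePlace K → K) (δ : ℝ) (hδ : 0 < δ) :
    ∃ z : K, (∀ v ∈ S, v.valuation K (z - x v) < ε v) ∧ ∀ w : InfinitePlace K, w (z - y w) < δ := by
  classical
  let ι := InfinitePlace K ⊕ S
  let V : ι → AbsoluteValue K ℝ := Sum.elim (fun w => w.1) (fun v => adicAbv K v.1)
  have hadic : ∀ (v : Pr K) (a b : K), adicAbv K v a < adicAbv K v b ↔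
      v.valuation K a < v.valuation K b := by
    intro v a b
    rw [adicAbv_def, adicAbv_def, NNReal.coe_lt_coe]
    exact (WithZeroMulInt.toNNReal_strictMono (one_lt_absNorm_nnreal v)).lt_iff_lt
  have hfin : ∀ v : Pr K, (adicAbv K v).IsNontrivial := by
    intro v
    obtain ⟨p, hp⟩ := exists_ord_eq_one v
    refine ⟨p, p.ne_zero, ?_⟩
    have : adicAbv K v p < adicAbv K v 1 := by
      rw [hadic, val_eq, map_one, ← exp_zero, exp_lt_exp, hp]; norm_num
    rw [map_one] at this
    exact this.ne
  have hinf : ∀ (w : InfinitePlace K) (v : Pr K), ¬ (w.1).IsEquiv (adicAbv K v) := by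
    intro w v h
    have h2 := (h.le_one_iff (x := (2 : K))).2 (by exact_mod_cast adicAbv_natCast_le_one (K := K) v 2)
    have : w (2 : K) = 2 := by
      have := InfinitePlace.norm_embedding_eq w (2 : K)
      rw [← this, map_ofNat]; simp
    have h3 : w.1 (2 : K) = w 2 := rfl
    rw [h3, this] at h2
    norm_num at h2
  have h := AbsoluteValue.denseRange_algebraMap_pi (F := K) (ι := ι) (v := V)
    (by rintro (w | v); exacts [w.isNontrivial, hfin v])
    (by
      rintro (w | v) (w' | v') hne
      · intro h; exact hne (by rw [(InfinitePlace.eq_iff_isEquiv).2 h])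
      · exact hinf w v'
      · intro h; exact hinf w' v h.symm
      · intro h
        apply hne
        have : (v : Pr K) = v' := by
          apply eq_of_valuation_isEquiv_valuation (K := K)
          rw [Valuation.isEquiv_iff_val_lt_one]
          intro a
          have := h.lt_one_iff (x := a)
          have e1 := hadic v a 1
          have e2 := hadic v' a 1
          simp only [map_one] at e1 e2
          rw [← e1, ← e2]; exact this
        rw [Subtype.ext this])
  let tgt : (i : ι) → WithAbs (V i) := fun i => WithAbs.toAbs (V i) (Sum.elim y (fun v => x v.1) i)
  have hpos : ∀ v : Pr K, ∃ e : K, e ≠ 0 ∧ v.valuation K e = ε v := by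
    intro v
    obtain ⟨e, he⟩ := v.valuation_surjective K (ε v)
    exact ⟨e, by rintro rfl; exact hε v (by rw [← he, map_zero]), he⟩
  choose e he0 he using hpos
  let rad : ι → ℝ := Sum.elim (fun _ => δ) (fun v => adicAbv K v.1 (e v.1))
  have hrad : ∀ i, 0 < rad i := by
    rintro (w | v)
    · exact hδ
    · exact (adicAbv K v.1).pos (he0 _)
  have hopen : IsOpen (Set.univ.pi (fun i => Metric.ball (tgt i) (rad i))) :=
    isOpen_set_pi Set.finite_univ (fun i _ => Metric.isOpen_ball)
  obtain ⟨z, hz⟩ := h.exists_mem_open hopen ⟨tgt, fun i _ => Metric.mem_ball_self (hrad i)⟩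
  have hz' : ∀ i, V i (z - Sum.elim y (fun v => x v.1) i) < rad i := by
    intro i
    have := hz i (Set.mem_univ i)
    rw [mem_ball_iff_norm] at this
    exact this
  refine ⟨z, ?_, ?_⟩
  · intro v hv
    have := hz' (Sum.inr ⟨v, hv⟩)
    rw [← he]
    exact (hadic v _ _).1 this
  · intro w
    exact hz' (Sum.inl w)

/-- The infinite place of a real embedding. -/
noncomputable def plc (φ : K →+* ℝ) : InfinitePlace K := InfinitePlace.mk (Complex.ofRealHom.comp φ)

lemma plc_apply (φ : K →+* ℝ) (x : K) : plc φ x = |φ x| := by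
  rw [plc, InfinitePlace.apply]; simp

lemma plc_inj {φ ψ : K →+* ℝ} (h : plc φ = plc ψ) : φ = ψ := by
  rw [plc, plc, InfinitePlace.mk_eq_iff] at h
  rcases h with h | h
  · ext x
    have := congrArg (fun f : K →+* ℂ => f x) h
    simpa using this
  · ext x
    have := congrArg (fun f : K →+* ℂ => f x) h
    simpa [ComplexEmbedding.conjugate] using this

end basics
end HS

set_option linter.unusedSectionVars false
set_option linter.style.haveILetI false
set_option linter.deprecated false
set_option linter.unusedSimpArgs false

namespace HS
open NumberField IsDedekindDomain HeightOneSpectrum WithZero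

section lsqsec
variable {K : Type*} [Field K] [NumberField K]

lemma val4_ne (v : Pr K) : v.valuation K (4 : K) ≠ 0 := by
  rw [Valuation.ne_zero_iff]; norm_num

lemma val_ofNat_le (v : Pr K) (n : ℕ) [n.AtLeastTwo] : v.valuation K (OfNat.ofNat n : K) ≤ 1 := by
  have := val_natCast_le v n
  exact_mod_cast this

lemma val_one_add (v : Pr K) {p : K} (hp : v.valuation K p < 1) : v.valuation K (1 + p) = 1 := by
  rw [Valuation.map_add_eq_of_lt_left]
  · simp
  · simpa using hp

/-- Local squares at a finite prime. -/
noncomputable def lsqF (v : Pr K) : Subgroup Kˣ where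
  carrier := {x | ∃ y : Kˣ, v.valuation K ((x : K) * (y : K) ^ 2 - 1) < v.valuation K (4 : K)}
  one_mem' := ⟨1, by simpa using zero_lt_iff.2 (val4_ne v)⟩
  mul_mem' := by
    rintro x x' ⟨y, hy⟩ ⟨y', hy'⟩
    refine ⟨y * y', ?_⟩
    have h4 := val_ofNat_le v 4
    set p := (x : K) * (y : K) ^ 2 - 1 with hp
    set p' := (x' : K) * (y' : K) ^ 2 - 1 with hp'
    have : ((x * x' : Kˣ) : K) * ((y * y' : Kˣ) : K) ^ 2 - 1 = p + p' + p * p' := by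
      rw [hp, hp']; push_cast; ring
    rw [this]
    refine Valuation.map_add_lt _ (Valuation.map_add_lt _ hy hy') ?_
    rw [map_mul]
    exact (mul_le_of_le_one_left' (hy.le.trans h4)).trans_lt hy'
  inv_mem' := by
    rintro x ⟨y, hy⟩
    refine ⟨y⁻¹, ?_⟩
    have h4 := val_ofNat_le v 4
    set p := (x : K) * (y : K) ^ 2 - 1 with hp
    have h1 : (x : K) * (y : K) ^ 2 = 1 + p := by rw [hp]; ring
    have h2 : v.valuation K (1 + p) = 1 := val_one_add v (hy.trans_le h4)
    have h0 : (1 + p) ≠ 0 := by rw [← h1]; simp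
    have : ((x⁻¹ : Kˣ) : K) * ((y⁻¹ : Kˣ) : K) ^ 2 - 1 = - p / (1 + p) := by
      have : ((x⁻¹ : Kˣ) : K) * ((y⁻¹ : Kˣ) : K) ^ 2 = (1 + p)⁻¹ := by
        rw [← h1]; push_cast; rw [mul_inv, inv_pow]
      rw [this]; field_simp; ring
    rw [this, map_div₀, h2, Valuation.map_neg, div_one]
    exact hy

/-- Local squares at an infinite place. -/
noncomputable def lsqI (w : InfinitePlace K) : Subgroup Kˣ where
  carrier := {x | ∀ φ : K →+* ℝ, plc φ = w → 0 < φ x}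
  one_mem' := by intro φ _; simp
  mul_mem' := by
    intro x y hx hy φ h
    simpa using mul_pos (hx φ h) (hy φ h)
  inv_mem' := by
    intro x hx φ h
    simpa using hx φ h

/-- All places of a number field. -/
abbrev Pl (K : Type*) [Field K] := InfinitePlace K ⊕ Pr K

/-- Local squares at a place. -/
noncomputable def lsq (p : Pl K) : Subgroup Kˣ := Sum.elim lsqI lsqF p

lemma sq_mem_lsqF (v : Pr K) (x : Kˣ) : x ^ 2 ∈ lsqF v := by
  refine ⟨x⁻¹, ?_⟩
  have : ((x ^ 2 : Kˣ) : K) * ((x⁻¹ : Kˣ) : K) ^ 2 - 1 = 0 := by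
    push_cast; rw [inv_pow, mul_inv_cancel₀ (by simp)]; ring
  rw [this, map_zero]; exact zero_lt_iff.2 (val4_ne v)

lemma sq_mem_lsqI (w : InfinitePlace K) (x : Kˣ) : x ^ 2 ∈ lsqI w := by
  intro φ _
  push_cast; rw [map_pow]
  exact pow_pos_of_ne φ x
where pow_pos_of_ne (φ : K →+* ℝ) (x : Kˣ) : 0 < (φ x) ^ 2 := by
        have : φ x ≠ 0 := by rw [map_ne_zero]; exact x.ne_zero
        positivity

lemma sq_mem_lsq (p : Pl K) (x : Kˣ) : x ^ 2 ∈ lsq p := by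
  rcases p with w | v
  · exact sq_mem_lsqI w x
  · exact sq_mem_lsqF v x

lemma lsqF_hensel (v : Pr K) {x : Kˣ} (hx : x ∈ lsqF v) (ε : ℤᵐ⁰) (hε : ε ≠ 0) :
    ∃ y : Kˣ, v.valuation K ((x : K) * (y : K) ^ 2 - 1) < ε := by
  have key : ∀ n : ℕ, ∃ (y : Kˣ) (m : K), (x : K) * (y : K) ^ 2 = 1 + 4 * m ∧
      v.valuation K m ≤ exp (-((n : ℤ) + 1)) := by
    intro n
    induction n with
    | zero =>
      obtain ⟨y, hy⟩ := hx
      refine ⟨y, ((x : K) * (y : K) ^ 2 - 1) / 4, by field_simp; ring, ?_⟩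
      rw [map_div₀]
      have h1 : v.valuation K ((x : K) * (y : K) ^ 2 - 1) / v.valuation K 4 < 1 := by
        rw [div_lt_one₀ (zero_lt_iff.2 (val4_ne v))]; exact hy
      rw [← exp_zero] at h1
      generalize v.valuation K ((x : K) * (y : K) ^ 2 - 1) / v.valuation K 4 = t at h1 ⊢
      rcases eq_or_ne t 0 with rfl | ht
      · exact zero_le'
      · rw [← exp_log ht, exp_lt_exp] at h1
        rw [← exp_log ht, exp_le_exp]; push_cast; omega
    | succ n ih =>
      obtain ⟨y, m, h1, h2⟩ := ih
      have hm1 : v.valuation K m < 1 := h2.trans_lt (by rw [← exp_zero, exp_lt_exp]; omega)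
      have h2m : v.valuation K (1 + 2 * m) = 1 := val_one_add v (by
        rw [map_mul]; exact (mul_le_of_le_one_left' (val_ofNat_le v 2)).trans_lt hm1)
      have h0 : (1 + 2 * m) ≠ 0 := by
        intro h; rw [h, map_zero] at h2m; exact zero_ne_one h2m
      refine ⟨y / Units.mk0 _ h0, - m ^ 2 / (1 + 2 * m) ^ 2, ?_, ?_⟩
      · push_cast; rw [Units.val_mk0, div_pow, mul_div_assoc', h1]
        have h0' : (1 + 2 * m) ^ 2 ≠ 0 := pow_ne_zero _ h0
        rw [div_eq_iff h0', add_mul, mul_assoc, div_mul_cancel₀ _ h0']; ring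
      · rw [map_div₀, map_pow, h2m, Valuation.map_neg, map_pow, one_pow, div_one, sq]
        calc _ ≤ exp (-((n : ℤ) + 1)) * exp (-((n : ℤ) + 1)) := mul_le_mul' h2 h2
          _ ≤ _ := by rw [← exp_add, exp_le_exp]; push_cast; omega
  obtain ⟨y, m, h1, h2⟩ := key (log ε).natAbs.succ
  refine ⟨y, ?_⟩
  rw [h1, add_sub_cancel_left, map_mul]
  refine (mul_le_of_le_one_left' (val_ofNat_le v 4)).trans_lt (h2.trans_lt ?_)
  rw [← exp_log hε, exp_lt_exp, log_exp]
  simp only [Nat.succ_eq_add_one, Nat.cast_add, Nat.cast_one]; omega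

lemma mem_lsqF_of_close (v : Pr K) {x y : Kˣ}
    (h : v.valuation K ((x : K) - y) < v.valuation K (4 : K) * v.valuation K (y : K)) :
    x / y ∈ lsqF v := by
  refine ⟨1, ?_⟩
  have : ((x / y : Kˣ) : K) * ((1 : Kˣ) : K) ^ 2 - 1 = ((x : K) - y) / y := by
    push_cast; field_simp
  rw [this, map_div₀, div_lt_iff₀ (zero_lt_iff.2 ((Valuation.ne_zero_iff _).2 y.ne_zero))]
  exact h

lemma ord_of_val_sub_lt {v : Pr K} {x y : Kˣ} (h : v.valuation K ((x : K) - y) < v.valuation K (y : K)) :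
    ord v x = ord v y := by
  rw [← val_eq_iff]
  have : (x : K) = y + (x - y) := by ring
  rw [this, Valuation.map_add_eq_of_lt_left _ h]

lemma even_ord_of_lsqF {v : Pr K} {x : Kˣ} (hx : x ∈ lsqF v) : Even (ord v x) := by
  obtain ⟨y, hy⟩ := hx
  have : ord v (x * y ^ 2) = ord v (1 : Kˣ) := ord_of_val_sub_lt (by
    push_cast; rw [map_one]; exact hy.trans_le (val_ofNat_le v 4))
  simp at this
  exact ⟨- ord v y, by omega⟩

/-- Norms from the quadratic extension by the square root of `c`. -/
def normG (c : Kˣ) : Subgroup Kˣ where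
  carrier := {u | ∃ x y : K, (u : K) = x ^ 2 - c * y ^ 2}
  one_mem' := ⟨1, 0, by simp⟩
  mul_mem' := by
    rintro u u' ⟨x, y, h⟩ ⟨x', y', h'⟩
    refine ⟨x * x' + c * y * y', x * y' + x' * y, ?_⟩
    push_cast; rw [h, h']; ring
  inv_mem' := by
    rintro u ⟨x, y, h⟩
    refine ⟨x / u, y / u, ?_⟩
    have : ((u : K)) ≠ 0 := u.ne_zero
    rw [div_pow, div_pow, mul_div_assoc', ← sub_div, ← h]; push_cast; field_simp

/-- Local norms. -/
noncomputable def LN (p : Pl K) (c : Kˣ) : Subgroup Kˣ := normG c ⊔ lsq p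

lemma sq_mem_normG (c x : Kˣ) : x ^ 2 ∈ normG c := ⟨x, 0, by push_cast; ring⟩

lemma lsq_le_LN (p : Pl K) (c : Kˣ) : lsq p ≤ LN p c := le_sup_right

lemma normG_le_LN (p : Pl K) (c : Kˣ) : normG c ≤ LN p c := le_sup_left

lemma mem_LN {p : Pl K} {c u : Kˣ} : u ∈ LN p c ↔ ∃ n ∈ normG c, u / n ∈ lsq p := by
  rw [LN, Subgroup.mem_sup]
  constructor
  · rintro ⟨n, hn, s, hs, rfl⟩
    exact ⟨n, hn, by simpa using hs⟩
  · rintro ⟨n, hn, h⟩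
    exact ⟨n, hn, _, h, by simp⟩

lemma neg_mem_normG (c : Kˣ) : -c ∈ normG c := ⟨0, 1, by push_cast; ring⟩

/-- reciprocity of the norm relation -/
lemma normG_symm {u x : Kˣ} (h : x ∈ normG u) : IsSquare x ∨ u ∈ normG x := by
  obtain ⟨α, β, h⟩ := h
  rcases eq_or_ne β 0 with rfl | hβ
  · left
    have hα : α ≠ 0 := by rintro rfl; exact x.ne_zero (by rw [h]; ring)
    exact ⟨Units.mk0 α hα, by ext; push_cast; rw [Units.val_mk0, h]; ring⟩
  · right
    refine ⟨α / β, 1 / β, ?_⟩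
    rw [h]; field_simp; ring

lemma normG_inf {u e x : Kˣ} (hue : ¬ IsSquare (u * e)) (h1 : x ∈ normG u) (h2 : x ∈ normG e) :
    x ∈ normG (u * e) := by
  have hsq : IsSquare x → x ∈ normG (u * e) := by
    rintro ⟨y, rfl⟩; rw [← sq]; exact sq_mem_normG _ _
  rcases normG_symm h1 with h | h1
  · exact hsq h
  rcases normG_symm h2 with h | h2
  · exact hsq h
  rcases normG_symm (mul_mem h1 h2) with h | h
  · exact absurd h hue
  · exact h

/-- Weak approximation for local square classes. -/
lemma exists_approx (S : Finset (Pr K)) (x : Pl K → Kˣ) (T : Finset (Pr K)) (a : Pr K → K)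
    (ε : Pr K → ℤᵐ⁰) (hε : ∀ v, ε v ≠ 0) (hST : Disjoint S T) :
    ∃ z : Kˣ, (∀ w, z / x (Sum.inl w) ∈ lsqI w) ∧ (∀ v ∈ S, z / x (Sum.inr v) ∈ lsqF v ∧
        ord v z = ord v (x (Sum.inr v))) ∧
      ∀ v ∈ T, v.valuation K ((z : K) - a v) < ε v := by
  classical
  obtain ⟨v0, hv0⟩ := exists_prime_notMem (S ∪ T)
  let S' : Finset (Pr K) := insert v0 (S ∪ T)
  let tg : Pr K → K := fun v => if v ∈ T then a v else if v = v0 then 1 else x (Sum.inr v)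
  let ep : Pr K → ℤᵐ⁰ := fun v => if v ∈ T then ε v else if v = v0 then 1 else
    v.valuation K 4 * v.valuation K (x (Sum.inr v) : K)
  have hxne : ∀ v : Pr K, v.valuation K (x (Sum.inr v) : K) ≠ 0 := fun v =>
    (Valuation.ne_zero_iff _).2 (Units.ne_zero _)
  have hep : ∀ v, ep v ≠ 0 := by
    intro v
    simp only [ep]
    split_ifs
    · exact hε v
    · exact one_ne_zero
    · exact mul_ne_zero (val4_ne v) (hxne v)
  have hmin : ∃ δ : ℝ, 0 < δ ∧ ∀ w : InfinitePlace K, δ ≤ w (x (Sum.inl w) : K) := by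
    obtain ⟨w0, hw0⟩ := Finite.exists_min (fun w : InfinitePlace K => w (x (Sum.inl w) : K))
    exact ⟨_, InfinitePlace.pos_iff.2 (Units.ne_zero _), hw0⟩
  obtain ⟨δ, hδ, hδ'⟩ := hmin
  obtain ⟨z, hz1, hz2⟩ := weak_approx S' tg ep hep (fun w => (x (Sum.inl w) : K)) δ hδ
  have hz0 : z ≠ 0 := by
    rintro rfl
    have := hz1 v0 (Finset.mem_insert_self _ _)
    have hT : v0 ∉ T := fun h => hv0 (Finset.mem_union_right _ h)
    simp [tg, ep, hT] at this
  refine ⟨Units.mk0 z hz0, ?_, ?_, ?_⟩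
  · intro w φ hφ
    have h1 := (hz2 w).trans_le (hδ' w)
    rw [← hφ, plc_apply, plc_apply] at h1
    have hx0 : φ (x (Sum.inl (plc φ))) ≠ 0 := by rw [map_ne_zero]; exact Units.ne_zero _
    push_cast
    rw [Units.val_mk0, map_div₀, ← hφ]
    rw [map_sub] at h1
    rcases lt_or_gt_of_ne hx0 with h | h
    · apply div_pos_of_neg_of_neg _ h
      rw [abs_of_neg h, abs_lt] at h1; linarith
    · apply div_pos _ h
      rw [abs_of_pos h, abs_lt] at h1; linarith
  · intro v hv
    have hT : v ∉ T := Finset.disjoint_left.1 hST hv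
    have hvv : v ≠ v0 := by rintro rfl; exact hv0 (Finset.mem_union_left _ hv)
    have := hz1 v (Finset.mem_insert_of_mem (Finset.mem_union_left _ hv))
    simp only [tg, ep, hT, hvv, if_false] at this
    refine ⟨mem_lsqF_of_close v (by rw [Units.val_mk0]; exact this), ord_of_val_sub_lt ?_⟩
    rw [Units.val_mk0]
    exact this.trans_le (mul_le_of_le_one_left' (val_ofNat_le v 4))
  · intro v hv
    have := hz1 v (Finset.mem_insert_of_mem (Finset.mem_union_right _ hv))
    simpa only [tg, ep, hv, if_true, Units.val_mk0] using this

end lsqsec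
end HS

set_option linter.unusedSectionVars false
set_option linter.style.haveILetI false
set_option linter.deprecated false
set_option linter.unusedSimpArgs false

namespace HS
open NumberField IsDedekindDomain HeightOneSpectrum WithZero

section A3
variable {K : Type*} [Field K] [NumberField K]

lemma relIndex_le_of_fun {G : Type*} [CommGroup G] {H V : Subgroup G} {α : Type*} [Finite α] (f : G → α)
    (hf : ∀ x ∈ V, ∀ y ∈ V, f x = f y → x / y ∈ H) : H.relIndex V ≤ Nat.card α ∧ H.relIndex V ≠ 0 := by
  classical
  have key : Function.Injective (fun q : V ⧸ H.subgroupOf V => f ((Quotient.out q : V) : G)) := by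
    intro a b hab
    have := hf _ (Quotient.out a).2 _ (Quotient.out b).2 hab
    rw [← Quotient.out_eq a, ← Quotient.out_eq b]
    symm
    apply QuotientGroup.eq.2
    rw [Subgroup.mem_subgroupOf]
    rw [div_eq_mul_inv, mul_comm] at this
    simpa using this
  have hfin : Finite (V ⧸ H.subgroupOf V) := Finite.of_injective _ key
  constructor
  · exact Nat.card_le_card_of_injective _ key
  · exact Subgroup.index_ne_zero_of_finite

lemma lt_exp_iff {x : ℤᵐ⁰} (n : ℕ) : x < exp (-(n : ℤ)) ↔ x ≤ exp (-((n + 1 : ℕ) : ℤ)) := by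
  by_cases hx : x = 0
  · subst hx; simp
  · rw [← exp_log hx, exp_lt_exp, exp_le_exp]; push_cast; omega

/-- Squares of elements of a subgroup. -/
def Sq {G : Type*} [CommGroup G] (V : Subgroup G) : Subgroup G := V.map (powMonoidHom 2)

/-- Elements whose square lies in `H`. -/
def Rt {G : Type*} [CommGroup G] (H : Subgroup G) : Subgroup G := H.comap (powMonoidHom 2)

lemma mem_Sq {G : Type*} [CommGroup G] {V : Subgroup G} {x : G} : x ∈ Sq V ↔ ∃ y ∈ V, y ^ 2 = x := by
  simp [Sq, Subgroup.mem_map]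

lemma mem_Rt {G : Type*} [CommGroup G] {V : Subgroup G} {x : G} : x ∈ Rt V ↔ x ^ 2 ∈ V := by
  simp [Rt]

lemma Sq_le {G : Type*} [CommGroup G] (V : Subgroup G) : Sq V ≤ V := by
  intro x hx
  obtain ⟨y, hy, rfl⟩ := mem_Sq.1 hx
  exact V.pow_mem hy 2

lemma index_sq_mul {G : Type*} [CommGroup G] {H V : Subgroup G} (hHV : H ≤ V) (h0 : H.relIndex V ≠ 0) :
    (Sq V ⊔ H).relIndex V = H.relIndex (Rt H ⊓ V) := by
  have hHW : H ≤ Rt H ⊓ V := le_inf (fun x hx => mem_Rt.2 (H.pow_mem hx 2)) hHV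
  have h1 := Subgroup.relIndex_mul_relIndex H _ V hHW inf_le_right
  have h2 := Subgroup.relIndex_mul_relIndex H (Sq V ⊔ H) V le_sup_right (sup_le (Sq_le V) hHV)
  have h3 : (Rt H ⊓ V).relIndex V = H.relIndex (Sq V ⊔ H) := by
    rw [Subgroup.inf_relIndex_right, Subgroup.relIndex_sup_right, Rt, Sq, Subgroup.relIndex_comap]
  rw [h3] at h1
  have h4 : H.relIndex (Sq V ⊔ H) ≠ 0 := by
    intro h; rw [h] at h2; simp at h2; exact h0 h2.symm
  have : H.relIndex (Sq V ⊔ H) * (Sq V ⊔ H).relIndex V = H.relIndex (Sq V ⊔ H) * H.relIndex (Rt H ⊓ V) := by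
    rw [h2, ← h1, mul_comm]
  exact Nat.eq_of_mul_eq_mul_left (Nat.pos_of_ne_zero h4) this

/-- The valuation-zero units congruent to one modulo the `m`-th power. -/
noncomputable def Vm (v : Pr K) (m : ℕ) : Subgroup Kˣ where
  carrier := {x | ord v x = 0 ∧ v.valuation K ((x : K) - 1) ≤ exp (-(m : ℤ))}
  one_mem' := by simp
  mul_mem' := by
    rintro x y ⟨h1, h2⟩ ⟨h3, h4⟩
    refine ⟨by simp [h1, h3], ?_⟩
    have : ((x * y : Kˣ) : K) - 1 = x * ((y : K) - 1) + ((x : K) - 1) := by push_cast; ring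
    rw [this]
    refine Valuation.map_add_le _ ?_ h2
    rw [map_mul, (val_eq_one_iff v x).2 h1, one_mul]; exact h4
  inv_mem' := by
    rintro x ⟨h1, h2⟩
    refine ⟨by simp [h1], ?_⟩
    have : ((x⁻¹ : Kˣ) : K) - 1 = - ((x⁻¹ : Kˣ) * ((x : K) - 1)) := by
      push_cast; field_simp; ring
    rw [this, Valuation.map_neg, map_mul, (val_eq_one_iff v x⁻¹).2 (by simp [h1]), one_mul]; exact h2

lemma mem_Vm {v : Pr K} {m : ℕ} {x : Kˣ} :
    x ∈ Vm v m ↔ ord v x = 0 ∧ v.valuation K ((x : K) - 1) ≤ exp (-(m : ℤ)) := Iff.rfl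

lemma mem_Vm0 {v : Pr K} {x : Kˣ} : x ∈ Vm v 0 ↔ ord v x = 0 := by
  rw [mem_Vm]
  refine ⟨fun h => h.1, fun h => ⟨h, ?_⟩⟩
  simp only [Nat.cast_zero, neg_zero, exp_zero]
  refine (Valuation.map_sub _ _ _).trans (max_le ((val_eq_one_iff v x).2 h).le (by simp))

lemma Vm_le (v : Pr K) (m : ℕ) : Vm v (m + 1) ≤ Vm v m := by
  intro x hx
  exact ⟨hx.1, hx.2.trans (exp_le_exp.2 (by push_cast; omega))⟩

lemma Vm_anti (v : Pr K) : Antitone (Vm v) := antitone_nat_of_succ_le (Vm_le v)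

lemma exists_residue (v : Pr K) : ∃ f : K → 𝓞 K ⧸ v.asIdeal, ∀ x y : K, v.valuation K x ≤ 1 →
    v.valuation K y ≤ 1 → f x = f y → v.valuation K (x - y) < 1 := by
  classical
  have h : ∀ x : K, ∃ a : 𝓞 K, v.valuation K x ≤ 1 → v.valuation K (x - algebraMap (𝓞 K) K a) < 1 := by
    intro x
    by_cases hx : v.valuation K x ≤ 1
    · obtain ⟨n, d, hnd⟩ := exists_primeCompl_mul_eq_of_integer v x hx
      have hd : v.intValuation (d : 𝓞 K) = 1 := (v.intValuation_eq_one_iff_mem_primeCompl _).2 d.2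
      obtain ⟨y, hy⟩ := exists_intValuation_mul_sub_lt v (a := (d : 𝓞 K)) (b := n)
        (by rw [hd]; exact v.intValuation_le_one _) 1
      refine ⟨y, fun _ => ?_⟩
      rw [← valuation_of_algebraMap (K := K)] at hy
      change v.valuation K (algebraMap (𝓞 K) K _) < 1 at hy
      rw [map_sub, map_mul, ← hnd, ← sub_mul, map_mul,
        valuation_of_algebraMap, hd, mul_one] at hy
      exact hy
    · exact ⟨0, fun h => absurd h hx⟩
  choose g hg using h
  refine ⟨fun x => Ideal.Quotient.mk _ (g x), fun x y hx hy hxy => ?_⟩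
  have h1 : v.valuation K (algebraMap (𝓞 K) K (g x - g y)) < 1 := by
    rw [valuation_lt_one_iff_mem]; exact Ideal.Quotient.eq.1 hxy
  rw [map_sub] at h1
  have : x - y = (x - algebraMap (𝓞 K) K (g x)) + (algebraMap (𝓞 K) K (g x) - algebraMap (𝓞 K) K (g y))
    - (y - algebraMap (𝓞 K) K (g y)) := by ring
  rw [this]
  exact Valuation.map_sub_lt _ (Valuation.map_add_lt _ (hg x hx) h1) (hg y hy)

instance finite_residue (v : Pr K) : Finite (𝓞 K ⧸ v.asIdeal) := 
  Ideal.finiteQuotientOfFreeOfNeBot _ v.ne_bot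

/-- The norm of a prime. -/
noncomputable def Nm (v : Pr K) : ℕ := Nat.card (𝓞 K ⧸ v.asIdeal)

lemma relIndex_Vm (v : Pr K) (m : ℕ) : (Vm v (m + 1)).relIndex (Vm v m) ≤ Nm v ∧
    (Vm v (m + 1)).relIndex (Vm v m) ≠ 0 := by
  obtain ⟨π, hπ⟩ := exists_ord_eq_one (K := K) v
  obtain ⟨f, hf⟩ := exists_residue v
  refine relIndex_le_of_fun (fun x : Kˣ => f (((x : K) - 1) / (π : K) ^ m)) ?_
  intro x hx y hy hxy
  have hpm : v.valuation K ((π : K) ^ m) = exp (-(m : ℤ)) := by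
    have := val_eq v (π ^ m)
    rw [ord_pow, hπ, mul_one] at this
    simpa using this
  have hpos : (0 : ℤᵐ⁰) < exp (-(m : ℤ)) := by simp
  have h1 := hf _ _ (by rw [map_div₀, hpm, div_le_one₀ hpos]; exact hx.2)
    (by rw [map_div₀, hpm, div_le_one₀ hpos]; exact hy.2) hxy
  rw [← sub_div, map_div₀, hpm, div_lt_one₀ hpos] at h1
  refine ⟨by simp [hx.1, hy.1], ?_⟩
  have : ((x / y : Kˣ) : K) - 1 = ((x : K) - 1 - (y - 1)) * ((y⁻¹ : Kˣ) : K) := by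
    push_cast; field_simp; ring
  rw [this, map_mul, (val_eq_one_iff v y⁻¹).2 (by simp [hy.1]), mul_one]
  exact (lt_exp_iff m).1 h1

lemma relIndex_Vm_add (v : Pr K) (m k : ℕ) : (Vm v (m + k)).relIndex (Vm v m) ≤ Nm v ^ k ∧
    (Vm v (m + k)).relIndex (Vm v m) ≠ 0 := by
  induction k with
  | zero => simp
  | succ k ih =>
    have h := Subgroup.relIndex_mul_relIndex (Vm v (m + k + 1)) (Vm v (m + k)) (Vm v m)
      (Vm_le _ _) (Vm_anti v (by omega))
    have h2 := relIndex_Vm v (m + k)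
    rw [← add_assoc, ← h]
    refine ⟨?_, mul_ne_zero h2.2 ih.2⟩
    rw [pow_succ, mul_comm]
    exact Nat.mul_le_mul ih.1 h2.1

/-- The unit two. -/
noncomputable def tw : Kˣ := Units.mk0 2 two_ne_zero

/-- The order of two. -/
noncomputable def e2 (v : Pr K) : ℕ := (ord v (tw : Kˣ)).toNat

lemma val2 (v : Pr K) : v.valuation K (2 : K) = exp (-(e2 v : ℤ)) := by
  have h := val_eq v (tw : Kˣ)
  have h2 : v.valuation K (2 : K) ≤ 1 := val_ofNat_le v 2
  have h3 : ((tw : Kˣ) : K) = 2 := rfl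
  rw [h3] at h
  rw [h, ← exp_zero, exp_le_exp] at h2
  rw [h, e2, Int.toNat_of_nonneg (by omega)]

lemma val4 (v : Pr K) : v.valuation K (4 : K) = exp (-((2 * e2 v : ℕ) : ℤ)) := by
  have : (4 : K) = 2 * 2 := by norm_num
  rw [this, map_mul, val2, ← exp_add]; congr 1; push_cast; ring

lemma lsqF_inf (v : Pr K) : lsqF v ⊓ Vm v 0 = Sq (Vm v 0) ⊔ Vm v (2 * e2 v + 1) := by
  apply le_antisymm
  · rintro x ⟨⟨y, hy⟩, hx⟩
    replace hx := mem_Vm0.1 hx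
    rw [val4, lt_exp_iff] at hy
    have h0 : ord v (x * y ^ 2) = ord v (1 : Kˣ) := ord_of_val_sub_lt (by
      push_cast; rw [map_one]; exact hy.trans_lt (by rw [← exp_zero, exp_lt_exp]; push_cast; omega))
    have hy0 : ord v y = 0 := by simpa [hx] using h0
    have : x = (y⁻¹) ^ 2 * (x * y ^ 2) := by rw [mul_comm x, ← mul_assoc, ← mul_pow]; simp
    rw [this]
    refine Subgroup.mul_mem_sup (mem_Sq.2 ⟨y⁻¹, mem_Vm0.2 (by simp [hy0]), rfl⟩) ⟨by simpa using h0, ?_⟩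
    push_cast at hy ⊢; exact hy
  · refine sup_le ?_ ?_
    · intro x hx
      refine ⟨?_, Sq_le _ hx⟩
      obtain ⟨y, hy, rfl⟩ := mem_Sq.1 hx
      exact sq_mem_lsqF v y
    · intro x hx
      refine ⟨⟨1, ?_⟩, Vm_anti v (Nat.zero_le _) hx⟩
      rw [val4, lt_exp_iff]; simpa using hx.2

lemma relIndex_lsqF_V (v : Pr K) : (lsqF v).relIndex (Vm v 0) ≤ 2 * Nm v ^ e2 v ∧
    (lsqF v).relIndex (Vm v 0) ≠ 0 ∧ (lsqF v).relIndex (Vm v 0) ≠ 1 := by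
  set e := e2 v with he
  have hfin := (relIndex_Vm_add v 0 (2 * e + 1)).2
  rw [zero_add] at hfin
  have h1 : (lsqF v).relIndex (Vm v 0) = (Vm v (2 * e + 1)).relIndex (Rt (Vm v (2 * e + 1)) ⊓ Vm v 0) := by
    rw [← Subgroup.inf_relIndex_right, lsqF_inf, ← index_sq_mul (Vm_anti v (Nat.zero_le _)) hfin]
  rw [h1]
  set W := Rt (Vm v (2 * e + 1)) ⊓ Vm v 0 with hW
  have hneg : (-1 : Kˣ) ∈ W := ⟨mem_Rt.2 (by simp), mem_Vm0.2 (by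
    have : ord v ((-1 : Kˣ) ^ 2) = 0 := by simp
    rw [ord_pow] at this; simpa using this)⟩
  have hneg2 : (-1 : Kˣ) ∉ Vm v (2 * e + 1) := by
    intro h
    have := h.2
    have h2 : (((-1 : Kˣ) : K) - 1) = - 2 := by push_cast; ring
    rw [h2, Valuation.map_neg, val2, exp_le_exp] at this
    push_cast at this; omega
  have hWV : (Vm v (2 * e + 1)).relIndex W ≠ 0 := by
    intro h
    exact hfin (Subgroup.relIndex_eq_zero_of_le_right inf_le_right h)
  refine ⟨?_, hWV, fun h => hneg2 (Subgroup.relIndex_eq_one.1 h hneg)⟩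
  have h2 : W ≤ Subgroup.zpowers (-1) ⊔ Vm v (e + 1) := by
    rintro x ⟨hx1, hx2⟩
    replace hx1 := mem_Rt.1 hx1
    replace hx2 := mem_Vm0.1 hx2
    have hx3 := hx1.2
    have h3 : ((x ^ 2 : Kˣ) : K) - 1 = ((x : K) - 1) * (x + 1) := by push_cast; ring
    rw [h3, map_mul] at hx3
    rw [← lt_exp_iff] at hx3
    have h4 : v.valuation K ((x : K) - 1) < exp (-(e : ℤ)) ∨ v.valuation K ((x : K) + 1) < exp (-(e : ℤ)) := by
      by_contra hcon
      push Not at hcon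
      have := mul_le_mul' hcon.1 hcon.2
      rw [← exp_add] at this
      have h5 := this.trans_lt hx3
      rw [exp_lt_exp] at h5; push_cast at h5; omega
    rcases h4 with h4 | h4
    · rw [lt_exp_iff] at h4
      exact Subgroup.mem_sup_right ⟨hx2, h4⟩
    · rw [lt_exp_iff] at h4
      have : x = (-1) * (- x) := by simp
      rw [this]
      refine Subgroup.mul_mem_sup (Subgroup.mem_zpowers _) ⟨?_, ?_⟩
      · have : ord v ((-x) ^ 2) = 0 := by rw [neg_sq, ord_pow, hx2]; simp
        rw [ord_pow] at this; simpa using this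
      · have : ((-x : Kˣ) : K) - 1 = - ((x : K) + 1) := by push_cast; ring
        rw [this, Valuation.map_neg]; exact h4
  have h3 := Subgroup.relIndex_mul_relIndex (Vm v (2 * e + 1)) (Vm v (e + 1))
    (Subgroup.zpowers (-1) ⊔ Vm v (e + 1)) (Vm_anti v (by omega)) le_sup_right
  rw [Subgroup.relIndex_sup_right] at h3
  have h4 : (Vm v (e + 1)).relIndex (Subgroup.zpowers (-1)) ≤ 2 ∧
     (Vm v (e + 1)).relIndex (Subgroup.zpowers (-1)) ≠ 0 := by
    have : (Vm v (e + 1)).relIndex (Subgroup.zpowers (-1)) ∣ 2 := by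
      refine Subgroup.relIndex_dvd_two_iff.2 ⟨-1, Subgroup.mem_zpowers _, fun b hb => ?_⟩
      obtain ⟨k, rfl⟩ := Subgroup.mem_zpowers_iff.1 hb
      rcases Int.even_or_odd k with hk | hk
      · right; rw [hk.neg_one_zpow]; exact one_mem _
      · left; rw [hk.neg_one_zpow]; simp
    exact ⟨Nat.le_of_dvd (by norm_num) this, ne_zero_of_dvd_ne_zero (by norm_num) this⟩
  have h5 := relIndex_Vm_add v (e + 1) e
  have h6 : e + 1 + e = 2 * e + 1 := by ring
  rw [h6] at h5
  calc _ ≤ (Vm v (2 * e + 1)).relIndex (Subgroup.zpowers (-1) ⊔ Vm v (e + 1)) := 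
        Subgroup.relIndex_le_of_le_right h2 (by rw [← h3]; exact mul_ne_zero h5.2 h4.2)
    _ = _ := h3.symm
    _ ≤ _ := by rw [mul_comm]; exact Nat.mul_le_mul h4.1 h5.1

lemma index_lsqF (v : Pr K) : (lsqF v).index ≤ 4 * Nm v ^ e2 v ∧ (lsqF v).index ≠ 0 := by
  have h1 := relIndex_lsqF_V v
  have h2 := Subgroup.relIndex_mul_index (H := lsqF v) (K := Vm v 0 ⊔ lsqF v) le_sup_right
  rw [Subgroup.relIndex_sup_right] at h2
  have h3 : (Vm v 0 ⊔ lsqF v).index ∣ 2 := by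
    obtain ⟨π, hπ⟩ := exists_ord_eq_one (K := K) v
    have key : ∀ b : Kˣ, Even (ord v b) → b ∈ Vm v 0 ⊔ lsqF v := by
      rintro b ⟨k, hk⟩
      have : b = (b * ((π ^ (-k)) ^ 2)) * (π ^ k) ^ 2 := by
        rw [mul_assoc, ← mul_pow]; simp
      rw [this]
      exact Subgroup.mul_mem_sup (mem_Vm0.2 (by simp [hπ]; omega)) (sq_mem_lsqF _ _)
    refine Subgroup.index_dvd_two_iff.2 ⟨π, fun b => ?_⟩
    rcases Int.even_or_odd (ord v b) with hb | hb
    · right; exact key b hb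
    · left; exact key _ (by rw [ord_mul, hπ]; exact hb.add_one)
  have h4 := Nat.le_of_dvd (by norm_num) h3
  have h5 : (Vm v 0 ⊔ lsqF v).index ≠ 0 := ne_zero_of_dvd_ne_zero (by norm_num) h3
  rw [← h2]
  refine ⟨?_, mul_ne_zero h1.2.1 h5⟩
  calc _ ≤ (2 * Nm v ^ e2 v) * 2 := Nat.mul_le_mul h1.1 h4
    _ = _ := by ring

lemma exists_unit_notMem_lsqF (v : Pr K) : ∃ x : Kˣ, ord v x = 0 ∧ x ∉ lsqF v := by
  by_contra h
  push Not at h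
  exact (relIndex_lsqF_V v).2.2 (Subgroup.relIndex_eq_one.2 fun x hx => h x (mem_Vm0.1 hx))

end A3
end HS

set_option linter.unusedSectionVars false
set_option linter.style.haveILetI false
set_option linter.deprecated false
set_option linter.unusedSimpArgs false

namespace HS
open NumberField IsDedekindDomain HeightOneSpectrum WithZero

section A4
variable {K : Type*} [Field K] [NumberField K]

lemma lsq_inl (w : InfinitePlace K) : lsq (Sum.inl w) = lsqI w := rfl
lemma lsq_inr (v : Pr K) : lsq (Sum.inr v) = lsqF v := rfl

lemma exists_approx' (F : Finset (Pl K)) (p : Pl K) (hp : p ∉ F) (x : Kˣ) :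
    ∃ z : Kˣ, z / x ∈ lsq p ∧ ∀ q ∈ F, z ∈ lsq q := by
  classical
  obtain ⟨z, h1, h2, -⟩ := exists_approx (insert p F).toRight (Function.update (fun _ => 1) p x) ∅
    (fun _ => 1) (fun _ => 1) (by simp) (by simp)
  have key : ∀ q ∈ insert p F, z / (Function.update (fun _ => (1 : Kˣ)) p x) q ∈ lsq q := by
    rintro (w | v) hq
    · exact h1 w
    · exact (h2 v (by simpa using hq)).1
  refine ⟨z, ?_, fun q hq => ?_⟩
  · simpa using key p (by simp)
  · have hne : q ≠ p := by rintro rfl; exact hp hq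
    simpa [Function.update_of_ne hne] using key q (by simp [hq])

lemma index_iInf (F : Finset (Pl K)) (H : Pl K → Subgroup Kˣ) (hH : ∀ p ∈ F, lsq p ≤ H p) :
    (⨅ p ∈ F, H p).index = ∏ p ∈ F, (H p).index := by
  classical
  induction F using Finset.induction_on with
  | empty => simp
  | insert p F hp ih =>
    have hH' := ih fun q hq => hH q (by simp [hq])
    rw [Finset.iInf_insert, Finset.prod_insert hp, ← hH']
    have htop : (⨅ q ∈ F, H q) ⊔ H p = ⊤ := by
      rw [eq_top_iff]
      intro x _
      obtain ⟨z, h1, h2⟩ := exists_approx' F p hp x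
      have : x = z * (z / x)⁻¹ := by simp
      rw [this]
      refine Subgroup.mul_mem_sup ?_ (inv_mem (hH p (by simp) h1))
      simp only [Subgroup.mem_iInf]
      exact fun q hq => hH q (by simp [hq]) (h2 q hq)
    have h1 := Subgroup.relIndex_mul_index (H := H p ⊓ ⨅ q ∈ F, H q) (K := ⨅ q ∈ F, H q) inf_le_right
    rw [Subgroup.inf_relIndex_right] at h1
    rw [← h1, ← Subgroup.relIndex_sup_right, htop, Subgroup.relIndex_top_right]

lemma index_lsqI (w : InfinitePlace K) : (lsqI w).index ∣ 2 := by
  refine Subgroup.index_dvd_two_iff.2 ⟨-1, fun b => ?_⟩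
  by_cases h : ∃ φ : K →+* ℝ, plc φ = w
  · obtain ⟨φ, hφ⟩ := h
    have huniq : ∀ ψ : K →+* ℝ, plc ψ = w → ψ = φ := fun ψ hψ => plc_inj (hψ.trans hφ.symm)
    rcases lt_or_gt_of_ne (show φ b ≠ 0 by simp) with hb | hb
    · left; intro ψ hψ; rw [huniq ψ hψ]; simpa using hb
    · right; intro ψ hψ; rw [huniq ψ hψ]; simpa using hb
  · right; intro φ hφ; exact absurd ⟨φ, hφ⟩ h

lemma lsqI_complex (w : InfinitePlace K) (hw : w.IsComplex) : lsqI w = ⊤ := by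
  rw [eq_top_iff]
  intro x _ φ hφ
  exfalso
  have : w.IsReal := by
    rw [← hφ]
    refine ⟨Complex.ofRealHom.comp φ, ?_, rfl⟩
    rw [ComplexEmbedding.isReal_iff]
    ext x; simp [ComplexEmbedding.conjugate]
  exact InfinitePlace.not_isReal_iff_isComplex.2 hw this

/-- The finite set of places `S ∪ ∞`. -/
noncomputable def PS (S : Finset (Pr K)) : Finset (Pl K) := by
  classical exact (Finset.univ : Finset (InfinitePlace K)).disjSum S

@[simp] lemma inl_mem_PS (S : Finset (Pr K)) (w) : Sum.inl w ∈ PS S := by simp [PS]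
@[simp] lemma inr_mem_PS (S : Finset (Pr K)) (v) : Sum.inr v ∈ PS S ↔ v ∈ S := by simp [PS]

lemma card_PS (S : Finset (Pr K)) : (PS S).card = Fintype.card (InfinitePlace K) + S.card := by
  classical
  simp [PS, Finset.card_disjSum]

lemma prod_Nm (S : Finset (Pr K)) : ∏ v ∈ S, Nm v ^ e2 v ≤ 2 ^ Module.finrank ℚ K := by
  classical
  have h1 : ∏ v ∈ S, v.asIdeal ^ e2 v ∣ Ideal.span {(2 : 𝓞 K)} := by
    refine Finset.prod_dvd_of_coprime ?_ ?_
    · intro v _ w _ hvw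
      refine IsCoprime.pow ?_
      rw [Ideal.isCoprime_iff_sup_eq]
      have := v.isMaximal.coprime_of_ne w.isMaximal (fun h => hvw (HeightOneSpectrum.ext h))
      exact this
    · intro v _
      rw [Ideal.dvd_span_singleton, ← intValuation_le_pow_iff_mem, ← valuation_of_algebraMap (K := K)]
      have := val2 v
      change v.valuation K (algebraMap (𝓞 K) K 2) ≤ _
      rw [map_ofNat, this]
  have h2 := Ideal.absNorm_dvd_absNorm_of_le (Ideal.le_of_dvd h1)
  rw [Ideal.absNorm_span_singleton] at h2
  have h3 : (Algebra.norm ℤ (2 : 𝓞 K)).natAbs = 2 ^ Module.finrank ℚ K := by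
    have := Algebra.norm_algebraMap (S := 𝓞 K) (2 : ℤ)
    rw [map_ofNat] at this
    rw [this, Int.natAbs_pow, RingOfIntegers.rank]
    rfl
  rw [h3, map_prod] at h2
  refine le_trans (le_of_eq ?_) (Nat.le_of_dvd (by positivity) h2)
  refine Finset.prod_congr rfl fun v _ => ?_
  rw [map_pow, Ideal.absNorm_apply]; rfl

lemma prod_index_lsq (S : Finset (Pr K)) : ∏ p ∈ PS S, (lsq p).index ≤ 4 ^ (PS S).card := by
  classical
  rw [card_PS, PS, Finset.prod_disjSum]
  simp only [lsq_inl, lsq_inr]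
  have h1 : ∏ v ∈ S, (lsqF v).index ≤ 4 ^ S.card * 2 ^ Module.finrank ℚ K := by
    calc _ ≤ ∏ v ∈ S, (4 * Nm v ^ e2 v) := Finset.prod_le_prod' fun v _ => (index_lsqF v).1
      _ = 4 ^ S.card * ∏ v ∈ S, Nm v ^ e2 v := by rw [Finset.prod_mul_distrib]; simp
      _ ≤ _ := Nat.mul_le_mul_left _ (prod_Nm S)
  have h2 : ∏ w : InfinitePlace K, (lsqI w).index ≤ 2 ^ InfinitePlace.nrRealPlaces K := by
    have : ∀ w : InfinitePlace K, (lsqI w).index ≤ if w.IsReal then 2 else 1 := by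
      intro w
      split_ifs with h
      · exact Nat.le_of_dvd (by norm_num) (index_lsqI w)
      · rw [lsqI_complex w (InfinitePlace.not_isReal_iff_isComplex.1 h)]; simp
    refine (Finset.prod_le_prod' fun w _ => this w).trans (le_of_eq ?_)
    rw [Finset.prod_ite]
    simp [InfinitePlace.nrRealPlaces, Fintype.card_subtype]
  have h3 := InfinitePlace.card_add_two_mul_card_eq_rank K
  have h4 := InfinitePlace.card_eq_nrRealPlaces_add_nrComplexPlaces K
  refine (Nat.mul_le_mul h2 h1).trans (le_of_eq ?_)
  rw [← h3, h4]
  rw [show (4 : ℕ) = 2 ^ 2 by norm_num, ← pow_mul, ← pow_mul, ← pow_add, ← pow_add]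
  congr 1; ring

/-- Odd primes. -/
def OddP (v : Pr K) : Prop := v.valuation K (2 : K) = 1

lemma OddP.four {v : Pr K} (h : OddP v) : v.valuation K (4 : K) = 1 := by
  have : (4 : K) = 2 * 2 := by norm_num
  rw [this, map_mul, h, one_mul]

lemma OddP.e2 {v : Pr K} (h : OddP v) : e2 v = 0 := by
  have := val2 v
  rw [h, ← exp_zero, exp_inj] at this
  omega

lemma lsqF_of_lt_one {v : Pr K} (h : OddP v) {x y : Kˣ}
    (hxy : v.valuation K ((x : K) - y) < v.valuation K (y : K)) : x / y ∈ lsqF v :=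
  mem_lsqF_of_close v (by rw [h.four, one_mul]; exact hxy)

lemma relIndex_odd {v : Pr K} (h : OddP v) : (lsqF v).relIndex (Vm v 0) = 2 := by
  have := relIndex_lsqF_V v
  rw [h.e2, pow_zero] at this
  omega

/-- Trichotomy for values of `x² - c y²` at an odd prime. -/
lemma normG_cases {v : Pr K} (h : OddP v) {c n : Kˣ} (hn : n ∈ normG c) :
    n ∈ lsqF v ∨ -(n / c) ∈ lsqF v ∨ (c ∈ lsqF v) ∨ (Even (ord v c) ∧ Even (ord v n)) := by
  obtain ⟨x, y, hxy⟩ := hn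
  have hsq : ∀ {z w : Kˣ}, z / w ^ 2 ∈ lsqF v → z ∈ lsqF v := by
    intro z w hz
    have := mul_mem hz (sq_mem_lsqF v w)
    simpa using this
  by_cases hx : x = 0
  · have hy : y ≠ 0 := by rintro rfl; apply n.ne_zero; rw [hxy, hx]; ring
    right; left
    apply hsq (w := Units.mk0 y hy)
    have : -(n / c) / Units.mk0 y hy ^ 2 = 1 := by
      have h0 : n = -(c * Units.mk0 y hy ^ 2) := by
        ext; push_cast; rw [hxy, hx]; simp
      rw [h0]; simp [neg_div, mul_div_cancel_left]
    rw [this]; exact one_mem _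
  by_cases hy : y = 0
  · left
    apply hsq (w := Units.mk0 x hx)
    have : n / Units.mk0 x hx ^ 2 = 1 := by
      have h0 : n = Units.mk0 x hx ^ 2 := by
        ext; push_cast; rw [hxy, hy]; simp
      rw [h0]; simp
    rw [this]; exact one_mem _
  set X := Units.mk0 x hx with hX
  set Y := Units.mk0 y hy with hY
  have hXx : (X : K) = x := rfl
  have hYy : (Y : K) = y := rfl
  rw [← hXx, ← hYy] at hxy
  rcases lt_trichotomy (v.valuation K ((X : K) ^ 2)) (v.valuation K (c * (Y : K) ^ 2)) with hlt | heq | hlt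
  · right; left
    apply hsq (w := Y)
    have : -(n / c) / Y ^ 2 = n / (-(c * Y ^ 2)) := by
      rw [div_neg, neg_div, div_div]
    rw [this]
    refine lsqF_of_lt_one h ?_
    rw [hxy]; push_cast
    rw [Valuation.map_neg]
    convert hlt using 2; ring
  · right; right
    by_cases hlt : v.valuation K (n : K) < v.valuation K ((X : K) ^ 2)
    · left
      apply hsq (w := (X / Y))
      have : c / (X / Y) ^ 2 = (c * Y ^ 2) / X ^ 2 := by
        rw [div_pow, div_div_eq_mul_div]
      rw [this]
      refine lsqF_of_lt_one h ?_
      push_cast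
      rw [Valuation.map_sub_swap, ← hxy]; exact hlt
    · right
      have hle : v.valuation K (n : K) ≤ v.valuation K ((X : K) ^ 2) := by
        rw [hxy]; refine (Valuation.map_sub _ _ _).trans (max_le le_rfl heq.ge)
      have h1 : v.valuation K (n : K) = v.valuation K ((X ^ 2 : Kˣ) : K) := by
        push_cast; exact le_antisymm hle (not_lt.1 hlt)
      have h2 : v.valuation K ((X ^ 2 : Kˣ) : K) = v.valuation K ((c * Y ^ 2 : Kˣ) : K) := by
        push_cast; exact heq
      rw [val_eq_iff] at h1 h2
      simp at h1 h2
      exact ⟨⟨ord v X - ord v Y, by omega⟩, ⟨ord v X, by omega⟩⟩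
  · left
    apply hsq (w := X)
    refine lsqF_of_lt_one h ?_
    rw [hxy]; push_cast
    rw [show (X : K) ^ 2 - c * (Y : K) ^ 2 - (X : K) ^ 2 = - (c * (Y : K) ^ 2) by ring, Valuation.map_neg]
    exact hlt

lemma ord_neg (v : Pr K) (x : Kˣ) : ord v (-x) = ord v x := by
  have h : ord v ((-x) ^ 2) = ord v (x ^ 2) := by rw [neg_sq]
  rw [ord_pow, ord_pow] at h
  push_cast at h; omega

lemma L1 {v : Pr K} (h : OddP v) {c u : Kˣ} (hc : Even (ord v c)) (hc' : c ∉ lsqF v)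
    (hu : u ∈ LN (Sum.inr v) c) : Even (ord v u) := by
  obtain ⟨n, hn, hun⟩ := mem_LN.1 hu
  have h1 := even_ord_of_lsqF (v := v) hun
  have h2 : Even (ord v n) := by
    rcases normG_cases h hn with h3 | h3 | h3 | h3
    · exact even_ord_of_lsqF h3
    · have := even_ord_of_lsqF h3
      rw [ord_neg, ord_div] at this
      have := this.add hc; simpa using this
    · exact absurd h3 hc'
    · exact h3.2
  rw [ord_div] at h1
  have := h1.add h2; simpa using this

lemma L2 {v : Pr K} (h : OddP v) {c u : Kˣ} (hc : ¬ Even (ord v c)) (hu0 : Even (ord v u))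
    (hu : u ∈ LN (Sum.inr v) c) : u ∈ lsqF v := by
  obtain ⟨n, hn, hun⟩ := mem_LN.1 hu
  have h1 := even_ord_of_lsqF (v := v) hun
  rw [ord_div] at h1
  have h2 : Even (ord v n) := by have := hu0.sub h1; simpa using this
  have h4 : n ∈ lsqF v := by
    rcases normG_cases h hn with h3 | h3 | h3 | h3
    · exact h3
    · have := even_ord_of_lsqF h3
      rw [ord_neg, ord_div] at this
      have := h2.sub this; simp at this; exact absurd this hc
    · exact absurd (even_ord_of_lsqF h3) hc
    · exact absurd h3.1 hc
  have := mul_mem (show u / n ∈ lsqF v from hun) h4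
  simpa using this

lemma LN_ne_top_odd {v : Pr K} (h : OddP v) {c : Kˣ} (hc : c ∉ lsqF v) : LN (Sum.inr v) c ≠ ⊤ := by
  intro htop
  by_cases he : Even (ord v c)
  · obtain ⟨π, hπ⟩ := exists_ord_eq_one (K := K) v
    have := L1 h he hc (u := π) (htop ▸ Subgroup.mem_top _)
    rw [hπ] at this; simp at this
  · obtain ⟨x, hx, hx'⟩ := exists_unit_notMem_lsqF v
    exact hx' (L2 h he (by simp [hx]) (htop ▸ Subgroup.mem_top _))

lemma LN_pos {w : InfinitePlace K} {φ : K →+* ℝ} (hφ : plc φ = w) {c u : Kˣ} (hc : φ c < 0)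
    (hu : u ∈ LN (Sum.inl w) c) : 0 < φ u := by
  obtain ⟨n, ⟨x, y, hxy⟩, hun⟩ := mem_LN.1 hu
  have h1 : 0 < φ ((u / n : Kˣ) : K) := hun φ hφ
  have h2 : 0 ≤ φ n := by
    rw [hxy]; simp only [map_sub, map_pow, map_mul]; nlinarith [sq_nonneg (φ x), sq_nonneg (φ y)]
  have h3 : 0 < φ n := lt_of_le_of_ne h2 (by intro h0; exact n.ne_zero ((map_eq_zero φ).1 h0.symm))
  have : (u : K) = (u / n : Kˣ) * n := by push_cast; field_simp
  rw [this, map_mul]; exact mul_pos h1 h3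

lemma LN_ne_top_real {w : InfinitePlace K} {c : Kˣ} (hc : c ∉ lsqI w) : LN (Sum.inl w) c ≠ ⊤ := by
  intro htop
  have : ∃ φ : K →+* ℝ, plc φ = w ∧ φ c ≤ 0 := by
    by_contra hcon; push Not at hcon; exact hc hcon
  obtain ⟨φ, hφ, h⟩ := this
  have h2 : φ c < 0 := lt_of_le_of_ne h (by simp)
  have := LN_pos hφ h2 (u := -1) (htop ▸ Subgroup.mem_top _)
  simp at this; linarith

lemma LN_congr_le (v : Pr K) {c c' : Kˣ} (h : c / c' ∈ lsqF v) : LN (Sum.inr v) c ≤ LN (Sum.inr v) c' := by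
  refine sup_le ?_ (lsq_le_LN _ _)
  rintro n ⟨x, y, hxy⟩
  by_cases hy : y = 0
  · have hx : x ≠ 0 := by rintro rfl; apply n.ne_zero; rw [hxy, hy]; ring
    have : n = (Units.mk0 x hx) ^ 2 := by
      ext; push_cast; rw [hxy, hy]; simp
    rw [this]; exact lsq_le_LN _ _ (sq_mem_lsq _ _)
  set Y := Units.mk0 y hy with hY
  have hYy : (Y : K) = y := rfl
  have hnz : ∀ z : Kˣ, v.valuation K (z : K) ≠ 0 := fun z => (Valuation.ne_zero_iff _).2 z.ne_zero
  have hnz0 : ∀ z : Kˣ, 0 < v.valuation K (z : K) := fun z => zero_lt_iff.2 (hnz z)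
  set δ := v.valuation K (4 : K) * v.valuation K (n : K) / v.valuation K ((c * Y ^ 2 : Kˣ) : K) with hδ
  have hδ0 : δ ≠ 0 := div_ne_zero (mul_ne_zero (val4_ne v) (hnz _)) (hnz _)
  obtain ⟨y0, hy0⟩ := lsqF_hensel v h (min δ 1) (by
    intro h0; rcases min_choice δ 1 with h1 | h1 <;> rw [h1] at h0
    · exact hδ0 h0
    · exact one_ne_zero h0)
  obtain ⟨hy1, hy2⟩ := lt_min_iff.1 hy0
  set q := (((c / c' : Kˣ) : K) * (y0 : K) ^ 2) with hq
  have hq1 : v.valuation K q = 1 := by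
    have : q = 1 + (q - 1) := by ring
    rw [this]; exact val_one_add v hy2
  have hdiff : (x ^ 2 - c' * (y / y0) ^ 2) - n = c * y ^ 2 * ((q - 1) / q) := by
    rw [hxy, hq]; push_cast
    have := c.ne_zero; have := c'.ne_zero; have := y0.ne_zero
    field_simp; ring
  have hlt : v.valuation K ((x ^ 2 - c' * (y / y0) ^ 2) - n) < v.valuation K (4 : K) * v.valuation K (n : K) := by
    rw [hdiff, map_mul, map_div₀, hq1, div_one]
    rw [hδ, lt_div_iff₀ (hnz0 _)] at hy1
    rw [mul_comm, ← hYy]; simpa using hy1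
  have hlt2 : v.valuation K ((x ^ 2 - c' * (y / y0) ^ 2) - n) < v.valuation K (n : K) :=
    hlt.trans_le (mul_le_of_le_one_left' (val_ofNat_le v 4))
  have hne : (x ^ 2 - c' * (y / y0) ^ 2) ≠ 0 := by
    intro h0; rw [h0, zero_sub, Valuation.map_neg] at hlt2; exact lt_irrefl _ hlt2
  set N := Units.mk0 _ hne with hN
  have h1 : N / n ∈ lsqF v := mem_lsqF_of_close v hlt
  have h2 : N ∈ normG c' := ⟨x, y / y0, rfl⟩
  have : n = N * (N / n)⁻¹ := by simp
  rw [this]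
  exact mul_mem (normG_le_LN _ _ h2) (inv_mem (lsq_le_LN (Sum.inr v) _ h1))

lemma LN_congr (v : Pr K) {c c' : Kˣ} (h : c / c' ∈ lsqF v) : LN (Sum.inr v) c = LN (Sum.inr v) c' :=
  le_antisymm (LN_congr_le v h) (LN_congr_le v (by rw [← inv_div]; exact inv_mem h))

lemma normG_one (u : Kˣ) : u ∈ normG (1 : Kˣ) := 
  ⟨((u : K) + 1) / 2, ((u : K) - 1) / 2, by push_cast; ring⟩

lemma normG_sq {c : Kˣ} (hc : IsSquare c) (u : Kˣ) : u ∈ normG c := by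
  obtain ⟨d, rfl⟩ := hc
  exact ⟨((u : K) + 1) / 2, ((u : K) - 1) / 2 / d, by push_cast; field_simp; ring⟩

lemma LN_eq_top {p : Pl K} {c : Kˣ} (hc : c ∈ lsq p) : LN p c = ⊤ := by
  rw [eq_top_iff]
  intro u _
  rcases p with w | v
  · by_cases h : ∃ φ : K →+* ℝ, plc φ = w
    · obtain ⟨φ, hφ⟩ := h
      have huniq : ∀ ψ : K →+* ℝ, plc ψ = w → ψ = φ := fun ψ hψ => plc_inj (hψ.trans hφ.symm)
      rcases lt_or_gt_of_ne (show φ u ≠ 0 by simp) with hb | hb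
      · refine mem_LN.2 ⟨-c, neg_mem_normG c, ?_⟩
        intro ψ hψ; rw [huniq ψ hψ]
        have : 0 < φ c := hc φ hφ
        push_cast; rw [map_div₀, map_neg]; exact div_pos_of_neg_of_neg hb (by linarith)
      · apply lsq_le_LN
        intro ψ hψ; rw [huniq ψ hψ]; exact hb
    · apply lsq_le_LN
      intro φ hφ; exact absurd ⟨φ, hφ⟩ h
  · rw [LN_congr v (c' := 1) (by simpa [lsq_inr] using hc)]
    exact normG_le_LN _ _ (normG_one u)

end A4
end HS

set_option linter.unusedSectionVars false
set_option linter.style.haveILetI false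
set_option linter.deprecated false
set_option linter.unusedSimpArgs false

namespace HS
open NumberField IsDedekindDomain HeightOneSpectrum WithZero

section A5

lemma card_two_aux (n : ℕ) (T : Type*) [AddCommGroup T] [Finite T] :
    (nsmulAddMonoidHom (α := (Fin n →₀ ℤ) × T) 2).range.index =
      2 ^ n * Nat.card (nsmulAddMonoidHom (α := (Fin n →₀ ℤ) × T) 2).ker := by
  classical
  set R := (nsmulAddMonoidHom (α := T) 2).range with hR
  let f1 : (Fin n →₀ ℤ) →+ (Fin n → ZMod 2) :=
    { toFun := fun x i => (x i : ZMod 2), map_zero' := by ext; simp, map_add' := by intros; ext; simp }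
  let f : (Fin n →₀ ℤ) × T →+ (Fin n → ZMod 2) × (T ⧸ R) := f1.prodMap (QuotientAddGroup.mk' R)
  have hf : Function.Surjective f := by
    rintro ⟨a, b⟩
    obtain ⟨b, rfl⟩ := QuotientAddGroup.mk_surjective b
    refine ⟨(Finsupp.equivFunOnFinite.symm fun i => ((a i).val : ℤ), b), ?_⟩
    ext i
    · simp [f, f1]
    · rfl
  have hk : f.ker = (nsmulAddMonoidHom (α := (Fin n →₀ ℤ) × T) 2).range := by
    ext ⟨x, t⟩
    simp only [AddMonoidHom.mem_ker, AddMonoidHom.mem_range, f, Prod.ext_iff, AddMonoidHom.coe_prodMap,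
      Prod.map, nsmulAddMonoidHom_apply, Prod.fst_zero, Prod.snd_zero]
    constructor
    · rintro ⟨h1, h2⟩
      obtain ⟨t', ht'⟩ := (QuotientAddGroup.eq_zero_iff _).1 h2
      refine ⟨(x.mapRange (fun k => k / 2) (by simp), t'), ?_, ht'⟩
      ext i
      have h3 : ((x i : ℤ) : ZMod 2) = 0 := congrFun h1 i
      rw [ZMod.intCast_zmod_eq_zero_iff_dvd] at h3
      simp; omega
    · rintro ⟨⟨y, s⟩, h1, h2⟩
      refine ⟨?_, (QuotientAddGroup.eq_zero_iff _).2 ⟨s, h2⟩⟩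
      ext i
      change ((x i : ℤ) : ZMod 2) = 0
      rw [← h1]
      have : (2 : ZMod 2) = 0 := by decide
      simp [this]
  rw [← hk, AddSubgroup.index_ker, AddMonoidHom.range_eq_top.2 hf]
  have h1 : Nat.card (⊤ : AddSubgroup ((Fin n → ZMod 2) × (T ⧸ R))) = 2 ^ n * R.index := by
    rw [Nat.card_congr AddSubgroup.topEquiv.toEquiv, Nat.card_prod]
    simp [AddSubgroup.index]
  rw [h1]
  congr 1
  have h2 : R.index = Nat.card (nsmulAddMonoidHom (α := T) 2).ker := by
    have h3 := R.card_mul_index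
    have h4 := (nsmulAddMonoidHom (α := T) 2).ker.card_mul_index
    rw [AddSubgroup.index_ker, ← h3, mul_comm] at h4
    exact (Nat.eq_of_mul_eq_mul_left Nat.card_pos h4).symm
  rw [h2]
  refine Nat.card_congr ⟨fun t => ⟨(0, t.1), ?_⟩, fun t => ⟨t.1.2, ?_⟩, fun t => rfl, fun t => ?_⟩
  · have := t.2; rw [AddMonoidHom.mem_ker] at this ⊢; ext <;> simp_all
  · have := t.2; rw [AddMonoidHom.mem_ker] at this ⊢; simpa using congrArg Prod.snd this
  · have := t.2
    rw [AddMonoidHom.mem_ker] at this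
    ext i
    · have h := congrArg (fun z => z.1 i) this
      simp at h; simp [h]
    · rfl

lemma finrank_prod_finite (n : ℕ) (T : Type*) [AddCommGroup T] [Finite T] :
    Module.finrank ℤ ((Fin n →₀ ℤ) × T) = n := by
  have h := Submodule.finrank_quotient_add_finrank (LinearMap.ker (LinearMap.fst ℤ (Fin n →₀ ℤ) T))
  rw [LinearEquiv.finrank_eq (LinearMap.quotKerEquivOfSurjective _ LinearMap.fst_surjective)] at h
  have h2 : Module.rank ℤ (LinearMap.ker (LinearMap.fst ℤ (Fin n →₀ ℤ) T)) = 0 := by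
    rw [rank_eq_zero_iff]
    rintro ⟨⟨x, t⟩, hx⟩
    obtain ⟨k, hk, hk'⟩ := isOfFinAddOrder_iff_nsmul_eq_zero.1 (isOfFinAddOrder_of_finite t)
    refine ⟨k, by exact_mod_cast hk.ne', ?_⟩
    have hx0 : x = 0 := hx
    subst hx0
    apply Subtype.ext
    apply Prod.ext <;> simp [hk']
  rw [Module.finrank_eq_zero_of_rank_eq_zero h2] at h
  simpa using h.symm

lemma card_two (M : Type*) [AddCommGroup M] [AddGroup.FG M] :
    (nsmulAddMonoidHom (α := M) 2).range.index =
      2 ^ (Module.finrank ℤ M) * Nat.card (nsmulAddMonoidHom (α := M) 2).ker := by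
  classical
  obtain ⟨n, ι, _, p, hp, e, ⟨E⟩⟩ := AddCommGroup.equiv_free_prod_directSum_zmod M
  have hne : ∀ i, NeZero (p i ^ e i) := fun i => ⟨pow_ne_zero _ (hp i).ne_zero⟩
  have hfin : Finite (DirectSum ι fun i => ZMod (p i ^ e i)) := by
    have := Fintype.ofFinite ι
    exact Finite.of_equiv _ (DirectSum.addEquivProd (fun i => ZMod (p i ^ e i))).symm.toEquiv
  have h := card_two_aux n (DirectSum ι fun i => ZMod (p i ^ e i))
  have hr : Module.finrank ℤ M = n := by
    rw [LinearEquiv.finrank_eq E.toIntLinearEquiv]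
    exact finrank_prod_finite n _
  rw [hr]
  have e1 : (nsmulAddMonoidHom (α := M) 2).range.index = 
      (nsmulAddMonoidHom (α := (Fin n →₀ ℤ) × (DirectSum ι fun i => ZMod (p i ^ e i))) 2).range.index := by
    rw [← AddSubgroup.index_comap_of_surjective _ (f := E.toAddMonoidHom) E.surjective]
    congr 1
    ext x
    simp only [AddSubgroup.mem_comap, AddMonoidHom.mem_range, nsmulAddMonoidHom_apply]
    constructor
    · rintro ⟨y, rfl⟩; exact ⟨E y, by simp⟩
    · rintro ⟨y, hy⟩; exact ⟨E.symm y, by apply E.injective; simpa using hy⟩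
  have e2 : Nat.card (nsmulAddMonoidHom (α := M) 2).ker = 
      Nat.card (nsmulAddMonoidHom (α := (Fin n →₀ ℤ) × (DirectSum ι fun i => ZMod (p i ^ e i))) 2).ker := by
    refine Nat.card_congr (E.toEquiv.subtypeEquiv fun x => ?_)
    simp only [AddMonoidHom.mem_ker, nsmulAddMonoidHom_apply]
    rw [← E.map_eq_zero_iff, map_nsmul]; rfl
  rw [e1, e2, h]

lemma relIndex_Sq {F : Type*} [Field F] (h2 : (2 : F) ≠ 0) (H : Subgroup Fˣ) (hneg : (-1 : Fˣ) ∈ H)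
    [hfg : Module.Finite ℤ (Additive H)] :
    (Sq H).relIndex H = 2 ^ (Module.finrank ℤ (Additive H) + 1) := by
  classical
  have : AddGroup.FG (Additive H) := Module.Finite.iff_addGroup_fg.1 hfg
  have h := card_two (Additive H)
  have h3 : Nat.card (nsmulAddMonoidHom (α := Additive H) 2).ker = 2 := by
    rw [Nat.card_eq_two_iff]
    refine ⟨0, ⟨Additive.ofMul ⟨-1, hneg⟩, ?_⟩, ?_, ?_⟩
    · rw [AddMonoidHom.mem_ker, nsmulAddMonoidHom_apply, ← ofMul_pow]
      congr 1; ext; simp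
    · intro h0
      have h1 : (1 : Fˣ) = -1 := congrArg (fun z : (nsmulAddMonoidHom (α := Additive H) 2).ker => ((Additive.toMul z.1 : H) : Fˣ)) h0
      have h1 : (1 : F) = -1 := by simpa using congrArg Units.val h1
      exact h2 (by linear_combination h1)
    · ext ⟨z, hz⟩
      simp only [Set.mem_insert_iff, Set.mem_singleton_iff, Set.mem_univ, iff_true]
      rw [AddMonoidHom.mem_ker, nsmulAddMonoidHom_apply] at hz
      have hz1 : (((Additive.toMul z : H) : Fˣ) : F) ^ 2 = 1 := by
        have : (Additive.toMul z : H) ^ 2 = 1 := by rw [← toMul_nsmul, hz]; rfl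
        have := congrArg (fun t : H => ((t : Fˣ) : F)) this
        simpa using this
      rcases sq_eq_one_iff.1 hz1 with h | h
      · left; ext1; apply Additive.toMul.injective; ext; simpa using h
      · right; ext1; apply Additive.toMul.injective; ext; simpa using h
  rw [h3, ← pow_succ] at h
  rw [← h, Subgroup.relIndex]
  have : (nsmulAddMonoidHom (α := Additive H) 2).range = ((Sq H).subgroupOf H).toAddSubgroup := by
    ext z
    simp only [AddMonoidHom.mem_range, nsmulAddMonoidHom_apply]
    change _ ↔ Additive.toMul z ∈ (Sq H).subgroupOf H
    rw [Subgroup.mem_subgroupOf, mem_Sq]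
    constructor
    · rintro ⟨y, hy⟩
      refine ⟨(Additive.toMul y : H), (Additive.toMul y).2, ?_⟩
      rw [← hy]; rfl
    · rintro ⟨y, hy, hy'⟩
      refine ⟨Additive.ofMul ⟨y, hy⟩, ?_⟩
      apply Additive.toMul.injective; apply Subtype.ext; exact hy'
  rw [this, Subgroup.index_toAddSubgroup]

end A5
end HS

set_option linter.unusedSectionVars false
set_option linter.style.haveILetI false
set_option linter.deprecated false
set_option linter.unusedSimpArgs false

namespace HS
open NumberField IsDedekindDomain HeightOneSpectrum WithZero

section A6
variable {K : Type*} [Field K] [NumberField K]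

/-- The `S`-units. -/
noncomputable def US (S : Finset (Pr K)) : Subgroup Kˣ where
  carrier := {x | ∀ v, v ∉ S → ord v x = 0}
  one_mem' := by simp
  mul_mem' := by intro x y hx hy v hv; simp [hx v hv, hy v hv]
  inv_mem' := by intro x hx v hv; simp [hx v hv]

lemma mem_US {S : Finset (Pr K)} {x : Kˣ} : x ∈ US S ↔ ∀ v, v ∉ S → ord v x = 0 := Iff.rfl

lemma US_mono {S T : Finset (Pr K)} (h : S ⊆ T) : US S ≤ US T := fun _ hx v hv => hx v fun hv' => hv (h hv')

lemma neg_one_mem_US (S : Finset (Pr K)) : (-1 : Kˣ) ∈ US S := fun v _ => by rw [ord_neg, ord_one]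

/-- The finite set of primes where `x` is not a unit. -/
noncomputable def spp (x : Kˣ) : Finset (Pr K) := (supp_finite x).toFinset

@[simp] lemma mem_spp {x : Kˣ} {v : Pr K} : v ∈ spp x ↔ ord v x ≠ 0 := by simp [spp]

lemma mem_US_iff_spp {S : Finset (Pr K)} {x : Kˣ} : x ∈ US S ↔ spp x ⊆ S := by
  rw [mem_US]
  constructor
  · intro h v hv; by_contra hS; exact (mem_spp.1 hv) (h v hS)
  · intro h v hv; by_contra hS; exact hv (h (mem_spp.2 hS))

/-- The finite set of dyadic primes. -/
noncomputable def dyad (K : Type*) [Field K] [NumberField K] : Finset (Pr K) := spp (tw : Kˣ)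

lemma oddP_iff {v : Pr K} : OddP v ↔ v ∉ dyad K := by
  rw [dyad, mem_spp, not_not, ← val_eq_one_iff]; rfl

lemma ord_of_span {α : 𝓞 K} (hα : algebraMap (𝓞 K) K α ≠ 0) (v : Pr K) (a : ℕ) (J : Ideal (𝓞 K))
    (h : Ideal.span {α} = v.asIdeal ^ a * J) (hJ : ¬ v.asIdeal ∣ J) :
    ord v (Units.mk0 _ hα) = a := by
  have h1 := val_eq v (Units.mk0 _ hα)
  have hα' : α ≠ 0 := by rintro rfl; simp at hα
  rw [Units.val_mk0, valuation_of_algebraMap, v.intValuation_eq_exp_neg_multiplicity hα', exp_inj] at h1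
  have h2 : multiplicity v.asIdeal (Ideal.span {α}) = a := by
    refine multiplicity_eq_of_dvd_of_not_dvd ⟨J, h⟩ ?_
    rw [h, pow_succ, mul_dvd_mul_iff_left]
    · exact hJ
    · exact pow_ne_zero _ v.ne_bot
  rw [h2] at h1
  omega

/-- Every prime outside `S` is principal up to `S`. -/
def Good (S : Finset (Pr K)) : Prop :=
  ∀ v0, v0 ∉ S → ∃ π : Kˣ, ord v0 π = 1 ∧ ∀ v, v ∉ S → v ≠ v0 → ord v π = 0

lemma Good.mono {S T : Finset (Pr K)} (hS : Good S) (h : S ⊆ T) : Good T := by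
  intro v0 hv0
  obtain ⟨π, h1, h2⟩ := hS v0 fun h' => hv0 (h h')
  exact ⟨π, h1, fun v hv => h2 v fun h' => hv (h h')⟩

lemma Good.exists {S : Finset (Pr K)} (hS : Good S) (n : Pr K → ℤ) (hn : {v | n v ≠ 0}.Finite) :
    ∃ z : Kˣ, ∀ v, v ∉ S → ord v z = n v := by
  classical
  choose! π h1 h2 using hS
  have hprod : ∀ (F : Finset (Pr K)), (∀ v ∈ F, v ∉ S) → ∀ v, v ∉ S →
      ord v (∏ w ∈ F, π w ^ n w) = if v ∈ F then n v else 0 := by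
    intro F hF v hv
    induction F using Finset.induction_on with
    | empty => simp
    | insert w F hw ih =>
      rw [Finset.prod_insert hw, ord_mul, ih fun v hv => hF v (by simp [hv]), ord_zpow]
      by_cases hvw : v = w
      · subst hvw; simp [hw, h1 v hv]
      · rw [h2 w (hF w (by simp)) v hv hvw]; simp [hvw]
  refine ⟨∏ w ∈ hn.toFinset \ S, π w ^ n w, fun v hv => ?_⟩
  rw [hprod _ (by simp) v hv]
  by_cases h : n v = 0 <;> simp [h, hv]

lemma exists_good : ∃ S : Finset (Pr K), Good S := by
  classical
  have hJ : ∀ c : ClassGroup (𝓞 K), ∃ J : nonZeroDivisors (Ideal (𝓞 K)), ClassGroup.mk0 J = c :=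
    fun c => ClassGroup.mk0_surjective c
  choose J hJ using hJ
  have hfin : ∀ c, {v : Pr K | v.asIdeal ∣ (J c : Ideal (𝓞 K))}.Finite := fun c =>
    Ideal.finite_factors (nonZeroDivisors.coe_ne_zero (J c))
  refine ⟨Finset.univ.biUnion fun c => (hfin c).toFinset, fun v0 hv0 => ?_⟩
  let P : nonZeroDivisors (Ideal (𝓞 K)) := ⟨v0.asIdeal, mem_nonZeroDivisors_of_ne_zero v0.ne_bot⟩
  set c := (ClassGroup.mk0 P)⁻¹ with hc
  have h1 : ClassGroup.mk0 (P * J c) = 1 := by rw [map_mul, hJ, hc, mul_inv_cancel]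
  rw [ClassGroup.mk0_eq_one_iff] at h1
  obtain ⟨α, hα⟩ := h1.principal
  have hα1 : Ideal.span {α} = v0.asIdeal * (J c : Ideal (𝓞 K)) := by
    rw [Ideal.span, ← hα]; rfl
  have hα0 : algebraMap (𝓞 K) K α ≠ 0 := by
    intro h0
    have h00 : α = 0 := by simpa using h0
    rw [h00, Ideal.span_singleton_zero] at hα1
    exact mul_ne_zero v0.ne_bot (nonZeroDivisors.coe_ne_zero (J c)) hα1.symm
  have hnd : ∀ v : Pr K, v ∉ (Finset.univ.biUnion fun c => (hfin c).toFinset) → ¬ v.asIdeal ∣ (J c : Ideal (𝓞 K)) := by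
    intro v hv hd
    apply hv
    simp only [Finset.mem_biUnion, Finset.mem_univ, true_and]
    exact ⟨c, by simpa using hd⟩
  refine ⟨Units.mk0 _ hα0, ?_, fun v hv hvv => ?_⟩
  · have := ord_of_span hα0 v0 1 _ (by rw [pow_one]; exact hα1) (hnd v0 hv0)
    simpa using this
  · have := ord_of_span hα0 v 0 _ (by rw [pow_zero, one_mul]) ?_
    · simpa using this
    · intro hd
      rw [hα1] at hd
      rcases v.prime.dvd_or_dvd hd with h | h
      · exact hvv (HeightOneSpectrum.ext ((v0.isMaximal.eq_of_le v.isPrime.ne_top (Ideal.le_of_dvd h)).symm))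
      · exact hnd v hv h

lemma exists_pow_principal (v : Pr K) : ∃ (α : Kˣ) (h : ℕ), h ≠ 0 ∧ ord v α = h ∧ ∀ w, w ≠ v → ord w α = 0 := by
  classical
  let P : nonZeroDivisors (Ideal (𝓞 K)) := ⟨v.asIdeal, mem_nonZeroDivisors_of_ne_zero v.ne_bot⟩
  set h := Fintype.card (ClassGroup (𝓞 K)) with hh
  have h1 : ClassGroup.mk0 (P ^ h) = 1 := by rw [map_pow, hh, pow_card_eq_one]
  rw [ClassGroup.mk0_eq_one_iff] at h1
  obtain ⟨α, hα⟩ := h1.principal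
  have hα1 : Ideal.span {α} = v.asIdeal ^ h := by rw [Ideal.span, ← hα]; rfl
  have hα0 : algebraMap (𝓞 K) K α ≠ 0 := by
    intro h0
    have h00 : α = 0 := by simpa using h0
    rw [h00, Ideal.span_singleton_zero] at hα1
    exact pow_ne_zero _ v.ne_bot hα1.symm
  refine ⟨Units.mk0 _ hα0, h, Fintype.card_ne_zero, ?_, fun w hw => ?_⟩
  · refine ord_of_span hα0 v h 1 (by rw [mul_one]; exact hα1) ?_
    intro hd; exact v.prime.not_unit (isUnit_of_dvd_one hd)
  · have := ord_of_span hα0 w 0 _ (by rw [pow_zero, one_mul]) ?_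
    · simpa using this
    · intro hd
      rw [hα1] at hd
      have h := w.prime.dvd_of_dvd_pow hd
      exact hw (HeightOneSpectrum.ext ((v.isMaximal.eq_of_le w.isPrime.ne_top (Ideal.le_of_dvd h)).symm))

/-- The vector of orders of an `S`-unit. -/
noncomputable def ordS (S : Finset (Pr K)) : Additive (US S) →ₗ[ℤ] (S → ℤ) :=
  AddMonoidHom.toIntLinearMap
    { toFun := fun x v => ord v.1 ((Additive.toMul x : US S) : Kˣ)
      map_zero' := by ext v; simp
      map_add' := by intro x y; ext v; simp }

lemma ordS_apply (S : Finset (Pr K)) (x : US S) (v : S) : ordS S (Additive.ofMul x) v = ord v.1 (x : Kˣ) := rfl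

/-- Units of the ring of integers as `S`-units. -/
noncomputable def unitsToUS (S : Finset (Pr K)) : (𝓞 K)ˣ →* US S where
  toFun u := ⟨Units.map (algebraMap (𝓞 K) K).toMonoidHom u, fun v _ => by
    rw [← val_eq_one_iff]
    have h1 := v.valuation_le_one (K := K) (u : 𝓞 K)
    have h2 := v.valuation_le_one (K := K) ((u⁻¹ : (𝓞 K)ˣ) : 𝓞 K)
    have h3 : v.valuation K (algebraMap (𝓞 K) K u) * v.valuation K (algebraMap (𝓞 K) K ((u⁻¹ : (𝓞 K)ˣ) : 𝓞 K)) = 1 := by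
      rw [← map_mul, ← map_mul]; simp
    refine le_antisymm h1 ?_
    calc (1 : ℤᵐ⁰) = _ := h3.symm
      _ ≤ _ := mul_le_of_le_one_right' h2⟩
  map_one' := by ext; simp
  map_mul' := by intro x y; ext; simp

lemma unitsToUS_val (S : Finset (Pr K)) (u : (𝓞 K)ˣ) :
    (((unitsToUS S u : US S) : Kˣ) : K) = algebraMap (𝓞 K) K u := rfl

lemma range_units (S : Finset (Pr K)) (x : US S) (hx : ∀ v ∈ S, ord v (x : Kˣ) = 0) :
    ∃ u, unitsToUS S u = x := by
  have h0 : ∀ v : Pr K, v.valuation K ((x : Kˣ) : K) = 1 := by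
    intro v
    rw [val_eq_one_iff]
    by_cases hv : v ∈ S
    · exact hx v hv
    · exact x.2 v hv
  obtain ⟨a, ha⟩ := mem_integers_of_valuation_le_one K ((x : Kˣ) : K) fun v => (h0 v).le
  obtain ⟨b, hb⟩ := mem_integers_of_valuation_le_one K (((x : Kˣ)⁻¹ : Kˣ) : K) fun v => by
    push_cast; rw [map_inv₀, h0 v]; simp
  have hab : a * b = 1 := by
    apply RingOfIntegers.coe_injective (K := K)
    rw [map_mul, ha, hb]; simp
  refine ⟨⟨a, b, hab, by rw [mul_comm]; exact hab⟩, ?_⟩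
  ext
  rw [unitsToUS_val]; exact ha

/-- The kernel of the order map is the unit group. -/
noncomputable def unitsEquiv (S : Finset (Pr K)) :
    Additive (𝓞 K)ˣ ≃ₗ[ℤ] LinearMap.ker (ordS S) :=
  LinearEquiv.ofBijective
    (LinearMap.codRestrict _ (AddMonoidHom.toIntLinearMap (MonoidHom.toAdditive (unitsToUS S))) (by
      intro u
      rw [LinearMap.mem_ker]
      ext v
      have : unitsToUS S (Additive.toMul u) ∈ (⊤ : Subgroup (US S)) := trivial
      change ord v.1 ((unitsToUS S (Additive.toMul u) : US S) : Kˣ) = 0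
      exact (unitsToUS ∅ (Additive.toMul u)).2 v.1 (by simp)))
    (by
      constructor
      · intro u u' h
        have h1 := congrArg (fun z : LinearMap.ker (ordS S) => (((Additive.toMul z.1 : US S) : Kˣ) : K)) h
        have h2 : algebraMap (𝓞 K) K ((Additive.toMul u : (𝓞 K)ˣ) : 𝓞 K) = algebraMap (𝓞 K) K ((Additive.toMul u' : (𝓞 K)ˣ) : 𝓞 K) := h1
        apply Additive.toMul.injective
        ext
        exact h2
      · rintro ⟨x, hx⟩
        obtain ⟨u, hu⟩ := range_units S (Additive.toMul x) (fun v hv => congrFun (LinearMap.mem_ker.1 hx) ⟨v, hv⟩)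
        refine ⟨Additive.ofMul u, ?_⟩
        apply Subtype.ext
        exact congrArg Additive.ofMul hu)

instance finite_US (S : Finset (Pr K)) : Module.Finite ℤ (Additive (US S)) := by
  have h1 : Module.Finite ℤ (LinearMap.ker (ordS S)) := Module.Finite.equiv (unitsEquiv S)
  have h2 : Module.Finite ℤ (Additive (US S) ⧸ LinearMap.ker (ordS S)) :=
    Module.Finite.equiv (ordS S).quotKerEquivRange.symm
  exact Module.Finite.of_submodule_quotient (LinearMap.ker (ordS S))

lemma finrank_US (S : Finset (Pr K)) : Module.finrank ℤ (Additive (US S)) + 1 = (PS S).card := by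
  classical
  have h := Submodule.finrank_quotient_add_finrank (LinearMap.ker (ordS S))
  rw [LinearEquiv.finrank_eq (ordS S).quotKerEquivRange, ← LinearEquiv.finrank_eq (unitsEquiv S), Units.finrank_eq,
    Units.rank] at h
  have h2 : Module.finrank ℤ (LinearMap.range (ordS S)) = S.card := by
    apply le_antisymm
    · have := Submodule.finrank_le (LinearMap.range (ordS S))
      simpa using this
    · choose α n hn h1 h2 using fun v : Pr K => exists_pow_principal v
      let b : S → LinearMap.range (ordS S) := fun v => ⟨ordS S (Additive.ofMul ⟨α v.1, fun w hw => h2 v.1 w (by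
        rintro rfl; exact hw v.2)⟩), LinearMap.mem_range_self _ _⟩
      have hb : LinearIndependent ℤ b := by
        apply LinearIndependent.of_comp (LinearMap.range (ordS S)).subtype
        have : ((LinearMap.range (ordS S)).subtype ∘ b) = fun v : S => (n v.1 : ℤ) • (Pi.single v (1 : ℤ) : S → ℤ) := by
          ext v w
          simp only [Function.comp, b, Submodule.subtype_apply, ordS_apply, Pi.smul_apply, Pi.single_apply, smul_eq_mul]
          by_cases hvw : w = v
          · subst hvw; simp [h1]
          · rw [h2 v.1 w.1 (fun h => hvw (Subtype.ext h))]; simp [hvw]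
        rw [this, Fintype.linearIndependent_iff]
        intro g hg i
        have := congrFun hg i
        simp [Finset.sum_apply, Pi.single_apply] at this
        rcases this with h | h
        · exact h
        · exact absurd h (hn _)
      have := hb.fintype_card_le_finrank
      simpa using this
  rw [h2] at h
  have h3 : 0 < Fintype.card (InfinitePlace K) := Fintype.card_pos
  rw [card_PS]
  omega

lemma relIndex_Sq_US (S : Finset (Pr K)) : (Sq (US S)).relIndex (US S) = 2 ^ (PS S).card := by
  rw [relIndex_Sq two_ne_zero (US S) (neg_one_mem_US S), finrank_US]

end A6
end HS

set_option linter.unusedSectionVars false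
set_option linter.style.haveILetI false
set_option linter.deprecated false
set_option linter.unusedSimpArgs false

namespace HS
open NumberField IsDedekindDomain HeightOneSpectrum WithZero

section A7
universe u

/-- `L = K(√c)`, a quadratic extension. -/
structure QE (K L : Type u) [Field K] [NumberField K] [Field L] [NumberField L] [Algebra K L] (c : Kˣ) where
  r : L
  hr : r ^ 2 = algebraMap K L c
  nsq : ¬ IsSquare c
  span : ∀ x : L, ∃ a b : K, x = algebraMap K L a + algebraMap K L b * r
  σ : L ≃ₐ[K] L
  σr : σ r = - r

theorem exists_QE {K : Type u} [Field K] [NumberField K] (c : Kˣ) (hc : ¬ IsSquare c) :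
    ∃ (L : Type u) (_ : Field L) (_ : NumberField L) (_ : Algebra K L), Nonempty (QE K L c) := by
  haveI : Fact (∀ r : K, r ^ 2 ≠ (c : K) + 0 * r) := ⟨by
    intro r hr
    have hr0 : r ≠ 0 := by rintro rfl; simp at hr; exact c.ne_zero hr.symm
    exact hc ⟨Units.mk0 r hr0, by ext; simp; linear_combination -hr⟩⟩
  haveI : NumberField (QuadraticAlgebra K (c : K) 0) :=
    { to_charZero := inferInstance
      to_finiteDimensional := by
        haveI : IsScalarTower ℚ K (QuadraticAlgebra K (c : K) 0) := IsScalarTower.of_algebraMap_eq (by intro x; simp)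
        exact Module.Finite.trans K _ }
  refine ⟨QuadraticAlgebra K (c : K) 0, inferInstance, inferInstance, inferInstance, ⟨⟨⟨0, 1⟩, ?_, hc, ?_, ?_, ?_⟩⟩⟩
  · ext <;> simp [sq, QuadraticAlgebra.algebraMap_eq]
  · intro x; exact ⟨x.re, x.im, by ext <;> simp [QuadraticAlgebra.algebraMap_eq]⟩
  · exact AlgEquiv.ofRingEquiv (f := (starRingAut : RingAut (QuadraticAlgebra K (c : K) 0))) (by
      intro x; ext <;> simp [QuadraticAlgebra.algebraMap_eq])
  · ext <;> simp [QuadraticAlgebra.algebraMap_eq]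

variable {K L : Type u} [Field K] [NumberField K] [Field L] [NumberField L] [Algebra K L]

/-- The inclusion on units. -/
noncomputable abbrev iu (K L : Type u) [Field K] [Field L] [Algebra K L] : Kˣ →* Lˣ := Units.map (algebraMap K L).toMonoidHom

@[simp] lemma iu_coe (x : Kˣ) : ((iu K L x : Lˣ) : L) = algebraMap K L x := rfl

lemma iu_inj : Function.Injective (iu K L) := Units.map_injective (algebraMap K L).injective

/-- The prime below. -/
noncomputable def dn (P : Pr L) : Pr K := P.under (𝓞 K)

instance liesDn (P : Pr L) : P.asIdeal.LiesOver (dn P : Pr K).asIdeal := ⟨rfl⟩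

lemma exists_e (P : Pr L) : ∃ e : ℕ, 0 < e ∧ ∀ x : K, P.valuation L (algebraMap K L x) = (dn P : Pr K).valuation K x ^ e :=
  ⟨_, Nat.pos_of_ne_zero (Ideal.IsDedekindDomain.ramificationIdx'_ne_zero_of_liesOver P.asIdeal (dn P : Pr K).ne_bot),
    fun x => (valuation_liesOver L (dn P : Pr K) P x).symm⟩

/-- Ramification index. -/
noncomputable def re (K : Type u) [Field K] [NumberField K] [Algebra K L] (P : Pr L) : ℕ := (exists_e (K := K) P).choose

lemma re_pos (P : Pr L) : 0 < re K P := (exists_e (K := K) P).choose_spec.1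

lemma val_up (P : Pr L) (x : K) : P.valuation L (algebraMap K L x) = (dn P : Pr K).valuation K x ^ re K P :=
  (exists_e (K := K) P).choose_spec.2 x

lemma ord_up (P : Pr L) (x : Kˣ) : ord P (iu K L x) = re K P * ord (dn P) x := by
  have h := val_up P (x : K)
  rw [← iu_coe, val_eq, val_eq, ← exp_nsmul, exp_inj] at h
  simp at h; exact h

lemma ord_up_zero_iff (P : Pr L) (x : Kˣ) : ord P (iu K L x) = 0 ↔ ord (dn P) x = 0 := by
  rw [ord_up]
  have := re_pos (K := K) P
  constructor
  · intro h; rcases mul_eq_zero.1 h with h | h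
    · omega
    · exact h
  · intro h; rw [h, mul_zero]

lemma val_up_lt_one (P : Pr L) (x : K) : P.valuation L (algebraMap K L x) < 1 ↔ (dn P : Pr K).valuation K x < 1 := by
  rw [val_up, pow_lt_one_iff (re_pos P).ne']

lemma val_up_le_one (P : Pr L) (x : K) : P.valuation L (algebraMap K L x) ≤ 1 ↔ (dn P : Pr K).valuation K x ≤ 1 := by
  rw [val_up, pow_le_one_iff (re_pos P).ne']

lemma val_up_eq_one (P : Pr L) (x : K) : P.valuation L (algebraMap K L x) = 1 ↔ (dn P : Pr K).valuation K x = 1 := by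
  have h1 := val_up_lt_one P x
  have h2 := val_up_le_one P x
  constructor
  · intro h; exact le_antisymm (h2.1 h.le) (not_lt.1 fun h' => (h1.2 h').ne h)
  · intro h; exact le_antisymm (h2.2 h.le) (not_lt.1 fun h' => (h1.1 h').ne h)

lemma dn_surj (v : Pr K) : ∃ P : Pr L, dn P = v := by
  haveI := v.isMaximal
  obtain ⟨Q, hQ, hQv⟩ := Ideal.exists_maximal_ideal_liesOver_of_isIntegral (S := 𝓞 L) v.asIdeal
  refine ⟨⟨Q, hQ.isPrime, ?_⟩, ?_⟩
  · exact Ideal.ne_bot_of_liesOver_of_ne_bot v.ne_bot Q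
  · ext1; exact hQv.over.symm

lemma lsqF_up (P : Pr L) {x : Kˣ} (h : x ∈ lsqF (dn P)) : iu K L x ∈ lsqF P := by
  obtain ⟨y, hy⟩ := h
  refine ⟨iu K L y, ?_⟩
  have h1 := val_up P ((x : K) * (y : K) ^ 2 - 1)
  have h2 := val_up (K := K) P 4
  simp only [map_sub, map_mul, map_pow, map_one, map_ofNat] at h1 h2
  rw [iu_coe, iu_coe, h1, h2]
  exact pow_lt_pow_left₀ hy zero_le' (re_pos P).ne'

namespace QE
variable {c : Kˣ} (Q : QE K L c)
include Q

lemma r_ne : Q.r ≠ 0 := by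
  intro h
  have := Q.hr
  rw [h, zero_pow two_ne_zero] at this
  exact c.ne_zero ((map_eq_zero _).1 this.symm)

/-- The square root as a unit. -/
noncomputable def ru : Lˣ := Units.mk0 Q.r Q.r_ne

@[simp] lemma ru_coe : (Q.ru : L) = Q.r := rfl

lemma ru_sq : Q.ru ^ 2 = iu K L c := by ext; simp [Q.hr]

lemma fixed {x : L} (h : Q.σ x = x) : ∃ a : K, x = algebraMap K L a := by
  obtain ⟨a, b, rfl⟩ := Q.span x
  refine ⟨a, ?_⟩
  simp only [map_add, map_mul, AlgEquiv.commutes, Q.σr] at h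
  have h2 : (2 : L) * (algebraMap K L b * Q.r) = 0 := by linear_combination -h
  rw [(mul_eq_zero.1 h2).resolve_left two_ne_zero, add_zero]

@[simp] lemma σσ (x : L) : Q.σ (Q.σ x) = x := by
  obtain ⟨a, b, rfl⟩ := Q.span x
  simp [Q.σr]

/-- conjugation on units -/
noncomputable def su : Lˣ →* Lˣ := Units.map (Q.σ : L →* L)

@[simp] lemma su_coe (x : Lˣ) : ((Q.su x : Lˣ) : L) = Q.σ x := rfl

@[simp] lemma su_su (x : Lˣ) : Q.su (Q.su x) = x := by ext; simp

@[simp] lemma su_iu (x : Kˣ) : Q.su (iu K L x) = iu K L x := by ext; simp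

lemma su_ru : Q.su Q.ru = - Q.ru := by ext; simp [Q.σr]

lemma fixed_u {x : Lˣ} (h : Q.su x = x) : ∃ a : Kˣ, x = iu K L a := by
  obtain ⟨a, ha⟩ := Q.fixed (x := (x : L)) (by rw [← su_coe, h])
  have ha0 : a ≠ 0 := by rintro rfl; simp at ha
  exact ⟨Units.mk0 a ha0, by ext; simp [ha]⟩

/-- norm -/
lemma exists_nm (x : Lˣ) : ∃ a : Kˣ, x * Q.su x = iu K L a := Q.fixed_u (by rw [map_mul, su_su, mul_comm])

lemma nm_mem_normG {x : Lˣ} {a : Kˣ} (h : x * Q.su x = iu K L a) : a ∈ normG c := by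
  obtain ⟨y, z, hx⟩ := Q.span x
  refine ⟨y, z, ?_⟩
  apply (algebraMap K L).injective
  have := congrArg (Units.val) h
  push_cast at this
  rw [su_coe, hx] at this
  simp only [map_add, map_mul, AlgEquiv.commutes, Q.σr] at this
  simp only [map_sub, map_mul, map_pow]
  rw [← Q.hr, ← iu_coe, ← this]; ring

lemma exists_nm_of_normG {a : Kˣ} (h : a ∈ normG c) : ∃ x : Lˣ, x * Q.su x = iu K L a := by
  obtain ⟨y, z, h⟩ := h
  have h1 : (algebraMap K L y + algebraMap K L z * Q.r) * (algebraMap K L y - algebraMap K L z * Q.r) = algebraMap K L a := by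
    rw [h]; simp only [map_sub, map_mul, map_pow]
    rw [← Q.hr]; ring
  have h0 : (algebraMap K L y + algebraMap K L z * Q.r) ≠ 0 := by
    intro h0; rw [h0, zero_mul] at h1
    exact a.ne_zero ((map_eq_zero _).1 h1.symm)
  refine ⟨Units.mk0 _ h0, ?_⟩
  ext
  simp [Q.σr, ← h1, sub_eq_add_neg]

/-- The conjugate prime. -/
noncomputable def sg (P : Pr L) : Pr L :=
  HeightOneSpectrum.comap (RingOfIntegers.mapRingEquiv Q.σ.toRingEquiv : 𝓞 L →+* 𝓞 L)
    (RingOfIntegers.mapRingEquiv Q.σ.toRingEquiv).surjective P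

lemma val_sg (P : Pr L) (x : L) : (Q.sg P).valuation L x = P.valuation L (Q.σ x) := by
  have hpow : ∀ n : ℕ, (Q.sg P).asIdeal ^ n = (P.asIdeal ^ n).comap (RingOfIntegers.mapRingEquiv Q.σ.toRingEquiv) := by
    intro n
    change (P.asIdeal.comap (RingOfIntegers.mapRingEquiv Q.σ.toRingEquiv)) ^ n = _
    rw [← Ideal.map_symm, ← Ideal.map_symm, Ideal.map_pow]
  have hintv : ∀ y : 𝓞 L, (Q.sg P).intValuation y = P.intValuation (RingOfIntegers.mapRingEquiv Q.σ.toRingEquiv y) := by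
    intro y
    have key : ∀ n : ℕ, (Q.sg P).intValuation y ≤ exp (-(n : ℤ)) ↔
        P.intValuation (RingOfIntegers.mapRingEquiv Q.σ.toRingEquiv y) ≤ exp (-(n : ℤ)) := by
      intro n
      rw [intValuation_le_pow_iff_mem, intValuation_le_pow_iff_mem, hpow]; rfl
    rcases eq_or_ne y 0 with rfl | hy
    · simp
    have hy' : RingOfIntegers.mapRingEquiv Q.σ.toRingEquiv y ≠ 0 := by simpa using hy
    rw [intValuation_eq_exp_neg_multiplicity _ hy, intValuation_eq_exp_neg_multiplicity _ hy'] at key ⊢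
    apply le_antisymm
    · exact (key _).2 le_rfl
    · exact (key _).1 le_rfl
  obtain ⟨a, b, hb, rfl⟩ := IsFractionRing.div_surjective (A := 𝓞 L) x
  rw [map_div₀, map_div₀, map_div₀, valuation_of_algebraMap, valuation_of_algebraMap, hintv, hintv]
  rw [← valuation_of_algebraMap (K := L), ← valuation_of_algebraMap (K := L)]; rfl

lemma ord_sg (P : Pr L) (x : Lˣ) : ord (Q.sg P) x = ord P (Q.su x) := by
  have := Q.val_sg P x
  rw [← su_coe, val_eq, val_eq, exp_inj] at this
  omega

lemma pr_ext {P P' : Pr L} (h : ∀ x : L, P.valuation L x < 1 ↔ P'.valuation L x < 1) : P = P' := by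
  ext x
  have := h (algebraMap (𝓞 L) L x)
  rw [valuation_of_algebraMap, valuation_of_algebraMap] at this
  rwa [intValuation_lt_one_iff_mem, intValuation_lt_one_iff_mem] at this

@[simp] lemma sg_sg (P : Pr L) : Q.sg (Q.sg P) = P := Q.pr_ext (by intro x; rw [val_sg, val_sg, σσ])

lemma dn_sg (P : Pr L) : (dn (Q.sg P) : Pr K) = dn P := by
  ext x
  have h : ∀ R : Pr L, x ∈ (dn R : Pr K).asIdeal ↔ R.valuation L (algebraMap K L (algebraMap (𝓞 K) K x)) < 1 := by
    intro R
    rw [val_up_lt_one, valuation_of_algebraMap, intValuation_lt_one_iff_mem]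
  rw [h, h, val_sg, AlgEquiv.commutes]

lemma eq_or_sg {P P' : Pr L} (h : (dn P : Pr K) = dn P') : P' = P ∨ P' = Q.sg P := by
  classical
  by_contra hcon
  push Not at hcon
  obtain ⟨h1, h2⟩ := hcon
  have h3 : Q.sg P' ≠ P := fun h3 => h2 (by rw [← h3, sg_sg])
  have h4 : Q.sg P' ≠ Q.sg P := fun h4 => h1 (by rw [← Q.sg_sg P', h4, sg_sg])
  obtain ⟨z, hz, -⟩ := weak_approx ({P, Q.sg P, P', Q.sg P'} : Finset (Pr L))
    (fun R => if R = P ∨ R = Q.sg P then 0 else 1) (fun _ => 1) (by simp) (fun _ => 0) 1 one_pos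
  have z1 := hz P (by simp)
  have z3 := hz P' (by simp)
  have z2 := hz (Q.sg P) (by simp)
  have z4 := hz (Q.sg P') (by simp)
  simp only [true_or, or_true, if_true, sub_zero, h1, h2, h3, h4, or_self, if_false] at z1 z2 z3 z4
  have hone : ∀ R : Pr L, R.valuation L (z - 1) < 1 → R.valuation L z = 1 := by
    intro R hR
    have := val_one_add R hR
    rwa [add_sub_cancel] at this
  replace z3 := hone _ z3
  replace z4 := hone _ z4
  rw [val_sg] at z2 z4
  obtain ⟨a, ha⟩ := Q.fixed (x := z * Q.σ z) (by rw [map_mul, σσ, mul_comm])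
  have e1 : P.valuation L (algebraMap K L a) < 1 := by
    rw [← ha, map_mul]; exact mul_lt_one' z1 z2
  have e2 : P'.valuation L (algebraMap K L a) = 1 := by
    rw [← ha, map_mul, z3, z4, one_mul]
  rw [val_up_lt_one, h] at e1
  rw [val_up_eq_one] at e2
  exact e1.ne e2

end QE
end A7
end HS

set_option linter.unusedSectionVars false
set_option linter.style.haveILetI false
set_option linter.deprecated false
set_option linter.unusedSimpArgs false

namespace HS
open NumberField IsDedekindDomain HeightOneSpectrum WithZero

section B7
universe u
variable {K L : Type u} [Field K] [NumberField K] [Field L] [NumberField L] [Algebra K L]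
namespace QE
variable {c : Kˣ} (Q : QE K L c)
include Q

lemma lt_of_val_up_lt (P : Pr L) {x y : K} (h : P.valuation L (algebraMap K L x) < P.valuation L (algebraMap K L y)) :
    (dn P : Pr K).valuation K x < (dn P : Pr K).valuation K y := by
  rw [val_up, val_up] at h
  exact lt_of_pow_lt_pow_left₀ _ zero_le' h

lemma sg_ne_iff (P : Pr L) : Q.sg P ≠ P ↔ c ∈ lsqF (dn P) := by
  classical
  constructor
  · intro h
    have h4 : P.valuation L (4 : L) ≠ 0 := val4_ne P
    obtain ⟨z, hz, -⟩ := weak_approx ({P, Q.sg P} : Finset (Pr L))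
      (fun R => if R = P then 1 else 0) (fun _ => P.valuation L (4 : L)) (fun _ => h4) (fun _ => 0) 1 one_pos
    have z1 := hz P (by simp)
    have z2 := hz (Q.sg P) (by simp)
    simp only [h, if_true, if_false, sub_zero, val_sg] at z1 z2
    obtain ⟨b, hb⟩ := Q.fixed (x := (z - Q.σ z) / Q.r) (by
      rw [map_div₀, map_sub, σσ, Q.σr, div_neg, ← neg_div, neg_sub])
    rw [div_eq_iff Q.r_ne] at hb
    have d1 : P.valuation L ((z - Q.σ z) - 1) < P.valuation L (4 : L) := by
      have : (z - Q.σ z) - 1 = (z - 1) - Q.σ z := by ring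
      rw [this]; exact Valuation.map_sub_lt _ z1 z2
    have d2 : P.valuation L ((z - Q.σ z) + 1) ≤ 1 := by
      have : (z - Q.σ z) + 1 = ((z - Q.σ z) - 1) + (2 : ℕ) := by push_cast; ring
      rw [this]
      exact (Valuation.map_add _ _ _).trans (max_le (d1.le.trans (val_ofNat_le P 4)) (val_natCast_le P 2))
    have hb0 : b ≠ 0 := by
      rintro rfl
      rw [map_zero, zero_mul] at hb
      rw [hb, zero_sub, Valuation.map_neg, map_one] at d1
      exact (d1.trans_le (val_ofNat_le P 4)).false
    refine ⟨Units.mk0 b hb0, Q.lt_of_val_up_lt P ?_⟩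
    have : algebraMap K L ((c : K) * ((Units.mk0 b hb0 : Kˣ) : K) ^ 2 - 1) = ((z - Q.σ z) - 1) * ((z - Q.σ z) + 1) := by
      rw [hb, Units.val_mk0, map_sub, map_mul, map_pow, ← Q.hr, map_one]; ring
    rw [this, map_mul, map_ofNat]
    exact (mul_le_of_le_one_right' d2).trans_lt d1
  · rintro ⟨y, hy⟩ h
    set θ : L := (1 + Q.r * algebraMap K L y) / 2 with hθ
    have e1 : Q.σ θ = (1 - Q.r * algebraMap K L y) / 2 := by
      rw [hθ, map_div₀, map_ofNat]; simp [Q.σr, sub_eq_add_neg]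
    have e2 : θ * Q.σ θ = algebraMap K L (- ((c : K) * (y : K) ^ 2 - 1) / 4) := by
      rw [e1, hθ]; simp only [map_div₀, map_neg, map_sub, map_mul, map_pow, map_one, map_ofNat]
      rw [← Q.hr]; ring
    have e3 : P.valuation L (θ * Q.σ θ) < 1 := by
      rw [e2, val_up_lt_one, map_div₀, Valuation.map_neg, div_lt_one₀ (zero_lt_iff.2 (val4_ne _))]
      exact hy
    have e4 : P.valuation L (Q.σ θ) = P.valuation L θ := by rw [← val_sg, h]
    rw [map_mul, e4] at e3
    have e5 : P.valuation L θ < 1 := by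
      by_contra h'; push Not at h'
      exact absurd (one_le_mul h' h') (not_le.2 e3)
    have e6 : θ + Q.σ θ = 1 := by rw [e1, hθ]; ring
    have e7 := Valuation.map_add_lt _ e5 (e4 ▸ e5)
    rw [e6, map_one] at e7
    exact e7.false

lemma lt_one_le {x : ℤᵐ⁰} (h : x < 1) : x ≤ exp (-1) := by
  rw [← exp_zero] at h
  rcases eq_or_ne x 0 with rfl | hx
  · exact zero_le'
  · rw [← exp_log hx, exp_lt_exp] at h
    rw [← exp_log hx, exp_le_exp]; omega

lemma re_eq_one (P : Pr L) (h2 : OddP (dn P : Pr K)) (hc : ord (dn P) c = 0) : re K P = 1 := by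
  classical
  obtain ⟨π, hπ⟩ := exists_ord_eq_one P
  by_cases hs : Q.sg P = P
  · by_contra hre
    have hre2 : 2 ≤ re K P := by have := re_pos (K := K) P; omega
    have key : ∀ x : K, P.valuation L (algebraMap K L x) < 1 → P.valuation L (algebraMap K L x) ≤ exp (-2) := by
      intro x hx
      rw [val_up_lt_one] at hx
      rw [val_up]
      have hx' := Q.lt_one_le hx
      calc _ ≤ (exp (-1) : ℤᵐ⁰) ^ re K P := pow_le_pow_left' hx' _
        _ = exp (-(re K P : ℤ)) := by rw [← exp_nsmul]; simp
        _ ≤ _ := by rw [exp_le_exp]; omega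
    obtain ⟨a, b, hab⟩ := Q.span π
    have hP2 : P.valuation L (2 : L) = 1 := by
      have := (val_up_eq_one (K := K) P 2).2 h2
      rwa [map_ofNat] at this
    have hPr : P.valuation L Q.r = 1 := by
      rw [← ru_coe, val_eq_one_iff]
      have : ord P (Q.ru ^ 2) = 0 := by rw [ru_sq, ord_up, hc, mul_zero]
      rw [ord_pow] at this; simpa using this
    have hπ1 : P.valuation L (π : L) = exp (-1) := by rw [val_eq, hπ]
    have hlt : (exp (-1) : ℤᵐ⁰) < 1 := by rw [← exp_zero, exp_lt_exp]; omega
    have hσπ : P.valuation L (Q.σ π) = exp (-1) := by rw [← val_sg, hs, hπ1]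
    have hσ : Q.σ π = algebraMap K L a - algebraMap K L b * Q.r := by
      rw [hab]; simp [Q.σr, sub_eq_add_neg]
    have ha : P.valuation L (algebraMap K L a) < 1 := by
      have h := Valuation.map_add_lt _ (hπ1.trans_lt hlt) (hσπ.trans_lt hlt)
      have e : (π : L) + Q.σ π = 2 * algebraMap K L a := by rw [hσ, hab]; ring
      rwa [e, map_mul, hP2, one_mul] at h
    have hb : P.valuation L (algebraMap K L b) < 1 := by
      have h := Valuation.map_sub_lt _ (hπ1.trans_lt hlt) (hσπ.trans_lt hlt)
      have e : (π : L) - Q.σ π = 2 * (algebraMap K L b * Q.r) := by rw [hσ, hab]; ring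
      rwa [e, map_mul, hP2, one_mul, map_mul, hPr, mul_one] at h
    have : P.valuation L (π : L) ≤ exp (-2) := by
      rw [hab]
      refine (Valuation.map_add _ _ _).trans (max_le (key a ha) ?_)
      rw [map_mul, hPr, mul_one]; exact key b hb
    rw [hπ1, exp_le_exp] at this
    omega
  · obtain ⟨z, -, hz, -⟩ := exists_approx ({P, Q.sg P} : Finset (Pr L)) (fun p => if p = Sum.inr P then π else 1) ∅
      (fun _ => 0) (fun _ => 1) (by simp) (by simp)
    have z1 := (hz P (by simp)).2
    have z2 := (hz (Q.sg P) (by simp)).2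
    simp only [Sum.inr.injEq, hs, if_true, if_false, ord_one, ord_sg] at z1 z2
    obtain ⟨k, hk⟩ := Q.exists_nm z
    have := congrArg (ord P) hk
    rw [ord_mul, z1, z2, ord_up, hπ, add_zero] at this
    have h3 : (re K P : ℤ) ∣ 1 := ⟨_, this⟩
    exact_mod_cast Int.eq_one_of_dvd_one (by positivity) h3

lemma finrank_eq : Module.finrank K L = 2 := by
  have hr : ∀ k : K, algebraMap K L k ≠ Q.r := by
    intro k hk
    have h := Q.hr
    rw [← hk, ← map_pow] at h
    have h' := (algebraMap K L).injective h
    have hk0 : k ≠ 0 := by rintro rfl; simp at h'; exact c.ne_zero h'.symm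
    exact Q.nsq ⟨Units.mk0 k hk0, by ext; simp; rw [← h', sq]⟩
  let f : (K × K) →ₗ[K] L :=
    { toFun := fun p => algebraMap K L p.1 + algebraMap K L p.2 * Q.r
      map_add' := by intro p q; simp; ring
      map_smul' := by intro k p; simp [Algebra.smul_def]; ring }
  have hinj : Function.Injective f := by
    rw [← LinearMap.ker_eq_bot, LinearMap.ker_eq_bot']
    rintro ⟨a, b⟩ h
    change algebraMap K L a + algebraMap K L b * Q.r = 0 at h
    have hb : b = 0 := by
      by_contra hb
      refine hr (-a / b) ?_
      rw [map_div₀, div_eq_iff (by simpa using hb), map_neg]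
      linear_combination -h
    subst hb
    simp at h; simp [h]
  have hsurj : Function.Surjective f := by
    intro x; obtain ⟨a, b, h⟩ := Q.span x; exact ⟨(a, b), h.symm⟩
  have := (LinearEquiv.ofBijective f ⟨hinj, hsurj⟩).finrank_eq
  rw [← this]; simp

lemma isGalois : IsGalois K L := by
  haveI : FiniteDimensional K L := FiniteDimensional.of_finrank_pos (by rw [Q.finrank_eq]; norm_num)
  refine IsGalois.of_fixedField_eq_bot K L ?_
  rw [eq_bot_iff]
  intro x hx
  rw [IntermediateField.mem_bot]
  obtain ⟨a, ha⟩ := Q.fixed (x := x) (hx ⟨Q.σ, trivial⟩)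
  exact ⟨a, ha.symm⟩

end QE
end B7
end HS

set_option linter.unusedSectionVars false
set_option linter.style.haveILetI false
set_option linter.deprecated false
set_option linter.unusedSimpArgs false

namespace HS
open NumberField IsDedekindDomain HeightOneSpectrum WithZero

section C7
universe u
variable {K L : Type u} [Field K] [NumberField K] [Field L] [NumberField L] [Algebra K L]

lemma exists_plc {w : InfinitePlace K} (hw : w.IsReal) : ∃ φ : K →+* ℝ, plc φ = w := by
  refine ⟨InfinitePlace.embedding_of_isReal hw, ?_⟩
  rw [plc]
  conv_rhs => rw [← InfinitePlace.mk_embedding w]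
  congr 1
  ext x
  simp

lemma plc_comp (φ : L →+* ℝ) : plc (φ.comp (algebraMap K L)) = (plc φ).comap (algebraMap K L) := by
  rw [plc, plc, InfinitePlace.comap_mk]; rfl

lemma lsqI_up (W : InfinitePlace L) {x : Kˣ} (h : ∀ w : InfinitePlace K, x ∈ lsqI w) : iu K L x ∈ lsqI W := by
  intro φ _
  exact h _ (φ.comp (algebraMap K L)) rfl

namespace QE
variable {c : Kˣ} (Q : QE K L c)
include Q

lemma unram_iff (w : InfinitePlace K) : w.IsUnramifiedIn L ↔ c ∈ lsqI w := by
  haveI := Q.isGalois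
  obtain ⟨W, rfl⟩ := InfinitePlace.comap_surjective (K := L) (k := K) w
  change _ ↔ c ∈ lsqI (W.comap (algebraMap K L))
  change (W.comap (algebraMap K L)).IsUnramifiedIn L ↔ _
  rw [InfinitePlace.isUnramifiedIn_comap]
  constructor
  · intro h
    rw [InfinitePlace.isUnramified_iff] at h
    rcases h with h | h
    · obtain ⟨ψ, rfl⟩ := exists_plc h
      intro φ hφ
      rw [← plc_comp] at hφ
      rw [plc_inj hφ]
      have : (ψ.comp (algebraMap K L)) c = ψ Q.r ^ 2 := by rw [← map_pow, Q.hr]; rfl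
      rw [this]
      have : ψ Q.r ≠ 0 := by rw [map_ne_zero]; exact Q.r_ne
      positivity
    · rw [lsqI_complex _ h]; trivial
  · intro h
    by_contra hram
    obtain ⟨h1, h2⟩ := InfinitePlace.isRamified_iff.1 hram
    obtain ⟨φ, hφ⟩ := exists_plc h2
    have hpos := h φ hφ
    rw [← InfinitePlace.mk_embedding W, InfinitePlace.comap_mk, plc, InfinitePlace.mk_eq_iff] at hφ
    set ψ := W.embedding with hψ
    have hχ : ∀ x : K, ψ (algebraMap K L x) = (φ x : ℂ) := by
      intro x
      rcases hφ with h | h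
      · exact (congrArg (fun f => f x) h).symm
      · have := congrArg (fun f => f x) h
        simp [ComplexEmbedding.conjugate] at this
        exact this.symm
    have hr2 : ψ Q.r ^ 2 = (φ c : ℂ) := by rw [← map_pow, Q.hr, hχ]
    have hrr : (starRingEnd ℂ) (ψ Q.r) = ψ Q.r := by
      have hs : ((Real.sqrt (φ c) : ℝ) : ℂ) ^ 2 = (φ c : ℂ) := by
        rw [← Complex.ofReal_pow, Real.sq_sqrt hpos.le]
      rw [← hs] at hr2
      rcases sq_eq_sq_iff_eq_or_eq_neg.1 hr2 with h | h <;> rw [h] <;> simp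
    have hreal : ComplexEmbedding.IsReal ψ := by
      rw [ComplexEmbedding.isReal_iff]
      ext x
      obtain ⟨a, b, rfl⟩ := Q.span x
      rw [ComplexEmbedding.conjugate_coe_eq]
      simp only [map_add, map_mul, hχ, hrr, Complex.conj_ofReal]
    exact (InfinitePlace.not_isReal_iff_isComplex.2 h1) ⟨ψ, hreal, by rw [hψ, InfinitePlace.mk_embedding]⟩

open Classical in
lemma card_inf : Fintype.card (InfinitePlace L) = Fintype.card (InfinitePlace K) +
    (Finset.univ.filter fun w : InfinitePlace K => c ∈ lsqI w).card := by
  haveI := Q.isGalois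
  have h := InfinitePlace.card_eq_card_isUnramifiedIn K L
  rw [Q.finrank_eq] at h
  have e : (Finset.univ.filter fun w : InfinitePlace K => w.IsUnramifiedIn L) = (Finset.univ.filter fun w : InfinitePlace K => c ∈ lsqI w) := by
    ext w; simp [Q.unram_iff w]
  have h2 := Finset.card_add_card_compl (Finset.univ.filter fun w : InfinitePlace K => w.IsUnramifiedIn L)
  rw [h]
  rw [e] at h2 ⊢
  rw [← h2]; omega

open Classical in
/-- Primes above `S`. -/
noncomputable def up (S : Finset (Pr K)) : Finset (Pr L) :=
  S.biUnion fun v => {(dn_surj (L := L) v).choose, Q.sg (dn_surj (L := L) v).choose}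

@[simp] lemma mem_up {S : Finset (Pr K)} {P : Pr L} : P ∈ Q.up S ↔ dn P ∈ S := by
  classical
  rw [up, Finset.mem_biUnion]
  constructor
  · rintro ⟨v, hv, hP⟩
    have h := (dn_surj (L := L) v).choose_spec
    simp only [Finset.mem_insert, Finset.mem_singleton] at hP
    rcases hP with rfl | rfl
    · rwa [h]
    · rwa [dn_sg, h]
  · intro hP
    refine ⟨_, hP, ?_⟩
    simp only [Finset.mem_insert, Finset.mem_singleton]
    exact Q.eq_or_sg (dn_surj (L := L) (dn P)).choose_spec

open Classical in
lemma card_up (S : Finset (Pr K)) : (Q.up S).card = S.card + (S.filter fun v => c ∈ lsqF v).card := by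
  rw [up, Finset.card_biUnion]
  · rw [Finset.card_filter, Finset.card_eq_sum_ones, ← Finset.sum_add_distrib]
    refine Finset.sum_congr rfl fun v _ => ?_
    have h := (dn_surj (L := L) v).choose_spec
    have h1 := Q.sg_ne_iff (dn_surj (L := L) v).choose
    rw [h] at h1
    by_cases hc : c ∈ lsqF v
    · rw [if_pos hc, Finset.card_pair (Ne.symm (h1.2 hc))]
    · rw [if_neg hc]
      have : Q.sg (dn_surj (L := L) v).choose = (dn_surj (L := L) v).choose := by
        by_contra h2; exact hc (h1.1 h2)
      rw [this]; simp
  · intro v hv w hw hvw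
    refine Finset.disjoint_left.2 ?_
    intro P hP hP'
    simp only [Finset.mem_insert, Finset.mem_singleton] at hP hP'
    have h := (dn_surj (L := L) v).choose_spec
    have h' := (dn_surj (L := L) w).choose_spec
    apply hvw
    rw [← h, ← h']
    have e1 : (dn P : Pr K) = dn (dn_surj (L := L) v).choose := by rcases hP with rfl | rfl <;> simp [dn_sg]
    have e2 : (dn P : Pr K) = dn (dn_surj (L := L) w).choose := by rcases hP' with rfl | rfl <;> simp [dn_sg]
    rw [← e1, e2]

open Classical in
lemma card_PS_up (S : Finset (Pr K)) : (PS (Q.up S)).card = (PS S).card + ((PS S).filter fun p => c ∈ lsq p).card := by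
  rw [card_PS, card_PS, Q.card_inf, Q.card_up]
  have : ((PS S).filter fun p => c ∈ lsq p).card = (Finset.univ.filter fun w : InfinitePlace K => c ∈ lsqI w).card
      + (S.filter fun v => c ∈ lsqF v).card := by
    rw [← Finset.card_disjSum]
    congr 1
    ext p
    rcases p with w | v <;> simp [lsq_inl, lsq_inr]
  omega

lemma mem_US_up {S : Finset (Pr K)} {x : Kˣ} : iu K L x ∈ US (Q.up S) ↔ x ∈ US S := by
  rw [mem_US, mem_US]
  constructor
  · intro h v hv
    obtain ⟨P, rfl⟩ := dn_surj (L := L) v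
    exact (ord_up_zero_iff P x).1 (h P (by simpa using hv))
  · intro h P hP
    exact (ord_up_zero_iff P x).2 (h _ (by simpa using hP))

lemma su_mem {S : Finset (Pr K)} {x : Lˣ} (h : x ∈ US (Q.up S)) : Q.su x ∈ US (Q.up S) := by
  intro P hP
  rw [← ord_sg]
  refine h _ ?_
  simpa [dn_sg] using hP

end QE
end C7
end HS

set_option linter.unusedSectionVars false
set_option linter.style.haveILetI false
set_option linter.deprecated false
set_option linter.unusedSimpArgs false

namespace HS
open NumberField IsDedekindDomain HeightOneSpectrum WithZero

section A8
universe u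

lemma relIndex_map_of_ker {G H : Type*} [CommGroup G] [CommGroup H] (f : G →* H) {A U : Subgroup G} (hAU : A ≤ U)
    (h : ∀ x ∈ U, f x = 1 → x ∈ A) : (A.map f).relIndex (U.map f) = A.relIndex U := by
  rw [← Subgroup.relIndex_comap, ← Subgroup.inf_relIndex_right]
  congr 1
  ext x
  constructor
  · rintro ⟨⟨a, ha, hax⟩, hxU⟩
    have : x / a ∈ A := h _ (U.div_mem hxU (hAU ha)) (by rw [map_div, hax, div_self'])
    have := A.mul_mem this ha
    rwa [div_mul_cancel] at this
  · intro hx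
    exact ⟨⟨x, hx, rfl⟩, hAU hx⟩

lemma finrank_exact {G : Type*} [CommGroup G] (f : G →* G) (A U : Subgroup G)
    (hA : ∀ x, x ∈ A ↔ x ∈ U ∧ f x = 1) [Module.Finite ℤ (Additive U)] :
    Module.finrank ℤ (Additive (U.map f)) + Module.finrank ℤ (Additive A) = Module.finrank ℤ (Additive U) := by
  let p : U →* U.map f := f.subgroupMap U
  let i : A →* U := Subgroup.inclusion fun x hx => ((hA x).1 hx).1
  let P : Additive U →ₗ[ℤ] Additive (U.map f) := (MonoidHom.toAdditive p).toIntLinearMap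
  let I : Additive A →ₗ[ℤ] Additive U := (MonoidHom.toAdditive i).toIntLinearMap
  have hP : Function.Surjective P := f.subgroupMap_surjective U
  have hI : Function.Injective I := Subgroup.inclusion_injective fun x hx => ((hA x).1 hx).1
  have hr : LinearMap.range I = LinearMap.ker P := by
    ext x
    rw [LinearMap.mem_ker]
    constructor
    · rintro ⟨y, rfl⟩
      have h := ((hA _).1 (Additive.toMul y).2).2
      change p (i y.toMul) = 1
      ext; exact h
    · intro h
      have h' : p x.toMul = 1 := h
      have h2 : f (x.toMul : G) = 1 := congrArg Subtype.val h'
      exact ⟨Additive.ofMul ⟨x.toMul, (hA _).2 ⟨x.toMul.2, h2⟩⟩, rfl⟩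
  have h1 := Submodule.finrank_quotient_add_finrank (LinearMap.ker P)
  rw [(P.quotKerEquivOfSurjective hP).finrank_eq, ← hr, ← (LinearEquiv.ofInjective I hI).finrank_eq] at h1
  exact h1

variable {K L : Type u} [Field K] [NumberField K] [Field L] [NumberField L] [Algebra K L]

open Classical in
/-- places of `S ∪ ∞` where `c` is not a local square -/
noncomputable def nsp (S : Finset (Pr K)) (c : Kˣ) : Finset (Pl K) := (PS S).filter fun p => c ∉ lsq p

lemma mem_nsp {S : Finset (Pr K)} {c : Kˣ} {p : Pl K} : p ∈ nsp S c ↔ p ∈ PS S ∧ c ∉ lsq p := by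
  classical
  simp [nsp]

namespace QE
variable {c : Kˣ} (Q : QE K L c)
include Q

/-- norm hom -/
noncomputable def nh : Lˣ →* Lˣ := MonoidHom.id _ * Q.su
/-- twisted hom -/
noncomputable def ph : Lˣ →* Lˣ := MonoidHom.id _ / Q.su

@[simp] lemma nh_apply (x : Lˣ) : Q.nh x = x * Q.su x := rfl
@[simp] lemma ph_apply (x : Lˣ) : Q.ph x = x / Q.su x := rfl

lemma ph_ker {S : Finset (Pr K)} (x : Lˣ) : x ∈ (US S).map (iu K L) ↔ x ∈ US (Q.up S) ∧ Q.ph x = 1 := by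
  constructor
  · rintro ⟨y, hy, rfl⟩
    exact ⟨Q.mem_US_up.2 hy, by simp⟩
  · rintro ⟨h1, h2⟩
    rw [ph_apply, div_eq_one] at h2
    obtain ⟨a, rfl⟩ := Q.fixed_u h2.symm
    exact ⟨a, Q.mem_US_up.1 h1, rfl⟩

lemma hilbert90 {x : Lˣ} (h : x * Q.su x = 1) : ∃ y, x = Q.ph y := by
  by_cases hx : (1 : L) + x = 0
  · refine ⟨Q.ru, ?_⟩
    have : x = -1 := by ext; push_cast; linear_combination hx
    rw [this, ph_apply, su_ru, div_neg, div_self']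
  · refine ⟨Units.mk0 _ hx, ?_⟩
    rw [ph_apply, eq_div_iff_mul_eq']
    ext
    have := congrArg Units.val h
    push_cast at this ⊢
    rw [su_coe] at this ⊢
    rw [Units.val_mk0, map_add, map_one]
    linear_combination this

lemma nh_ker {S : Finset (Pr K)} (hS : Good S) (hd : dyad K ⊆ S) (hc : spp c ⊆ S) {x : Lˣ}
    (h1 : x ∈ US (Q.up S)) (h2 : Q.nh x = 1) : x ∈ (US (Q.up S)).map Q.ph := by
  classical
  obtain ⟨y, hy⟩ := Q.hilbert90 (x := x) h2
  have hsym : ∀ P, P ∉ Q.up S → ord (Q.sg P) y = ord P y := by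
    intro P hP
    have := h1 P hP
    rw [hy, ph_apply, ord_div] at this
    rw [ord_sg]; omega
  choose pr hpr using dn_surj (K := K) (L := L)
  obtain ⟨k, hk⟩ := hS.exists (fun v => ord (pr v) y) (by
    refine ((supp_finite y).image dn).subset ?_
    intro v hv
    exact ⟨pr v, hv, hpr v⟩)
  refine ⟨y / iu K L k, ?_, ?_⟩
  · intro P hP
    have hP' : (dn P : Pr K) ∉ S := by simpa using hP
    have hre := Q.re_eq_one P (oddP_iff.2 fun h => hP' (hd h)) (by
      by_contra h; exact hP' (hc (mem_spp.2 h)))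
    rw [ord_div, ord_up, hre, hk _ hP']
    have hP0 : pr (dn P) ∉ Q.up S := by simpa [hpr] using hP'
    have : ord P y = ord (pr (dn P)) y := by
      rcases Q.eq_or_sg (hpr (dn P)) with h | h
      · exact congrArg (fun R => ord R y) h
      · rw [← hsym _ hP0, ← h]
    simp [this]
  · rw [map_div, hy]; simp

/-- Norms of `S`-units -/
noncomputable def NU (S : Finset (Pr K)) : Subgroup Kˣ := ((US (Q.up S)).map Q.nh).comap (iu K L)

lemma mem_NU {S : Finset (Pr K)} {a : Kˣ} : a ∈ Q.NU S ↔ ∃ x ∈ US (Q.up S), x * Q.su x = iu K L a := by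
  rw [NU, Subgroup.mem_comap, Subgroup.mem_map]; rfl

lemma NU_le_US (S : Finset (Pr K)) : Q.NU S ≤ US S := by
  intro a ha
  obtain ⟨x, hx, h⟩ := Q.mem_NU.1 ha
  rw [← Q.mem_US_up, ← h]
  exact mul_mem hx (Q.su_mem hx)

lemma NU_le_normG (S : Finset (Pr K)) : Q.NU S ≤ normG c := by
  intro a ha
  obtain ⟨x, hx, h⟩ := Q.mem_NU.1 ha
  exact Q.nm_mem_normG h

lemma normG_le_NU {S : Finset (Pr K)} (hS : Good (Q.up S)) : US S ⊓ normG c ≤ Q.NU S := by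
  rintro a ⟨ha, ha'⟩
  obtain ⟨x, hx⟩ := Q.exists_nm_of_normG ha'
  obtain ⟨z, hz⟩ := hS.exists (fun P => max (- ord P x) 0) ((supp_finite x).subset (by
    intro P hP h0
    simp [h0] at hP))
  refine Q.mem_NU.2 ⟨x * (z / Q.su z), ?_, ?_⟩
  · intro P hP
    have hP' : Q.sg P ∉ Q.up S := by simpa [dn_sg] using hP
    have h0 : ord P (iu K L a) = 0 := (Q.mem_US_up.2 ha) P hP
    rw [← hx, ord_mul] at h0
    rw [ord_mul, ord_div, ← ord_sg, hz P hP, hz _ hP', ord_sg]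
    rcases le_total (ord P x) 0 with h | h
    · rw [max_eq_left (by omega), max_eq_right (by omega)]; omega
    · rw [max_eq_right (by omega), max_eq_left (by omega)]; omega
  · rw [map_mul, map_div, su_su, ← hx]
    rw [mul_mul_mul_comm, div_mul_div_cancel, div_self', mul_one]

theorem FI {S : Finset (Pr K)} (hS : Good S) (hd : dyad K ⊆ S) (hc : spp c ⊆ S) :
    (Q.NU S).relIndex (US S) * 2 = 2 ^ (nsp S c).card := by
  classical
  set U := US (Q.up S) with hU
  set UK := (US S).map (iu K L) with hUK
  set Z := U.map Q.ph with hZ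
  have hUKU : UK ≤ U := by rintro _ ⟨y, hy, rfl⟩; exact Q.mem_US_up.2 hy
  have hZU : Z ≤ U := by rintro _ ⟨y, hy, rfl⟩; exact U.div_mem hy (Q.su_mem hy)
  have hsZ : ∀ z ∈ Z, Q.su z = z⁻¹ := by rintro _ ⟨y, hy, rfl⟩; simp
  have hle : UK ⊔ Z ≤ U := sup_le hUKU hZU
  have m1 : (UK ⊔ Z).map Q.ph = Sq Z := by
    ext x
    rw [mem_Sq]
    constructor
    · rintro ⟨y, hy, rfl⟩
      obtain ⟨k, hk, z, hz, rfl⟩ := Subgroup.mem_sup.1 hy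
      obtain ⟨k, hk, rfl⟩ := hk
      exact ⟨z, hz, by simp [hsZ z hz, sq]⟩
    · rintro ⟨z, hz, rfl⟩
      exact ⟨z, Subgroup.mem_sup_right hz, by simp [hsZ z hz, sq]⟩
  have m2 : (UK ⊔ Z).map Q.nh = Sq UK := by
    ext x
    rw [mem_Sq]
    constructor
    · rintro ⟨y, hy, rfl⟩
      obtain ⟨k, hk, z, hz, rfl⟩ := Subgroup.mem_sup.1 hy
      obtain ⟨k, hk, rfl⟩ := hk
      refine ⟨iu K L k, ⟨k, hk, rfl⟩, ?_⟩
      rw [nh_apply, map_mul, hsZ z hz, su_iu, mul_mul_mul_comm, mul_inv_cancel, mul_one, sq]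
    · rintro ⟨k, ⟨k, hk, rfl⟩, rfl⟩
      refine ⟨iu K L k, Subgroup.mem_sup_left ⟨k, hk, rfl⟩, ?_⟩
      rw [nh_apply, su_iu, sq]
  have i1 : (Sq Z).relIndex Z = (UK ⊔ Z).relIndex U := by
    rw [← m1]
    exact relIndex_map_of_ker Q.ph hle fun x hx h => Subgroup.mem_sup_left ((Q.ph_ker x).2 ⟨hx, h⟩)
  have i2 : (Sq UK).relIndex (U.map Q.nh) = (UK ⊔ Z).relIndex U := by
    rw [← m2]
    exact relIndex_map_of_ker Q.nh hle fun x hx h => Subgroup.mem_sup_right (Q.nh_ker hS hd hc hx h)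
  have hNle : U.map Q.nh ≤ UK := by
    rintro _ ⟨x, hx, rfl⟩
    obtain ⟨a, ha⟩ := Q.exists_nm x
    refine ⟨a, ?_, ha.symm⟩
    rw [← nh_apply] at ha
    exact Q.mem_US_up.1 (ha ▸ mul_mem hx (Q.su_mem hx))
  have hSqle : Sq UK ≤ U.map Q.nh := by rw [← m2]; exact Subgroup.map_mono hle
  have i3 := Subgroup.relIndex_mul_relIndex (Sq UK) (U.map Q.nh) UK hSqle hNle
  have i4 : (Sq UK).relIndex UK = 2 ^ (PS S).card := by
    rw [← relIndex_Sq_US S]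
    have : Sq UK = (Sq (US S)).map (iu K L) := by
      rw [Sq, Sq, hUK, Subgroup.map_map, Subgroup.map_map]; congr 1
      ext; simp
    rw [this, hUK]
    exact relIndex_map_of_ker _ (Sq_le _) fun x _ h => by
      rw [← map_one (iu K L)] at h; rw [iu_inj h]; exact one_mem _
  have i5 : (Q.NU S).relIndex (US S) = (U.map Q.nh).relIndex UK := Subgroup.relIndex_comap _ _ _
  -- the rank of Z
  have hfr := finrank_exact Q.ph UK U (fun x => Q.ph_ker x)
  have hfK : Module.finrank ℤ (Additive UK) = Module.finrank ℤ (Additive (US S)) := by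
    have e : US S ≃* UK := (US S).equivMapOfInjective (iu K L) iu_inj
    exact (AddEquiv.toIntLinearEquiv (MulEquiv.toAdditive e)).finrank_eq.symm
  have r1 := finrank_US S
  have r2 := finrank_US (Q.up S)
  haveI : Module.Finite ℤ (Additive Z) := by
    refine Module.Finite.of_surjective ((MonoidHom.toAdditive (Q.ph.subgroupMap U)).toIntLinearMap) ?_
    exact Q.ph.subgroupMap_surjective U
  have hneg : (-1 : Lˣ) ∈ Z := by
    refine ⟨Q.ru, ?_, ?_⟩
    · intro P hP
      have : ord P (Q.ru ^ 2) = 0 := by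
        rw [ru_sq]
        exact (Q.mem_US_up.2 (mem_US_iff_spp.2 hc)) P hP
      rw [ord_pow] at this; simpa using this
    · rw [ph_apply, su_ru, div_neg, div_self']
  have i6 := relIndex_Sq (F := L) two_ne_zero Z hneg
  have hcard := Q.card_PS_up S
  have hcard2 : (nsp S c).card + ((PS S).filter fun p => c ∈ lsq p).card = (PS S).card := by
    rw [nsp, add_comm]; exact Finset.card_filter_add_card_filter_not _
  rw [i2, ← i1, i6, i4, ← i5] at i3
  have hexp : Module.finrank ℤ (Additive Z) = ((PS S).filter fun p => c ∈ lsq p).card := by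
    rw [hfK] at hfr
    rw [← hU] at r2
    change Module.finrank ℤ (Additive Z) + _ = _ at hfr
    omega
  rw [hexp, ← hcard2, pow_succ, pow_add _ (nsp S c).card] at i3
  have h2 : 0 < 2 ^ ((PS S).filter fun p => c ∈ lsq p).card := by positivity
  apply Nat.eq_of_mul_eq_mul_left h2
  rw [mul_comm _ (2 ^ (nsp S c).card), ← i3]; ring

end QE

/-- norms of `S`-units, packaged without the extension -/
theorem FI' {S : Finset (Pr K)} {c : Kˣ} (hS : Good S) (hd : dyad K ⊆ S) (hc : spp c ⊆ S) (hsq : ¬ IsSquare c) :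
    ∃ N : Subgroup Kˣ, N ≤ US S ∧ N ≤ normG c ∧ N.relIndex (US S) * 2 = 2 ^ (nsp S c).card := by
  obtain ⟨L, _, _, _, ⟨Q⟩⟩ := exists_QE c hsq
  exact ⟨Q.NU S, Q.NU_le_US S, Q.NU_le_normG S, Q.FI hS hd hc⟩

theorem FI'' (c : Kˣ) (hsq : ¬ IsSquare c) : ∃ S0 : Finset (Pr K), ∀ S, S0 ⊆ S → 
    (US S ⊓ normG c).relIndex (US S) * 2 = 2 ^ (nsp S c).card := by
  classical
  obtain ⟨L, _, _, _, ⟨Q⟩⟩ := exists_QE c hsq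
  obtain ⟨S1, h1⟩ := exists_good (K := L)
  obtain ⟨S2, h2⟩ := exists_good (K := K)
  refine ⟨S2 ∪ dyad K ∪ spp c ∪ S1.image dn, fun S hS => ?_⟩
  have e : US S ⊓ normG c = Q.NU S := by
    apply le_antisymm
    · refine Q.normG_le_NU (h1.mono ?_)
      intro P hP
      rw [Q.mem_up]
      exact hS (by simp only [Finset.mem_union, Finset.mem_image]; exact Or.inr ⟨P, hP, rfl⟩)
    · exact le_inf (Q.NU_le_US S) (Q.NU_le_normG S)
  rw [e]
  refine Q.FI (h2.mono ?_) ?_ ?_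
  · intro v hv; exact hS (by simp [hv])
  · intro v hv; exact hS (by simp [hv])
  · intro v hv; exact hS (by simp only [Finset.mem_union]; exact Or.inl (Or.inr hv))

end A8
end HS

set_option linter.unusedSectionVars false
set_option linter.style.haveILetI false
set_option linter.deprecated false
set_option linter.unusedSimpArgs false

namespace HS
open NumberField IsDedekindDomain HeightOneSpectrum WithZero

section A9
universe u
variable {K : Type u} [Field K] [NumberField K]

lemma DL {a e : Kˣ} (ha : ¬ IsSquare a) (he : ¬ IsSquare e) (hae : ¬ IsSquare (a * e)) :
    ∃ p : Pl K, a ∉ lsq p ∧ e ∉ lsq p := by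
  classical
  by_contra hcon
  push Not at hcon
  obtain ⟨S1, h1⟩ := FI'' a ha
  obtain ⟨S2, h2⟩ := FI'' e he
  obtain ⟨S3, h3⟩ := FI'' (a * e) hae
  set S := S1 ∪ S2 ∪ S3 with hS
  replace h1 := h1 S (fun v hv => by simp [hS, hv])
  replace h2 := h2 S (fun v hv => by simp [hS, hv])
  replace h3 := h3 S (fun v hv => by simp [hS, hv])
  have hns : nsp S (a * e) = nsp S a ∪ nsp S e := by
    ext p
    rw [Finset.mem_union, mem_nsp, mem_nsp, mem_nsp]
    have hc := hcon p
    have : a * e ∉ lsq p ↔ a ∉ lsq p ∨ e ∉ lsq p := by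
      by_cases h : a ∈ lsq p
      · rw [(lsq p).mul_mem_cancel_left h]; simp [h]
      · rw [(lsq p).mul_mem_cancel_right (hc h)]; simp [h]
    tauto
  have hdis : Disjoint (nsp S a) (nsp S e) := by
    rw [Finset.disjoint_left]
    intro p hp hp'
    exact (mem_nsp.1 hp').2 (hcon p (mem_nsp.1 hp).2)
  rw [hns, Finset.card_union_of_disjoint hdis, pow_add, ← h1, ← h2] at h3
  have hle : (US S ⊓ normG a) ⊓ (US S ⊓ normG e) ≤ US S ⊓ normG (a * e) := by
    rintro x ⟨⟨hx, hx1⟩, ⟨-, hx2⟩⟩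
    exact ⟨hx, normG_inf hae hx1 hx2⟩
  have hn1 : (US S ⊓ normG a).relIndex (US S) ≠ 0 := by intro h; rw [h, zero_mul] at h1; exact (pow_ne_zero _ two_ne_zero) h1.symm
  have hn2 : (US S ⊓ normG e).relIndex (US S) ≠ 0 := by intro h; rw [h, zero_mul] at h2; exact (pow_ne_zero _ two_ne_zero) h2.symm
  have k1 := Subgroup.relIndex_inf_le (H := US S ⊓ normG a) (K := US S ⊓ normG e) (L := US S)
  have k2 := Subgroup.relIndex_le_of_le_left (L := US S) hle (Subgroup.relIndex_inf_ne_zero hn1 hn2)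
  have k3 := k2.trans k1
  have : 0 < (US S ⊓ normG a).relIndex (US S) * (US S ⊓ normG e).relIndex (US S) := by positivity
  nlinarith

lemma not_sq_of_odd {x : Kˣ} (v : Pr K) (h : ¬ Even (ord v x)) : ¬ IsSquare x := by
  rintro ⟨y, rfl⟩
  rw [ord_mul] at h; exact h ⟨_, rfl⟩

lemma NS {a : Kˣ} (ha : ¬ IsSquare a) (S : Finset (Pr K)) : ∃ v, v ∉ S ∧ a ∉ lsqF v := by
  classical
  set S' := S ∪ spp a with hS'
  obtain ⟨v0, hv0⟩ := exists_prime_notMem S'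
  by_cases hav : a ∈ lsqF v0
  swap
  · exact ⟨v0, fun h => hv0 (by simp [hS', h]), hav⟩
  obtain ⟨π, hπ⟩ := exists_ord_eq_one v0
  obtain ⟨e, he1, he2, -⟩ := exists_approx (insert v0 S') (fun p => if p = Sum.inr v0 then π else 1) ∅
      (fun _ => 0) (fun _ => 1) (by simp) (by simp)
  have h0 : ord v0 a = 0 := by
    by_contra h; exact hv0 (by simp [hS', h])
  have he0 : ord v0 e = 1 := by
    have := (he2 v0 (by simp)).2; simpa [hπ] using this
  obtain ⟨p, hp1, hp2⟩ := DL ha (not_sq_of_odd v0 (x := e) (by rw [he0]; decide))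
    (not_sq_of_odd v0 (x := a * e) (by rw [ord_mul, he0, h0]; decide))
  rcases p with w | v
  · exact absurd (by simpa [lsq_inl] using he1 w) hp2
  · refine ⟨v, fun hv => ?_, hp1⟩
    have hvne : v ≠ v0 := by rintro rfl; exact hp1 hav
    have := (he2 v (by simp [hS', hv])).1
    simp [hvne] at this
    exact hp2 this

lemma unit_mul_lsqF {v : Pr K} (h : OddP v) {a c : Kˣ} (ha : ord v a = 0) (hc : ord v c = 0)
    (ha' : a ∉ lsqF v) (hc' : c ∉ lsqF v) : a * c ∈ lsqF v := by
  have := relIndex_odd h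
  obtain ⟨b, hb, hb'⟩ := Subgroup.relIndex_eq_two_iff.1 this
  have h1 := hb' a (mem_Vm0.2 ha)
  have h2 := hb' c (mem_Vm0.2 hc)
  have k1 : a * b ∈ lsqF v := by rcases h1 with h | h; exacts [h.1, absurd h.1 ha']
  have k2 : c * b ∈ lsqF v := by rcases h2 with h | h; exacts [h.1, absurd h.1 hc']
  have := (lsqF v).div_mem ((lsqF v).mul_mem k1 k2) (sq_mem_lsqF v b)
  rwa [mul_mul_mul_comm, ← sq b, mul_div_cancel_right] at this

lemma NS2 {a c : Kˣ} (ha : ¬ IsSquare a) (hc : ¬ IsSquare c) (hac : ¬ IsSquare (a * c)) (S : Finset (Pr K)) :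
    ∃ v, v ∉ S ∧ c ∈ lsqF v ∧ a ∉ lsqF v := by
  classical
  obtain ⟨L, _, _, _, ⟨Q⟩⟩ := exists_QE c hc
  have haL : ¬ IsSquare (iu K L a) := by
    rintro ⟨y, hy⟩
    obtain ⟨k, l, hkl⟩ := Q.span y
    have h := congrArg Units.val hy
    rw [Units.val_mul, hkl, iu_coe] at h
    have hs : (y : L) * Q.σ y = algebraMap K L a ∨ (y : L) * Q.σ y = - algebraMap K L a := by
      have : (Q.σ y) * Q.σ y = y * y := by
        have h2 := congrArg Units.val hy
        rw [Units.val_mul, iu_coe] at h2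
        rw [← map_mul, ← h2, AlgEquiv.commutes]
      rcases mul_self_eq_mul_self_iff.1 this with h3 | h3
      · left; rw [h3, hkl, h]
      · right; rw [h3, h, ← hkl]; ring
    rw [hkl] at hs
    simp only [map_add, map_mul, AlgEquiv.commutes, Q.σr] at hs
    have hr := Q.hr
    rcases hs with hs | hs
    · have e1 : (2 * algebraMap K L l * Q.r) * (algebraMap K L k + algebraMap K L l * Q.r) = 0 := by
        linear_combination -h - hs
      rw [← hkl] at e1
      have e2 : l = 0 := by
        have := (mul_eq_zero.1 e1).resolve_right y.ne_zero
        have := (mul_eq_zero.1 this).resolve_right Q.r_ne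
        simpa using this
      subst e2
      simp only [map_zero, zero_mul, add_zero, ← map_mul] at h
      have h' := (algebraMap K L).injective h
      have hk0 : k ≠ 0 := by rintro rfl; simp at h'
      exact ha ⟨Units.mk0 k hk0, by ext; simpa using h'⟩
    · have e1 : (2 * algebraMap K L k) * (algebraMap K L k + algebraMap K L l * Q.r) = 0 := by
        linear_combination -h + hs
      rw [← hkl] at e1
      have e2 : k = 0 := by
        have := (mul_eq_zero.1 e1).resolve_right y.ne_zero
        simpa using this
      subst e2
      have h'' : algebraMap K L (a * c) = algebraMap K L ((l * c) * (l * c)) := by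
        simp only [map_mul]
        rw [h, ← hr, map_zero]; ring
      have h' := (algebraMap K L).injective h''
      have hk0 : l * c ≠ 0 := by
        intro h0; rw [h0] at h'; simp at h'
      exact hac ⟨Units.mk0 _ hk0, by ext; simpa using h'⟩
  obtain ⟨P, hP, hPa⟩ := NS haL (Q.up (S ∪ dyad K ∪ spp a ∪ spp c))
  have hv : dn P ∉ S ∪ dyad K ∪ spp a ∪ spp c := by simpa only [Q.mem_up] using hP
  simp only [Finset.mem_union, not_or] at hv
  obtain ⟨⟨⟨hv1, hv2⟩, hv3⟩, hv4⟩ := hv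
  rw [mem_spp, not_not] at hv3 hv4
  have h1 : a ∉ lsqF (dn P) := fun h => hPa (lsqF_up P h)
  refine ⟨dn P, hv1, ?_, h1⟩
  by_contra h2
  have h3 := lsqF_up P (unit_mul_lsqF (oddP_iff.2 hv2) hv3 hv4 h1 h2)
  rw [map_mul, ← Q.ru_sq] at h3
  exact hPa (((lsqF P).mul_mem_cancel_right (sq_mem_lsqF P _)).1 h3)

end A9
end HS

set_option linter.unusedSectionVars false
set_option linter.style.haveILetI false
set_option linter.deprecated false
set_option linter.unusedSimpArgs false

namespace HS
open NumberField IsDedekindDomain HeightOneSpectrum WithZero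

section A10
universe u
variable {K : Type u} [Field K] [NumberField K]

/-- local squares at all of `R` -/
noncomputable def LQ (R : Finset (Pr K)) : Subgroup Kˣ := ⨅ q ∈ R, lsqF q

lemma mem_LQ {R : Finset (Pr K)} {x : Kˣ} : x ∈ LQ R ↔ ∀ q ∈ R, x ∈ lsqF q := by
  simp [LQ, Subgroup.mem_iInf]

lemma LQ_union [DecidableEq (Pr K)] (R R' : Finset (Pr K)) : LQ (R ∪ R') = LQ R ⊓ LQ R' := by
  ext x
  rw [Subgroup.mem_inf, mem_LQ, mem_LQ, mem_LQ]
  constructor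
  · intro h; exact ⟨fun q hq => h q (by simp [hq]), fun q hq => h q (by simp [hq])⟩
  · rintro ⟨h1, h2⟩ q hq
    rcases Finset.mem_union.1 hq with h | h
    exacts [h1 q h, h2 q h]

lemma relIndex_lsqF_US {S : Finset (Pr K)} (hd : dyad K ⊆ S) {q : Pr K} (hq : q ∉ S) :
    (lsqF q).relIndex (US S) ∣ 2 := by
  rw [Subgroup.relIndex_dvd_two_iff]
  have ho : OddP q := oddP_iff.2 fun h => hq (hd h)
  by_cases h : ∃ a ∈ US S, a ∉ lsqF q
  · obtain ⟨a, ha, ha'⟩ := h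
    refine ⟨a, ha, fun b hb => ?_⟩
    by_cases hb' : b ∈ lsqF q
    · exact Or.inr hb'
    · exact Or.inl (unit_mul_lsqF ho (hb q hq) (ha q hq) hb' ha')
  · push Not at h
    exact ⟨1, one_mem _, fun b hb => Or.inr (h b hb)⟩

lemma relIndex_LQ {S : Finset (Pr K)} (hd : dyad K ⊆ S) (R : Finset (Pr K)) (hR : Disjoint R S) :
    (LQ R).relIndex (US S) ≤ 2 ^ R.card ∧ (LQ R).relIndex (US S) ≠ 0 := by
  classical
  induction R using Finset.induction_on with
  | empty => simp [LQ]
  | insert q R hq ih =>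
    rw [Finset.disjoint_insert_left] at hR
    obtain ⟨i1, i2⟩ := ih hR.2
    have h := relIndex_lsqF_US hd hR.1
    have e : LQ (insert q R) = lsqF q ⊓ LQ R := by
      rw [Finset.insert_eq, LQ_union]; congr 1; simp [LQ]
    have h0 : (lsqF q).relIndex (US S) ≠ 0 := fun h0 => by rw [h0] at h; norm_num at h
    rw [e, Finset.card_insert_of_notMem hq, pow_succ, mul_comm]
    exact ⟨Subgroup.relIndex_inf_le.trans (Nat.mul_le_mul (Nat.le_of_dvd two_pos h) i1),
      Subgroup.relIndex_inf_ne_zero h0 i2⟩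

lemma sq_mem_US {S : Finset (Pr K)} {x y : Kˣ} (h : x ∈ US S) (hy : x = y ^ 2) : y ∈ US S := by
  intro v hv
  have := h v hv
  rw [hy, ord_pow] at this; simpa using this

lemma greedy {S : Finset (Pr K)} {c : Kˣ} (hd : dyad K ⊆ S) (hc : spp c ⊆ S) (hsq : ¬ IsSquare c) (k : ℕ)
    (hk : k + 1 ≤ (PS S).card) : ∃ T : Finset (Pr K), T.card = k ∧ Disjoint T S ∧ (∀ q ∈ T, c ∈ lsqF q) ∧
      (LQ T).relIndex (US S) = 2 ^ k := by
  classical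
  induction k with
  | zero => exact ⟨∅, by simp [LQ]⟩
  | succ k ih =>
    obtain ⟨T, h1, h2, h3, h4⟩ := ih (by omega)
    have hcU : c ∈ US S := mem_US_iff_spp.2 hc
    have hex : ∃ a ∈ US S ⊓ LQ T, ¬ IsSquare a ∧ ¬ IsSquare (a * c) := by
      by_contra hcon
      push Not at hcon
      have hle : Sq (US S) ≤ US S ⊓ LQ T := by
        intro x hx
        obtain ⟨y, hy, rfl⟩ := mem_Sq.1 hx
        exact ⟨(US S).pow_mem hy 2, mem_LQ.2 fun q _ => sq_mem_lsqF q y⟩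
      have i1 := Subgroup.relIndex_mul_relIndex (Sq (US S)) (US S ⊓ LQ T) (US S) hle inf_le_left
      have i2 : (Sq (US S)).relIndex (US S ⊓ LQ T) ∣ 2 := by
        rw [Subgroup.relIndex_dvd_two_iff]
        refine ⟨c, ⟨hcU, mem_LQ.2 h3⟩, ?_⟩
        intro b hb
        by_cases hb' : IsSquare b
        · right
          obtain ⟨y, hy⟩ := hb'
          rw [← sq] at hy
          exact mem_Sq.2 ⟨y, sq_mem_US hb.1 hy, hy.symm⟩
        · left
          obtain ⟨y, hy⟩ := hcon b hb hb'
          rw [← sq] at hy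
          exact mem_Sq.2 ⟨y, sq_mem_US ((US S).mul_mem hb.1 hcU) hy, hy.symm⟩
      rw [relIndex_Sq_US, Subgroup.inf_relIndex_left, h4] at i1
      have i3 := Nat.le_of_dvd two_pos i2
      have i4 : 2 ^ (k + 1 + 1) ≤ 2 ^ (PS S).card := Nat.pow_le_pow_right two_pos hk
      rw [← i1, pow_succ 2 (k + 1), pow_succ 2 k] at i4
      have : 0 < 2 ^ k := by positivity
      nlinarith
    obtain ⟨a, ⟨haU, haT⟩, ha1, ha2⟩ := hex
    obtain ⟨q, hq1, hq2, hq3⟩ := NS2 ha1 hsq ha2 (S ∪ T)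
    rw [Finset.mem_union, not_or] at hq1
    refine ⟨insert q T, ?_, ?_, ?_, ?_⟩
    · rw [Finset.card_insert_of_notMem hq1.2, h1]
    · rw [Finset.disjoint_insert_left]; exact ⟨hq1.1, h2⟩
    · intro p hp; rcases Finset.mem_insert.1 hp with rfl | h
      exacts [hq2, h3 p h]
    · have e : LQ (insert q T) = lsqF q ⊓ LQ T := by
        rw [Finset.insert_eq, LQ_union]; congr 1; simp [LQ]
      have ho : OddP q := oddP_iff.2 fun h => hq1.1 (hd h)
      have i2 : (LQ (insert q T) ⊓ US S).relIndex (LQ T ⊓ US S) = 2 := by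
        rw [Subgroup.relIndex_eq_two_iff_exists_notMem_and]
        refine ⟨a, ⟨haT, haU⟩, fun h => hq3 (by rw [e] at h; exact h.1.1), ?_⟩
        intro b hb
        by_cases hb' : b ∈ lsqF q
        · right; rw [e]; exact ⟨⟨hb', hb.1⟩, hb.2⟩
        · left; rw [e]
          exact ⟨⟨unit_mul_lsqF ho (hb.2 q hq1.1) (haU q hq1.1) hb' hq3, mul_mem hb.1 haT⟩, mul_mem hb.2 haU⟩
      have i1 := Subgroup.relIndex_mul_relIndex (LQ (insert q T) ⊓ US S) (LQ T ⊓ US S) (US S) (by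
        rw [e]; exact inf_le_inf_right _ inf_le_right) inf_le_right
      rw [i2, Subgroup.inf_relIndex_right, Subgroup.inf_relIndex_right, h4] at i1
      rw [← i1, pow_succ, mul_comm]

/-- even order -/
noncomputable def Ev (v : Pr K) : Subgroup Kˣ where
  carrier := {x | Even (ord v x)}
  one_mem' := by simp
  mul_mem' := by intro x y hx hy; simpa using Even.add hx hy
  inv_mem' := by intro x hx; simpa using hx

lemma mem_Ev {v : Pr K} {x : Kˣ} : x ∈ Ev v ↔ Even (ord v x) := Iff.rfl

lemma index_Ev (v : Pr K) : (Ev v).index = 2 := by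
  rw [Subgroup.index_eq_two_iff]
  obtain ⟨π, hπ⟩ := exists_ord_eq_one v
  refine ⟨π, fun b => ?_⟩
  rw [mem_Ev, mem_Ev, ord_mul, hπ, Int.even_add_one, Xor]
  tauto

open Classical in
lemma claimF {S T : Finset (Pr K)} (hS : Good S) (hd : dyad K ⊆ S) (hTS : Disjoint T S)
    (hT : (LQ T).relIndex (US S) = 2 ^ T.card) {x : Kˣ} (hx : x ∈ US (S ∪ T)) (hxl : ∀ p ∈ PS S, x ∈ lsq p) :
    IsSquare x := by
  by_contra hsq
  obtain ⟨N, hN1, hN2, hN3⟩ := FI' (hS.mono Finset.subset_union_left) (hd.trans Finset.subset_union_left)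
    (mem_US_iff_spp.1 hx) hsq
  have hodd : ∀ q ∈ T, OddP q := fun q hq => oddP_iff.2 fun h => Finset.disjoint_left.1 hTS hq (hd h)
  set T' := T.filter fun q => x ∉ lsqF q with hT'
  set I := T'.filter fun q => Even (ord q x) with hI
  set R := T'.filter fun q => ¬ Even (ord q x) with hR
  have hcard : (nsp (S ∪ T) x).card = I.card + R.card := by
    rw [hI, hR, Finset.card_filter_add_card_filter_not]
    have : nsp (S ∪ T) x = T'.map ⟨Sum.inr, Sum.inr_injective⟩ := by
      ext p
      rw [mem_nsp, Finset.mem_map]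
      constructor
      · rintro ⟨h1, h2⟩
        rcases p with w | q
        · exact absurd (hxl _ (inl_mem_PS S w)) h2
        · rw [inr_mem_PS, Finset.mem_union] at h1
          rcases h1 with h1 | h1
          · exact absurd (hxl _ ((inr_mem_PS S q).2 h1)) h2
          · exact ⟨q, Finset.mem_filter.2 ⟨h1, h2⟩, rfl⟩
      · rintro ⟨q, hq, rfl⟩
        obtain ⟨h1, h2⟩ := Finset.mem_filter.1 hq
        exact ⟨by simp [h1], h2⟩
    rw [this, Finset.card_map]
  have hRT : R ⊆ T := (Finset.filter_subset _ _).trans (Finset.filter_subset _ _)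
  have hIT : I ⊆ T := (Finset.filter_subset _ _).trans (Finset.filter_subset _ _)
  -- index of `LQ R`
  have hRi : 2 ^ R.card ≤ (LQ R).relIndex (US S) := by
    have h1 := relIndex_LQ hd (T \ R) (Finset.disjoint_of_subset_left Finset.sdiff_subset hTS)
    have h2 : LQ T = LQ R ⊓ LQ (T \ R) := by rw [← LQ_union, Finset.union_sdiff_of_subset hRT]
    have h3 := Subgroup.relIndex_inf_le (H := LQ R) (K := LQ (T \ R)) (L := US S)
    rw [← h2, hT] at h3
    have h4 : T.card = R.card + (T \ R).card := by
      rw [Finset.card_sdiff_of_subset hRT]; have := Finset.card_le_card hRT; omega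
    rw [h4, pow_add] at h3
    have h5 := h3.trans (Nat.mul_le_mul_left _ h1.1)
    exact Nat.le_of_mul_le_mul_right h5 (by positivity)
  -- the evenness group
  set E : Subgroup Kˣ := ⨅ p ∈ I.map ⟨Sum.inr, Sum.inr_injective⟩, (Sum.elim (fun _ => ⊤) Ev p : Subgroup Kˣ) with hE
  have memE : ∀ y, y ∈ E ↔ ∀ q ∈ I, Even (ord q y) := by
    intro y
    simp [hE, Subgroup.mem_iInf, mem_Ev]
  have hEi : E.index = 2 ^ I.card := by
    rw [hE, index_iInf]
    · rw [Finset.prod_map]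
      simp [index_Ev]
    · intro p hp
      obtain ⟨q, hq, rfl⟩ := Finset.mem_map.1 hp
      intro y hy
      exact even_ord_of_lsqF hy
  have hEsup : US (S ∪ T) ⊔ E = ⊤ := by
    rw [eq_top_iff]
    intro z _
    obtain ⟨w, hw⟩ := hS.exists (fun v => if v ∈ I then ord v z else 0) (I.finite_toSet.subset (by
      intro v hv; by_contra h; simp at h; simp [h] at hv))
    rw [Subgroup.mem_sup]
    refine ⟨w, ?_, z / w, ?_, by rw [mul_div_cancel]⟩
    · intro v hv
      rw [Finset.mem_union, not_or] at hv
      rw [hw v hv.1, if_neg fun h => hv.2 (hIT h)]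
    · rw [memE]
      intro q hq
      rw [ord_div, hw q (Finset.disjoint_left.1 hTS (hIT hq)), if_pos hq, sub_self]; exact Even.zero
  have hEr : E.relIndex (US (S ∪ T)) = 2 ^ I.card := by
    rw [← Subgroup.relIndex_sup_right, hEsup, Subgroup.relIndex_top_right, hEi]
  have hNE : N ≤ E := by
    intro y hy
    rw [memE]
    intro q hq
    have h1 := Finset.mem_filter.1 hq
    have h2 := Finset.mem_filter.1 h1.1
    exact L1 (hodd q (hIT hq)) h1.2 h2.2 (normG_le_LN _ _ (hN2 hy))
  have hUE : US S ≤ E ⊓ US (S ∪ T) := by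
    intro y hy
    refine ⟨(memE y).2 fun q hq => ?_, US_mono Finset.subset_union_left hy⟩
    rw [hy q (Finset.disjoint_left.1 hTS (hIT hq))]; exact Even.zero
  have hN0 : N.relIndex (US (S ∪ T)) ≠ 0 := by
    intro h; rw [h, zero_mul] at hN3; exact (pow_ne_zero _ two_ne_zero) hN3.symm
  have k1 := Subgroup.relIndex_mul_relIndex N (E ⊓ US (S ∪ T)) (US (S ∪ T)) (le_inf hNE hN1) inf_le_right
  rw [Subgroup.inf_relIndex_right, hEr] at k1
  have hNE0 : N.relIndex (E ⊓ US (S ∪ T)) ≠ 0 := by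
    intro h; rw [h, zero_mul] at k1; exact hN0 k1.symm
  have k2 := Subgroup.relIndex_le_of_le_right hUE hNE0
  have k3 : (LQ R).relIndex (US S) ≤ N.relIndex (US S) := by
    rw [← Subgroup.inf_relIndex_right N]
    rw [← Subgroup.inf_relIndex_right (LQ R)]
    refine Subgroup.relIndex_le_of_le_left ?_ ?_
    · rintro y ⟨hy1, hy2⟩
      refine ⟨mem_LQ.2 fun q hq => ?_, hy2⟩
      have h1 := Finset.mem_filter.1 hq
      have h0 : ord q y = 0 := hy2 q (Finset.disjoint_left.1 hTS (hRT hq))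
      exact L2 (hodd q (hRT hq)) h1.2 (by rw [h0]; exact Even.zero) (normG_le_LN _ _ (hN2 hy1))
    · rw [Subgroup.inf_relIndex_right]
      exact fun h => hN0 (Subgroup.relIndex_eq_zero_of_le_right (US_mono Finset.subset_union_left) h)
  have k4 := hRi.trans (k3.trans k2)
  rw [hcard, pow_add] at hN3
  have k5 := Nat.mul_le_mul_right (2 ^ I.card) k4
  rw [k1] at k5
  have : 0 < N.relIndex (US (S ∪ T)) := Nat.pos_of_ne_zero hN0
  nlinarith

end A10
end HS

set_option linter.unusedSectionVars false
set_option linter.style.haveILetI false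
set_option linter.deprecated false
set_option linter.unusedSimpArgs false

namespace HS
open NumberField IsDedekindDomain HeightOneSpectrum WithZero

section B10
universe u
variable {K : Type u} [Field K] [NumberField K]

lemma index_lsq_ne (p : Pl K) : (lsq p).index ≠ 0 := by
  rcases p with w | v
  · rw [lsq_inl]
    intro h
    have := index_lsqI w
    rw [h] at this; omega
  · rw [lsq_inr]; exact (index_lsqF v).2

lemma index_LN_ne (p : Pl K) (c : Kˣ) : (LN p c).index ≠ 0 := by
  intro h
  have := Subgroup.relIndex_mul_index (lsq_le_LN p c)
  rw [h, mul_zero] at this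
  exact index_lsq_ne p this.symm

open Classical in
theorem thmC {S : Finset (Pr K)} {c : Kˣ} (hS : Good S) (hd : dyad K ⊆ S) (hc : spp c ⊆ S) (hsq : ¬ IsSquare c) :
    ∏ p ∈ PS S, (LN p c).index ≤ 2 ^ (nsp S c).card ∧
    ((∀ p ∈ nsp S c, LN p c ≠ ⊤) → ∀ u ∈ US S, (∀ p ∈ nsp S c, u ∈ LN p c) → u ∈ normG c) := by
  have hs : 1 ≤ (PS S).card := by
    rw [card_PS]
    have : 0 < Fintype.card (InfinitePlace K) := Fintype.card_pos
    omega
  obtain ⟨T, hT1, hT2, hT3, hT4⟩ := greedy hd hc hsq ((PS S).card - 1) (by omega)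
  have hSS : S ⊆ S ∪ T := Finset.subset_union_left
  obtain ⟨N, hN1, hN2, hN3⟩ := FI' (hS.mono hSS) (hd.trans hSS) (hc.trans hSS) hsq
  have hnsp : nsp (S ∪ T) c = nsp S c := by
    ext p
    rw [mem_nsp, mem_nsp]
    rcases p with w | q
    · simp
    · simp only [inr_mem_PS, Finset.mem_union, lsq_inr]
      constructor
      · rintro ⟨h1 | h1, h2⟩
        · exact ⟨h1, h2⟩
        · exact absurd (hT3 q h1) h2
      · rintro ⟨h1, h2⟩; exact ⟨Or.inl h1, h2⟩
  rw [hnsp] at hN3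
  set A : Subgroup Kˣ := ⨅ p ∈ PS S, lsq p with hA
  set Λ : Subgroup Kˣ := ⨅ p ∈ PS S, LN p c with hΛ
  set U := US (S ∪ T) with hU
  have memA : ∀ y, y ∈ A ↔ ∀ p ∈ PS S, y ∈ lsq p := fun y => by simp only [hA, Subgroup.mem_iInf]
  have memΛ : ∀ y, y ∈ Λ ↔ ∀ p ∈ PS S, y ∈ LN p c := fun y => by simp only [hΛ, Subgroup.mem_iInf]
  have hAΛ : A ≤ Λ := fun y hy => (memΛ y).2 fun p hp => lsq_le_LN p c ((memA y).1 hy p hp)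
  have hAi : A.index ≤ 4 ^ (PS S).card := by
    rw [hA, index_iInf _ _ (fun p _ => le_rfl)]; exact prod_index_lsq S
  have hA0 : A.index ≠ 0 := by
    rw [hA, index_iInf _ _ (fun p _ => le_rfl)]
    exact Finset.prod_ne_zero_iff.2 fun p _ => index_lsq_ne p
  have hAU : A ⊓ U = Sq U := by
    ext x
    rw [mem_Sq]
    constructor
    · rintro ⟨h1, h2⟩
      obtain ⟨y, hy⟩ := claimF hS hd hT2 (by rw [hT4, hT1]) h2 ((memA x).1 h1)
      rw [← pow_two] at hy
      exact ⟨y, sq_mem_US h2 hy, hy.symm⟩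
    · rintro ⟨y, hy, rfl⟩
      exact ⟨(memA _).2 fun p _ => sq_mem_lsq p y, U.pow_mem hy 2⟩
  have hAUi : A.relIndex U = 2 ^ (PS (S ∪ T)).card := by
    rw [← Subgroup.inf_relIndex_right, hAU, relIndex_Sq_US]
  have hcardT : (PS (S ∪ T)).card + 1 = (PS S).card + (PS S).card := by
    rw [card_PS, Finset.card_union_of_disjoint hT2.symm, hT1]
    have := card_PS S
    omega
  have key : (U ⊔ A).index ≤ 2 := by
    have h1 := Subgroup.relIndex_mul_index (le_sup_right : A ≤ U ⊔ A)
    rw [Subgroup.relIndex_sup_right, hAUi] at h1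
    have h2 : 2 ^ (PS (S ∪ T)).card * 2 = 4 ^ (PS S).card := by
      rw [← pow_succ, hcardT, pow_add, ← mul_pow]; norm_num
    have h3 : 2 ^ (PS (S ∪ T)).card * (U ⊔ A).index ≤ 2 ^ (PS (S ∪ T)).card * 2 := by
      rw [h1, h2]; exact hAi
    exact Nat.le_of_mul_le_mul_left h3 (by positivity)
  have hUA0 : (U ⊔ A).index ≠ 0 := by
    have h1 := Subgroup.relIndex_mul_index (le_sup_right : A ≤ U ⊔ A)
    intro h; rw [h, mul_zero] at h1; exact hA0 h1.symm
  have key2 : (U ⊔ Λ).index ≤ 2 := by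
    refine le_trans (Nat.le_of_dvd (Nat.pos_of_ne_zero hUA0) (Subgroup.index_dvd_of_le (sup_le_sup_left hAΛ U))) key
  have hΛi : Λ.index = ∏ p ∈ PS S, (LN p c).index := by
    rw [hΛ, index_iInf _ _ (fun p _ => lsq_le_LN p c)]
  have hN0 : N.relIndex U ≠ 0 := by
    intro h; rw [h, zero_mul] at hN3; exact (pow_ne_zero _ two_ne_zero) hN3.symm
  have hNΛ : N ≤ Λ := fun y hy => (memΛ y).2 fun p _ => normG_le_LN p c (hN2 hy)
  have k1 := Subgroup.relIndex_mul_relIndex N (Λ ⊓ U) U (le_inf hNΛ hN1) inf_le_right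
  rw [Subgroup.inf_relIndex_right] at k1
  have k2 := Subgroup.relIndex_mul_index (le_sup_right : Λ ≤ U ⊔ Λ)
  rw [Subgroup.relIndex_sup_right, hΛi] at k2
  have k3 : N.relIndex (Λ ⊓ U) ≠ 0 := by
    intro h; rw [h, zero_mul] at k1; exact hN0 k1.symm
  have k4 : ∏ p ∈ PS S, (LN p c).index ≤ Λ.relIndex U * 2 := by
    rw [← k2]; exact Nat.mul_le_mul_left _ key2
  have k5 : Λ.relIndex U ≤ N.relIndex U := by
    rw [← k1]; exact Nat.le_mul_of_pos_left _ (Nat.pos_of_ne_zero k3)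
  refine ⟨by rw [← hN3]; exact k4.trans (Nat.mul_le_mul_right _ k5), ?_⟩
  intro hne u hu hul
  have k6 : 2 ^ (nsp S c).card ≤ ∏ p ∈ PS S, (LN p c).index := by
    calc 2 ^ (nsp S c).card = ∏ p ∈ nsp S c, 2 := by simp
      _ ≤ ∏ p ∈ nsp S c, (LN p c).index := by
        refine Finset.prod_le_prod' fun p hp => ?_
        have h1 := index_LN_ne p c
        have h2 : (LN p c).index ≠ 1 := fun h => hne p hp (Subgroup.index_eq_one.1 h)
        omega
      _ ≤ ∏ p ∈ PS S, (LN p c).index := by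
        refine Finset.prod_le_prod_of_subset_of_one_le' (fun p hp => (mem_nsp.1 hp).1) fun p _ _ => ?_
        exact Nat.one_le_iff_ne_zero.2 (index_LN_ne p c)
  have k7 : N.relIndex (Λ ⊓ U) = 1 := by
    rw [← hN3, ← k1] at k6
    have h0 : Λ.relIndex U ≠ 0 := by
      intro h; rw [h, mul_zero] at k1; exact hN0 k1.symm
    have h8 := k6.trans k4
    have h9 : N.relIndex (Λ ⊓ U) * Λ.relIndex U ≤ 1 * Λ.relIndex U := by omega
    have := Nat.le_of_mul_le_mul_right h9 (Nat.pos_of_ne_zero h0)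
    omega
  rw [Subgroup.relIndex_eq_one] at k7
  refine hN2 (k7 ⟨(memΛ u).2 fun p hp => ?_, US_mono hSS hu⟩)
  by_cases h : c ∈ lsq p
  · rw [LN_eq_top h]; trivial
  · exact hul p (mem_nsp.2 ⟨hp, h⟩)

/-- Bundled set-free form of the norm theorem. -/
theorem normThm {c u : Kˣ} (hne : ∀ p, c ∉ lsq p → LN p c ≠ ⊤) (hu : ∀ p, c ∉ lsq p → u ∈ LN p c) : u ∈ normG c := by
  classical
  by_cases hsq : IsSquare c
  · exact normG_sq hsq u
  obtain ⟨S, hS⟩ := exists_good (K := K)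
  have h1 : S ⊆ S ∪ (dyad K ∪ (spp c ∪ spp u)) := Finset.subset_union_left
  refine (thmC (S := S ∪ (dyad K ∪ (spp c ∪ spp u))) (hS.mono h1) ?_ ?_ hsq).2 ?_ u (mem_US_iff_spp.2 ?_) ?_
  · intro v hv; simp [hv]
  · intro v hv; simp only [Finset.mem_union]; tauto
  · intro p hp; exact hne p (mem_nsp.1 hp).2
  · intro v hv; simp only [Finset.mem_union]; tauto
  · intro p hp; exact hu p (mem_nsp.1 hp).2

end B10
end HS

set_option linter.unusedSectionVars false
set_option linter.style.haveILetI false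
set_option linter.deprecated false
set_option linter.unusedSimpArgs false

namespace HS
open NumberField IsDedekindDomain HeightOneSpectrum WithZero

section A11
universe u
variable {K : Type u} [Field K] [NumberField K]

lemma prod_ge_aux {ι : Type*} [DecidableEq ι] (F : Finset ι) (g : ι → ℕ) (q : ι) (hq : q ∈ F) (h : ∀ p ∈ F, p ≠ q → 2 ≤ g p)
    (hle : ∏ p ∈ F, g p ≤ 2 ^ F.card) : g q ≤ 2 := by
  rw [← Finset.mul_prod_erase F g hq] at hle
  have h1 : 2 ^ (F.erase q).card ≤ ∏ p ∈ F.erase q, g p := by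
    calc _ = ∏ p ∈ F.erase q, 2 := by simp
      _ ≤ _ := Finset.prod_le_prod' fun p hp => h p (Finset.mem_of_mem_erase hp) (Finset.ne_of_mem_erase hp)
  have h2 : F.card = (F.erase q).card + 1 := (Finset.card_erase_add_one hq).symm
  rw [h2, pow_succ, mul_comm] at hle
  have h3 := (Nat.mul_le_mul_right (g q) h1).trans hle
  exact Nat.le_of_mul_le_mul_left h3 (by positivity)

open Classical in
theorem I2 (q : Pr K) (a : Kˣ) : (LN (Sum.inr q) a).index ≤ 2 := by
  by_cases ha : a ∈ lsqF q
  · rw [LN_eq_top (p := Sum.inr q) ha]; simp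
  obtain ⟨a', h1, h2, -⟩ := exists_approx (insert q (dyad K)) (fun p => if p = Sum.inr q then a else 1) ∅
    (fun _ => 0) (fun _ => 1) (by simp) (by simp)
  simp only [reduceCtorEq, if_false, div_one] at h1
  have hq := (h2 q (Finset.mem_insert_self _ _)).1
  simp only [if_true] at hq
  have hd : ∀ v ∈ dyad K, v ≠ q → a' ∈ lsqF v := by
    intro v hv hvq
    have := (h2 v (Finset.mem_insert_of_mem hv)).1
    simpa [hvq] using this
  have haq : a' ∉ lsqF q := by
    intro h
    apply ha
    have := mul_mem (inv_mem hq) h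
    simpa using this
  rw [← LN_congr q hq]
  have hsq : ¬ IsSquare a' := by
    rintro ⟨b, rfl⟩
    rw [← pow_two] at haq
    exact haq (sq_mem_lsqF q b)
  obtain ⟨S, hS⟩ := exists_good (K := K)
  have hle := (thmC (S := S ∪ (dyad K ∪ (spp a' ∪ {q}))) (hS.mono Finset.subset_union_left) (by intro v hv; simp [hv])
    (by intro v hv; simp only [Finset.mem_union]; tauto) hsq).1
  set S' := S ∪ (dyad K ∪ (spp a' ∪ {q}))
  refine prod_ge_aux (nsp S' a') (fun p => (LN p a').index) (Sum.inr q) (mem_nsp.2 ⟨by simp [S'], haq⟩) ?_ ?_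
  · intro p hp hpq
    have hne : LN p a' ≠ ⊤ := by
      rcases p with w | v
      · exact absurd (h1 w) (mem_nsp.1 hp).2
      · refine LN_ne_top_odd (oddP_iff.2 fun hv => (mem_nsp.1 hp).2 (hd v hv ?_)) (mem_nsp.1 hp).2
        rintro rfl; exact hpq rfl
    have h1 := index_LN_ne p a'
    have h2 : (LN p a').index ≠ 1 := fun h => hne (Subgroup.index_eq_one.1 h)
    show 2 ≤ (LN p a').index
    omega
  · refine le_trans ?_ hle
    refine Finset.prod_le_prod_of_subset_of_one_le' (fun p hp => (mem_nsp.1 hp).1) fun p _ _ => ?_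
    exact Nat.one_le_iff_ne_zero.2 (index_LN_ne p a')

lemma I2_dvd (q : Pr K) (a : Kˣ) : (LN (Sum.inr q) a).index ∣ 2 := by
  have h1 := I2 q a
  have h2 := index_LN_ne (Sum.inr q) a
  interval_cases h : (LN (Sum.inr q) a).index
  · exact absurd rfl h2
  · norm_num
  · norm_num

/-- Unramified case: every element of even order is a local norm. -/
lemma LN_unram {v : Pr K} (hv : OddP v) {c u : Kˣ} (hc : Even (ord v c)) (hc' : c ∉ lsqF v) (hu : Even (ord v u)) :
    u ∈ LN (Sum.inr v) c := by
  obtain ⟨π, hπ⟩ := exists_ord_eq_one (K := K) v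
  obtain ⟨a, ha⟩ := Subgroup.index_dvd_two_iff.1 (I2_dvd v c)
  have hno : ∀ x, x ∈ LN (Sum.inr v) c → Even (ord v x) := fun x hx => L1 hv hc hc' hx
  rcases ha u with h | h
  · rcases ha (u * π) with h' | h'
    · have := hno _ (mul_mem (inv_mem h) h')
      rw [ord_mul, ord_mul, ord_inv, ord_mul, ord_mul, hπ] at this
      exfalso
      have e : -(ord v u + ord v a) + (ord v u + 1 + ord v a) = 1 := by ring
      rw [e] at this; exact absurd this (by decide)
    · have := hno _ h'
      rw [ord_mul, hπ, Int.even_add_one] at this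
      exact absurd hu this
  · exact h

end A11
end HS

set_option linter.unusedSectionVars false
set_option linter.style.haveILetI false
set_option linter.deprecated false
set_option linter.unusedSimpArgs false

namespace HS
open NumberField IsDedekindDomain HeightOneSpectrum WithZero

section B11
universe u
variable {K : Type u} [Field K] [NumberField K]

/-- reduced norms of the quaternion algebra `(a, b)` -/
def QN {K : Type u} [Field K] (a b : Kˣ) : Subgroup Kˣ where
  carrier := {u | ∃ x0 x1 x2 x3 : K, (u : K) = x0 ^ 2 - a * x1 ^ 2 - b * x2 ^ 2 + a * b * x3 ^ 2}
  one_mem' := ⟨1, 0, 0, 0, by simp⟩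
  mul_mem' := by
    rintro u u' ⟨x0, x1, x2, x3, h⟩ ⟨y0, y1, y2, y3, h'⟩
    refine ⟨x0 * y0 + a * x1 * y1 + b * x2 * y2 - a * b * x3 * y3, x0 * y1 + x1 * y0 - b * x2 * y3 + b * x3 * y2,
      x0 * y2 + x2 * y0 + a * x1 * y3 - a * x3 * y1, x0 * y3 + x3 * y0 + x1 * y2 - x2 * y1, ?_⟩
    push_cast
    rw [h, h']; ring
  inv_mem' := by
    rintro u ⟨x0, x1, x2, x3, h⟩
    refine ⟨x0 / u, x1 / u, x2 / u, x3 / u, ?_⟩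
    have hu : (u : K) ≠ 0 := u.ne_zero
    push_cast
    field_simp
    linear_combination h

lemma mem_QN {K : Type u} [Field K] {a b u : Kˣ} :
  u ∈ QN a b ↔ ∃ x0 x1 x2 x3 : K, (u : K) = x0 ^ 2 - a * x1 ^ 2 - b * x2 ^ 2 + a * b * x3 ^ 2 := Iff.rfl

lemma normG_le_QN (a b : Kˣ) : normG a ≤ QN a b := by
  rintro u ⟨x, y, h⟩
  exact ⟨x, y, 0, 0, by rw [h]; ring⟩

lemma neg_mem_QN (a b : Kˣ) : -b ∈ QN a b := ⟨0, 0, 1, 0, by push_cast; ring⟩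

lemma exists_nat_lt (v : Pr K) : ∃ n : ℕ, 1 ≤ n ∧ v.valuation K (n : K) < 1 := by
  obtain ⟨f, hf⟩ := exists_residue v
  obtain ⟨m, n, hmn, h⟩ := Finite.exists_ne_map_eq_of_infinite (fun n : ℕ => f (n : K))
  wlog hlt : m < n generalizing m n
  · exact this n m hmn.symm h.symm (by omega)
  refine ⟨n - m, by omega, ?_⟩
  rw [Nat.cast_sub hlt.le]
  exact hf _ _ (val_natCast_le v n) (val_natCast_le v m) h.symm

/-- a local norm can be approximated by norms -/
lemma LN_approx (q : Pr K) {a g : Kˣ} (hg : g ∈ LN (Sum.inr q) a) (ε : ℤᵐ⁰) (hε : ε ≠ 0) :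
    ∃ n ∈ normG a, q.valuation K ((n : K) - g) < ε := by
  obtain ⟨n, hn, hs⟩ := mem_LN.1 hg
  have hs' : n / g ∈ lsqF q := by rw [← inv_div]; exact inv_mem hs
  have hg0 : q.valuation K (g : K) ≠ 0 := by rw [Valuation.ne_zero_iff]; exact g.ne_zero
  obtain ⟨y, hy⟩ := lsqF_hensel q hs' (ε / q.valuation K (g : K)) (div_ne_zero hε hg0)
  refine ⟨n * y ^ 2, mul_mem hn (sq_mem_normG a y), ?_⟩
  have e : ((n * y ^ 2 : Kˣ) : K) - g = (((n / g : Kˣ) : K) * (y : K) ^ 2 - 1) * g := by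
    push_cast
    have : (g : K) ≠ 0 := g.ne_zero
    field_simp
  rw [e, map_mul]
  rwa [lt_div_iff₀ (zero_lt_iff.2 hg0)] at hy

theorem LU (q : Pr K) (a b c : Kˣ) : ∃ n ∈ QN a b, c * n ∈ lsqF q := by
  by_contra hcon
  push Not at hcon
  obtain ⟨t, ht⟩ := Subgroup.index_dvd_two_iff.1 (I2_dvd q a)
  set G := LN (Sum.inr q) a with hG
  have two : ∀ x y, x ∉ G → y ∉ G → x * y ∈ G := by
    intro x y hx hy
    have h1 := (ht x).resolve_right hx
    have h2 := (ht y).resolve_right hy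
    have h3 : t ^ 2 ∈ G := lsq_le_LN _ _ (sq_mem_lsq _ t)
    have := mul_mem (mul_mem h1 h2) (inv_mem h3)
    convert this using 1
    rw [eq_mul_inv_iff_mul_eq, pow_two]; ac_rfl
  have hin : ∀ m ∈ QN a b, c * m ∉ G := by
    intro m hm h
    obtain ⟨n, hn, hs⟩ := mem_LN.1 h
    apply hcon (m / n) (div_mem hm (normG_le_QN a b hn))
    rwa [← mul_div_assoc]
  have hcG : c ∉ G := by simpa using hin 1 (one_mem _)
  have hbG : -b ∈ G := by
    by_contra h
    exact hin _ (neg_mem_QN a b) (two _ _ hcG h)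
  have hadd : ∀ g1 g2 g : Kˣ, g1 ∈ G → g2 ∈ G → (g : K) = g1 + g2 → g ∈ G := by
    intro g1 g2 g h1 h2 he
    by_contra hg
    have h2' : g2 / (-b) ∈ G := div_mem h2 hbG
    have hb0 : q.valuation K (b : K) ≠ 0 := by rw [Valuation.ne_zero_iff]; exact b.ne_zero
    have hg0 : q.valuation K (g : K) ≠ 0 := by rw [Valuation.ne_zero_iff]; exact g.ne_zero
    have hε : q.valuation K (4 : K) * q.valuation K (g : K) ≠ 0 := mul_ne_zero (val4_ne q) hg0
    obtain ⟨n1, hn1, hn1'⟩ := LN_approx q h1 _ hε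
    obtain ⟨n2, hn2, hn2'⟩ := LN_approx q h2' _ (div_ne_zero hε hb0)
    rw [lt_div_iff₀ (zero_lt_iff.2 hb0), ← map_mul] at hn2'
    have hlt : q.valuation K (((n1 : K) - b * n2) - g) < q.valuation K (4 : K) * q.valuation K (g : K) := by
      have e : ((n1 : K) - b * n2) - g = ((n1 : K) - g1) - ((n2 : K) - ((g2 / (-b) : Kˣ) : K)) * b := by
        rw [he]; push_cast
        have : (b : K) ≠ 0 := b.ne_zero
        field_simp
        ring
      rw [e]
      exact Valuation.map_sub_lt _ hn1' hn2'
    have hne : (n1 : K) - b * n2 ≠ 0 := by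
      intro h0
      rw [h0, zero_sub, Valuation.map_neg] at hlt
      exact absurd hlt (not_lt.2 (mul_le_of_le_one_left' (val_ofNat_le q 4)))
    set m : Kˣ := Units.mk0 _ hne with hm
    have hmQ : m ∈ QN a b := by
      obtain ⟨x, y, h⟩ := hn1
      obtain ⟨z, w, h'⟩ := hn2
      refine ⟨x, y, z, w, ?_⟩
      rw [hm, Units.val_mk0, h, h']; ring
    have hmg : m / g ∈ lsqF q := mem_lsqF_of_close q (by rw [hm, Units.val_mk0]; exact hlt)
    apply hin m hmQ
    have hmG : m ∉ G := by
      intro h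
      apply hg
      have := div_mem h (lsq_le_LN (Sum.inr q) a hmg)
      simpa using this
    exact two _ _ hcG hmG
  have hnat : ∀ n : ℕ, ∀ g : Kˣ, (g : K) = (n + 1 : ℕ) → g ∈ G := by
    intro n
    induction n with
    | zero => intro g hg; have : g = 1 := Units.ext (by simpa using hg); rw [this]; exact one_mem _
    | succ n ih =>
      intro g hg
      have h0 : ((n + 1 : ℕ) : K) ≠ 0 := by exact_mod_cast Nat.succ_ne_zero n
      refine hadd (Units.mk0 _ h0) 1 g (ih _ rfl) (one_mem _) ?_
      rw [hg]; push_cast; rfl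
  obtain ⟨p, hp1, hp2⟩ := exists_nat_lt q
  have hM0 : ((4 * p - 2 + 1 : ℕ) : K) ≠ 0 := Nat.cast_ne_zero.2 (by omega)
  set M : Kˣ := Units.mk0 _ hM0 with hM
  have hMG : M ∈ G := hnat _ M rfl
  have hMv : (M : K) = 4 * p - 1 := by
    rw [hM, Units.val_mk0, show 4 * p - 2 + 1 = 4 * p - 1 by omega, Nat.cast_sub (by omega)]; push_cast; ring
  have hMneg : -M ∈ G := by
    refine lsq_le_LN (Sum.inr q) a (?_ : -M ∈ lsqF q)
    refine ⟨1, ?_⟩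
    have : ((-M : Kˣ) : K) * ((1 : Kˣ) : K) ^ 2 - 1 = - (4 * p) := by push_cast; rw [hMv]; ring
    rw [this, Valuation.map_neg, map_mul]
    exact (mul_lt_iff_lt_one_right (zero_lt_iff.2 (val4_ne q))).2 hp2
  have hneg1 : (-1 : Kˣ) ∈ G := by
    have := div_mem hMneg hMG
    rwa [neg_div, div_self'] at this
  apply hcG
  by_cases e1 : (c : K) = 1
  · rw [show c = 1 from Units.ext (by simpa using e1)]; exact one_mem _
  by_cases e2 : (c : K) = -1
  · rw [show c = -1 from Units.ext (by simpa using e2)]; exact hneg1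
  have f1 : ((c : K) + 1) / 2 ≠ 0 := div_ne_zero (fun h => e2 (eq_neg_of_add_eq_zero_left h)) two_ne_zero
  have f2 : ((c : K) - 1) / 2 ≠ 0 := div_ne_zero (sub_ne_zero.2 e1) two_ne_zero
  refine hadd (Units.mk0 _ f1 ^ 2) (-1 * Units.mk0 _ f2 ^ 2) c (lsq_le_LN _ _ (sq_mem_lsq _ _))
    (mul_mem hneg1 (lsq_le_LN _ _ (sq_mem_lsq _ _))) ?_
  push_cast
  rw [Units.val_mk0, Units.val_mk0]; ring

end B11
end HS

set_option linter.unusedSectionVars false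
set_option linter.style.haveILetI false
set_option linter.deprecated false
set_option linter.unusedSimpArgs false

namespace HS
open NumberField IsDedekindDomain HeightOneSpectrum WithZero

section A12
universe u
variable {K : Type u} [Field K]

lemma iso_univ [CharZero K] {a b : Kˣ} {x0 x1 x2 x3 : K} (h : x0 ^ 2 - a * x1 ^ 2 - b * x2 ^ 2 + a * b * x3 ^ 2 = 0)
    (hx : x0 ≠ 0 ∨ x1 ≠ 0 ∨ x2 ≠ 0 ∨ x3 ≠ 0) (u : Kˣ) : u ∈ QN a b := by
  have ha : (a : K) ≠ 0 := a.ne_zero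
  have hb : (b : K) ≠ 0 := b.ne_zero
  have aux : ∀ (A y B : K), B ≠ 0 → ∃ t : K, (u : K) = A + t * B := fun A y B hB =>
    ⟨(u - A) / B, by field_simp; ring⟩
  rcases hx with hx | hx | hx | hx
  · obtain ⟨t, ht⟩ := aux 1 0 (2 * x0) (mul_ne_zero two_ne_zero hx)
    exact ⟨1 + t * x0, t * x1, t * x2, t * x3, by rw [ht]; linear_combination -t ^ 2 * h⟩
  · obtain ⟨t, ht⟩ := aux (-a) 0 (-2 * a * x1) (by simp [hx])
    exact ⟨t * x0, 1 + t * x1, t * x2, t * x3, by rw [ht]; linear_combination -t ^ 2 * h⟩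
  · obtain ⟨t, ht⟩ := aux (-b) 0 (-2 * b * x2) (by simp [hx])
    exact ⟨t * x0, t * x1, 1 + t * x2, t * x3, by rw [ht]; linear_combination -t ^ 2 * h⟩
  · obtain ⟨t, ht⟩ := aux (a * b) 0 (2 * a * b * x3) (by simp [hx])
    exact ⟨t * x0, t * x1, t * x2, 1 + t * x3, by rw [ht]; linear_combination -t ^ 2 * h⟩

/-- Step 4 -/
lemma step4 [CharZero K] {a b c : Kˣ} {e τ x0 x1 y0 y1 : K} (he : e = τ ^ 2 - 4 * b)
    (h1 : (a : K) = x0 ^ 2 + e * x1 ^ 2 - c * (y0 ^ 2 + e * y1 ^ 2)) (h2 : x0 * x1 = c * y0 * y1) : b ∈ QN a c := by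
  by_cases hD : x1 ^ 2 - c * y1 ^ 2 = 0
  · by_cases h0 : x1 ≠ 0 ∨ y1 ≠ 0
    · refine iso_univ (x0 := x1) (x1 := 0) (x2 := y1) (x3 := 0) ?_ (by tauto) b
      linear_combination hD
    · push Not at h0
      obtain ⟨rfl, rfl⟩ := h0
      refine iso_univ (x0 := x0) (x1 := 1) (x2 := y0) (x3 := 0) ?_ (by right; left; exact one_ne_zero) b
      linear_combination -h1
  · refine ⟨τ / 2, x1 / (2 * (x1 ^ 2 - c * y1 ^ 2)), (y0 * x1 - x0 * y1) / (2 * (x1 ^ 2 - c * y1 ^ 2)),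
      -y1 / (2 * (x1 ^ 2 - c * y1 ^ 2)), ?_⟩
    have key : -(a : K) * (x1 ^ 2 - c * y1 ^ 2) - c * (y0 * x1 - x0 * y1) ^ 2 + e * (x1 ^ 2 - c * y1 ^ 2) ^ 2 = 0 := by
      rw [h1]; linear_combination -(x0 * x1 - c * y0 * y1) * h2
    have k : (τ / 2) ^ 2 - a * (x1 / (2 * (x1 ^ 2 - c * y1 ^ 2))) ^ 2 - c * ((y0 * x1 - x0 * y1) / (2 * (x1 ^ 2 - c * y1 ^ 2))) ^ 2
        + a * c * (-y1 / (2 * (x1 ^ 2 - c * y1 ^ 2))) ^ 2 =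
        τ ^ 2 / 4 + (-(a : K) * (x1 ^ 2 - c * y1 ^ 2) - c * (y0 * x1 - x0 * y1) ^ 2) / (4 * (x1 ^ 2 - c * y1 ^ 2) ^ 2) := by
      field_simp; ring
    rw [k]
    have k2 : -(a : K) * (x1 ^ 2 - c * y1 ^ 2) - c * (y0 * x1 - x0 * y1) ^ 2 = -e * (x1 ^ 2 - c * y1 ^ 2) ^ 2 := by
      linear_combination key
    rw [k2, he]
    field_simp
    ring

/-- Step 5 -/
lemma step5 [CharZero K] {a b c : Kˣ} (h : b ∈ QN a c) : c ∈ QN a b := by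
  obtain ⟨x0, x1, x2, x3, h⟩ := h
  by_cases hD : x2 ^ 2 - a * x3 ^ 2 = 0
  · by_cases h0 : x2 ≠ 0 ∨ x3 ≠ 0
    · refine iso_univ (x0 := x2) (x1 := x3) (x2 := 0) (x3 := 0) ?_ (by tauto) c
      linear_combination hD
    · push Not at h0
      obtain ⟨rfl, rfl⟩ := h0
      refine iso_univ (x0 := x0) (x1 := x1) (x2 := 1) (x3 := 0) ?_ (by right; right; left; exact one_ne_zero) c
      linear_combination -h
  · have hm : Units.mk0 _ hD ∈ QN a b := ⟨x2, x3, 0, 0, by rw [Units.val_mk0]; ring⟩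
    have hm' : c * Units.mk0 _ hD ∈ QN a b := ⟨x0, x1, 1, 0, by
      push_cast; rw [Units.val_mk0]; linear_combination h⟩
    have := div_mem hm' hm
    simpa using this

end A12

section B12
universe u
variable {K : Type u} [Field K] [NumberField K]

lemma sq_close (v : Pr K) (A x : K) (η : ℤᵐ⁰) (hη : η ≠ 0) :
    ∃ ε : ℤᵐ⁰, ε ≠ 0 ∧ ∀ z, v.valuation K (z - x) < ε → v.valuation K (A * (z ^ 2 - x ^ 2)) < η := by
  set m := max (v.valuation K A) 1 * max 1 (v.valuation K (2 * x)) with hm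
  have hm0 : m ≠ 0 := by
    refine mul_ne_zero ?_ ?_ <;> refine ne_of_gt (lt_of_lt_of_le zero_lt_one ?_)
    exacts [le_max_right _ _, le_max_left _ _]
  refine ⟨min 1 (η / m), ?_, ?_⟩
  · refine ne_of_gt (lt_min zero_lt_one (zero_lt_iff.2 (div_ne_zero hη hm0)))
  · intro z hz
    have h1 := lt_of_lt_of_le hz (min_le_left _ _)
    have h2 := lt_of_lt_of_le hz (min_le_right _ _)
    rw [lt_div_iff₀ (zero_lt_iff.2 hm0)] at h2
    have e : A * (z ^ 2 - x ^ 2) = (z - x) * (A * ((z - x) + 2 * x)) := by ring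
    rw [e, map_mul]
    refine lt_of_le_of_lt (mul_le_mul_right ?_ _) h2
    rw [map_mul]
    refine mul_le_mul' (le_max_left _ _) ((Valuation.map_add _ _ _).trans (max_le_max h1.le le_rfl))

open Filter Topology in
lemma ev_pos (f : (Fin 4 → ℝ) → ℝ) (hf : Continuous f) (y : Fin 4 → ℝ) (h : 0 < f y) :
    ∀ᶠ δ in 𝓝[>] (0 : ℝ), ∀ z : Fin 4 → ℝ, (∀ i, |z i - y i| < δ) → 0 < f z := by
  have ho : IsOpen {z | 0 < f z} := isOpen_lt continuous_const hf
  obtain ⟨ε, hε, hb⟩ := Metric.isOpen_iff.1 ho y h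
  filter_upwards [Ioo_mem_nhdsGT hε] with δ hδ z hz
  refine hb ?_
  rw [Metric.mem_ball]
  refine lt_trans ?_ hδ.2
  rw [dist_pi_lt_iff hδ.1]
  intro i; rw [Real.dist_eq]; exact hz i

open Filter Topology in
lemma step1 (S : Finset (Pr K)) (a b c : Kˣ)
    (hpos : ∀ φ : K →+* ℝ, φ a < 0 → φ b < 0 → 0 < φ c) :
    ∃ n ∈ QN a b, (∀ v ∈ S, c * n ∈ lsqF v) ∧ ∀ w, c * n ∈ lsqI w := by
  classical
  obtain ⟨v0, -⟩ := exists_prime_notMem (∅ : Finset (Pr K))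
  choose n hn hcn using fun v : Pr K => LU v a b c
  choose x0 x1 x2 x3 hx using hn
  set A : Fin 4 → K := ![1, -a, -b, a * b] with hA
  set x : Pr K → Fin 4 → K := fun v => ![x0 v, x1 v, x2 v, x3 v] with hxd
  have hN : ∀ v, (n v : K) = ∑ i, A i * x v i ^ 2 := by
    intro v; rw [hx v, Fin.sum_univ_four]; simp [hA, hxd]; ring
  have hn0 : ∀ v : Pr K, v.valuation K (4 : K) * v.valuation K (n v : K) ≠ 0 := fun v =>
    mul_ne_zero (val4_ne v) (by rw [Valuation.ne_zero_iff]; exact (n v).ne_zero)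
  choose ε hε hεz using fun (v : Pr K) (i : Fin 4) => sq_close v (A i) (x v i) _ (hn0 v)
  -- infinite places
  have hex : ∀ w : InfinitePlace K, ∃ y : Fin 4 → K, ∀ φ : K →+* ℝ, plc φ = w →
      0 < φ c * ∑ i, φ (A i) * φ (y i) ^ 2 := by
    intro w
    by_cases hw : ∃ φ : K →+* ℝ, plc φ = w
    · obtain ⟨φ, rfl⟩ := hw
      have hu : ∀ {P : (K →+* ℝ) → Prop}, P φ → ∀ φ', plc φ' = plc φ → P φ' := by
        intro P hP φ' h; rw [plc_inj h]; exact hP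
      have hc0 : φ c ≠ 0 := by rw [map_ne_zero]; exact c.ne_zero
      have ha0 : φ a ≠ 0 := by rw [map_ne_zero]; exact a.ne_zero
      have hb0 : φ b ≠ 0 := by rw [map_ne_zero]; exact b.ne_zero
      rcases lt_or_gt_of_ne hc0 with hc | hc
      · rcases lt_or_gt_of_ne ha0 with ha | ha
        · have hb : 0 < φ b := by
            rcases lt_or_gt_of_ne hb0 with hb | hb
            · exact absurd (hpos φ ha hb) (not_lt.2 hc.le)
            · exact hb
          refine ⟨![0, 0, 1, 0], hu (P := fun ψ => 0 < ψ c * ∑ i, ψ (A i) * ψ ((![0, 0, 1, 0] : Fin 4 → K) i) ^ 2) ?_⟩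
          simp [Fin.sum_univ_four, hA]
          exact mul_neg_of_neg_of_pos hc hb
        · refine ⟨![0, 1, 0, 0], hu (P := fun ψ => 0 < ψ c * ∑ i, ψ (A i) * ψ ((![0, 1, 0, 0] : Fin 4 → K) i) ^ 2) ?_⟩
          simp [Fin.sum_univ_four, hA]
          exact mul_neg_of_neg_of_pos hc ha
      · refine ⟨![1, 0, 0, 0], hu (P := fun ψ => 0 < ψ c * ∑ i, ψ (A i) * ψ ((![1, 0, 0, 0] : Fin 4 → K) i) ^ 2) ?_⟩
        simp [Fin.sum_univ_four, hA]
        exact hc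
    · exact ⟨0, fun φ hφ => absurd ⟨φ, hφ⟩ hw⟩
  choose y hy using hex
  have hδ : ∀ᶠ δ in 𝓝[>] (0 : ℝ), ∀ φ : K →+* ℝ, ∀ z : Fin 4 → ℝ, (∀ i, |z i - φ (y (plc φ) i)| < δ) →
      0 < φ c * ∑ i, φ (A i) * z i ^ 2 := by
    haveI : Finite (K →+* ℝ) := Finite.of_injective plc (fun φ ψ h => plc_inj h)
    rw [eventually_all]
    intro φ
    refine ev_pos (fun z => φ c * ∑ i, φ (A i) * z i ^ 2) (by fun_prop) (fun i => φ (y (plc φ) i)) (hy _ φ rfl)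
  obtain ⟨δ, hδ1, hδ0⟩ := (hδ.and self_mem_nhdsWithin).exists
  choose z hz1 hz2 using fun i : Fin 4 => weak_approx (insert v0 S) (fun v => x v i) (fun v => ε v i) (fun v => hε v i)
    (fun w => y w i) δ hδ0
  have hfin : ∀ v ∈ insert v0 S, v.valuation K ((∑ i, A i * z i ^ 2) - n v) < v.valuation K (4 : K) * v.valuation K (n v : K) := by
    intro v hv
    have e : (∑ i, A i * z i ^ 2) - n v = ∑ i, A i * (z i ^ 2 - x v i ^ 2) := by
      rw [hN, ← Finset.sum_sub_distrib]
      refine Finset.sum_congr rfl fun i _ => by ring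
    rw [e]
    exact Valuation.map_sum_lt _ (hn0 v) fun i _ => hεz v i _ (hz1 i v hv)
  have hne : ∑ i, A i * z i ^ 2 ≠ 0 := by
    intro h0
    have := hfin v0 (Finset.mem_insert_self _ _)
    rw [h0, zero_sub, Valuation.map_neg] at this
    exact absurd this (not_lt.2 (mul_le_of_le_one_left' (val_ofNat_le v0 4)))
  refine ⟨Units.mk0 _ hne, ⟨z 0, z 1, z 2, z 3, ?_⟩, ?_, ?_⟩
  · rw [Units.val_mk0, Fin.sum_univ_four]; simp [hA]; ring
  · intro v hv
    have h1 : Units.mk0 _ hne / n v ∈ lsqF v := mem_lsqF_of_close v (hfin v (Finset.mem_insert_of_mem hv))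
    have := mul_mem (hcn v) h1
    rwa [mul_assoc, mul_div_cancel] at this
  · intro w φ hφ
    subst hφ
    push_cast
    rw [Units.val_mk0, map_mul, map_sum]
    simp only [map_mul, map_pow]
    refine hδ1 φ (fun i => φ (z i)) fun i => ?_
    have := hz2 i (plc φ)
    rwa [plc_apply, map_sub] at this

end B12
end HS

set_option linter.unusedSectionVars false
set_option linter.style.haveILetI false
set_option linter.deprecated false
set_option linter.unusedSimpArgs false

namespace HS
open NumberField IsDedekindDomain HeightOneSpectrum WithZero

section C12
universe u
variable {K : Type u} [Field K] [NumberField K]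

lemma of_close {v : Pr K} (hv : OddP v) {e n s : Kˣ} (hn : ord v n = 0) (hn' : n ∉ lsqF v)
    (h : v.valuation K ((e : K) - n * s ^ 2) < v.valuation K ((n : K) * s ^ 2)) : Even (ord v e) ∧ e ∉ lsqF v := by
  have h1 : v.valuation K ((e : K) - (n * s ^ 2 : Kˣ)) < v.valuation K ((n * s ^ 2 : Kˣ) : K) := by
    push_cast; exact h
  have h2 := ord_of_val_sub_lt h1
  have h3 := lsqF_of_lt_one hv h1
  rw [ord_mul, ord_pow, hn] at h2
  refine ⟨⟨ord v s, by rw [h2]; push_cast; ring⟩, fun he => hn' ?_⟩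
  have h4 := div_mem he h3
  rw [div_div_cancel] at h4
  exact ((lsqF v).mul_mem_cancel_right (sq_mem_lsqF v s)).1 h4

lemma loc_tau {v : Pr K} (hv : OddP v) {b : Kˣ} (hb : ord v b = 0) :
    ∃ (τ : K) (n s : Kˣ), ord v n = 0 ∧ n ∉ lsqF v ∧
      v.valuation K ((τ ^ 2 - 4 * b : K) - n * s ^ 2) < v.valuation K ((n : K) * s ^ 2) := by
  obtain ⟨n, hn, hn'⟩ := exists_unit_notMem_lsqF v
  have hvn : v.valuation K (n : K) = 1 := (val_eq_one_iff v n).2 hn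
  have hvb : v.valuation K (b : K) = 1 := (val_eq_one_iff v b).2 hb
  have h4 := hv.four
  by_cases hbl : b ∈ lsqF v
  · obtain ⟨y, hy⟩ := hbl
    rw [h4] at hy
    have hy0 : (y : K) ≠ 0 := y.ne_zero
    have hn1 : (1 : K) - n ≠ 0 := by
      intro h
      apply hn'
      rw [show n = 1 from Units.ext (by simpa using (sub_eq_zero.1 h).symm)]; exact one_mem _
    refine ⟨2 * (y : K)⁻¹ * (1 + n) / (1 - n), n, Units.mk0 (4 * (y : K)⁻¹ / (1 - n)) (by
      refine div_ne_zero (mul_ne_zero (by norm_num) (inv_ne_zero hy0)) hn1), hn, hn', ?_⟩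
    rw [Units.val_mk0]
    have e : (2 * (y : K)⁻¹ * (1 + n) / (1 - n)) ^ 2 - 4 * b - n * (4 * (y : K)⁻¹ / (1 - n)) ^ 2 =
        - 4 * (b * (y : K) ^ 2 - 1) * (y : K)⁻¹ ^ 2 := by
      field_simp; ring
    rw [e, map_mul, map_mul, Valuation.map_neg, h4, one_mul]
    have e2 : (n : K) * (4 * (y : K)⁻¹ / (1 - n)) ^ 2 = n * 4 * 4 * ((1 - n : K) ^ 2)⁻¹ * (y : K)⁻¹ ^ 2 := by
      field_simp
    rw [e2, map_mul, map_mul, map_mul, map_mul, hvn, h4, one_mul, one_mul, one_mul]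
    have hle : 1 ≤ v.valuation K (((1 - n : K) ^ 2)⁻¹) := by
      rw [map_inv₀, map_pow]
      have h0 : v.valuation K (1 - n : K) ≠ 0 := by rw [Valuation.ne_zero_iff]; exact hn1
      have h1 : v.valuation K (1 - n : K) ≤ 1 := by
        refine (Valuation.map_sub _ _ _).trans ?_
        rw [map_one, hvn, max_self]
      rw [one_le_inv₀ (pow_pos (zero_lt_iff.2 h0) 2)]
      exact pow_le_one₀ zero_le' h1
    refine mul_lt_mul_of_pos_right (hy.trans_le hle) ?_
    rw [zero_lt_iff, Valuation.ne_zero_iff]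
    exact pow_ne_zero _ (inv_ne_zero hy0)
  · have h40 : (4 : K) ≠ 0 := by norm_num
    have hv4b : v.valuation K ((Units.mk0 4 h40 * b : Kˣ) : K) = 1 := by push_cast; rw [Units.val_mk0, map_mul, h4, hvb, one_mul]
    have hl : Units.mk0 4 h40 * b ∈ LN (Sum.inr v) n := by
      refine LN_unram hv (by rw [hn]; exact Even.zero) hn' ?_
      rw [(val_eq_one_iff v _).1 hv4b]; exact Even.zero
    obtain ⟨m, ⟨τ, s, hm⟩, hm'⟩ := LN_approx v hl 1 one_ne_zero
    have hs0 : 1 ≤ v.valuation K ((n : K) * s ^ 2) := by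
      by_contra hlt
      push Not at hlt
      apply hbl
      have h1 : v.valuation K (τ ^ 2 - (Units.mk0 4 h40 * b : Kˣ)) < v.valuation K ((Units.mk0 4 h40 * b : Kˣ) : K) := by
        rw [hv4b]
        have : τ ^ 2 - ((Units.mk0 4 h40 * b : Kˣ) : K) = ((m : K) - (Units.mk0 4 h40 * b : Kˣ)) + n * s ^ 2 := by
          rw [hm]; ring
        rw [this]
        exact Valuation.map_add_lt _ hm' hlt
      have hτ : τ ≠ 0 := by
        rintro rfl
        rw [zero_pow two_ne_zero, zero_sub, Valuation.map_neg] at h1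
        exact lt_irrefl _ h1
      have h2 : Units.mk0 τ hτ ^ 2 / (Units.mk0 4 h40 * b) ∈ lsqF v := lsqF_of_lt_one hv (by
        push_cast; rw [Units.val_mk0, Units.val_mk0]; simpa using h1)
      have h3 := div_mem (sq_mem_lsqF v (Units.mk0 τ hτ)) h2
      rw [div_div_cancel] at h3
      have h5 : Units.mk0 4 h40 = (Units.mk0 2 two_ne_zero) ^ 2 := by ext; push_cast; norm_num
      rw [h5] at h3
      exact ((lsqF v).mul_mem_cancel_left (sq_mem_lsqF v _)).1 h3
    have hsne : s ≠ 0 := by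
      rintro rfl
      simp at hs0
    refine ⟨τ, n, Units.mk0 s hsne, hn, hn', ?_⟩
    rw [Units.val_mk0]
    refine lt_of_lt_of_le ?_ hs0
    have : τ ^ 2 - 4 * b - n * s ^ 2 = (m : K) - (Units.mk0 4 h40 * b : Kˣ) := by
      rw [hm]; push_cast; rw [Units.val_mk0]; ring
    rw [this]; exact hm'

lemma step2 (T : Finset (Pr K)) (b : Kˣ) (hT : ∀ v ∈ T, OddP v ∧ ord v b = 0) (hne : T.Nonempty) :
    ∃ (τ : K) (e : Kˣ), (e : K) = τ ^ 2 - 4 * b ∧ ¬ IsSquare e ∧ ∀ v ∈ T, Even (ord v e) ∧ e ∉ lsqF v := by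
  classical
  have hex : ∀ v : Pr K, ∃ (t : K) (ε : ℤᵐ⁰), ε ≠ 0 ∧ ∀ τ : K, v.valuation K (τ - t) < ε → v ∈ T →
      ∃ (n s : Kˣ), ord v n = 0 ∧ n ∉ lsqF v ∧
      v.valuation K ((τ ^ 2 - 4 * b : K) - n * s ^ 2) < v.valuation K ((n : K) * s ^ 2) := by
    intro v
    by_cases hv : v ∈ T
    · obtain ⟨t, n, s, hn, hn', h⟩ := loc_tau (hT v hv).1 (hT v hv).2
      obtain ⟨ε, hε, hz⟩ := sq_close v 1 t (v.valuation K ((n : K) * s ^ 2)) (by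
        rw [Valuation.ne_zero_iff]; exact mul_ne_zero n.ne_zero (pow_ne_zero _ s.ne_zero))
      refine ⟨t, ε, hε, fun τ hτ _ => ⟨n, s, hn, hn', ?_⟩⟩
      have := Valuation.map_add_lt _ (hz τ hτ) h
      convert this using 2; ring
    · exact ⟨0, 1, one_ne_zero, fun τ _ h => absurd h hv⟩
  choose t ε hε h using hex
  obtain ⟨τ, hτ, -⟩ := weak_approx T t ε hε (fun _ => 0) 1 one_pos
  have hall := fun v hv => h v τ (hτ v hv) hv
  obtain ⟨v0, hv0⟩ := hne
  have he0 : τ ^ 2 - 4 * (b : K) ≠ 0 := by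
    intro h0
    obtain ⟨n, s, -, -, h1⟩ := hall v0 hv0
    rw [h0, zero_sub, Valuation.map_neg] at h1
    exact lt_irrefl _ h1
  have hev : ∀ v ∈ T, Even (ord v (Units.mk0 _ he0)) ∧ Units.mk0 _ he0 ∉ lsqF v := by
    intro v hv
    obtain ⟨n, s, hn, hn', h1⟩ := hall v hv
    exact of_close (hT v hv).1 hn hn' h1
  refine ⟨τ, Units.mk0 _ he0, Units.val_mk0 _, ?_, hev⟩
  rintro ⟨y, hy⟩
  apply (hev v0 hv0).2
  rw [hy, ← pow_two]; exact sq_mem_lsqF v0 y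

variable {L : Type u} [Field L] [NumberField L] [Algebra K L]

lemma QE.indep {c : Kˣ} (Q : QE K L c) {p q : K} (h : algebraMap K L p + algebraMap K L q * Q.r = 0) : p = 0 ∧ q = 0 := by
  have h' := congrArg Q.σ h
  rw [map_add, map_mul, Q.σr, map_zero, AlgEquiv.commutes, AlgEquiv.commutes] at h'
  have h1 : algebraMap K L p = 0 := by linear_combination (h + h') / 2
  have hp : p = 0 := by simpa using h1
  rw [h1, zero_add] at h
  rcases mul_eq_zero.1 h with h | h
  · exact ⟨hp, by simpa using h⟩
  · exact absurd h Q.r_ne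

/-- the heart: membership in reduced norms under positivity -/
theorem main_QN (a b c : Kˣ) (hpos : ∀ φ : K →+* ℝ, φ a < 0 → φ b < 0 → 0 < φ c) : c ∈ QN a b := by
  classical
  set S := dyad K ∪ (spp a ∪ spp b) with hS
  obtain ⟨m, hm, hmS, hmI⟩ := step1 S a b c hpos
  suffices hmain : c * m ∈ QN a b by
    have := div_mem hmain hm
    simpa using this
  generalize c * m = d at hmS hmI
  have hSd : ∀ v, v ∉ S → OddP v ∧ ord v a = 0 ∧ ord v b = 0 := by
    intro v hv
    simp only [hS, Finset.mem_union, not_or, mem_spp, not_not] at hv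
    exact ⟨oddP_iff.2 hv.1, hv.2.1, hv.2.2⟩
  obtain ⟨q0, hq0⟩ := exists_prime_notMem S
  set T := insert q0 (spp d \ S) with hT
  have hTS : ∀ v ∈ T, v ∉ S := by
    intro v hv
    rcases Finset.mem_insert.1 hv with rfl | hv
    · exact hq0
    · exact (Finset.mem_sdiff.1 hv).2
  obtain ⟨τ, e, he, hesq, heT⟩ := step2 T b (fun v hv => ⟨(hSd v (hTS v hv)).1, (hSd v (hTS v hv)).2.2⟩)
    ⟨q0, Finset.mem_insert_self _ _⟩
  obtain ⟨L, _, _, _, ⟨Q⟩⟩ := exists_QE e hesq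
  -- local analysis over `L`
  have hodd : ∀ P : Pr L, iu K L d ∉ lsqF P → OddP P ∧ dn P ∉ S := by
    intro P hP
    have hnS : (dn P : Pr K) ∉ S := fun h => hP (lsqF_up P (hmS _ h))
    refine ⟨?_, hnS⟩
    have := (val_up_eq_one (K := K) P 2).2 (hSd _ hnS).1
    rwa [map_ofNat] at this
  have hnorm : iu K L a ∈ normG (iu K L d) := by
    refine normThm ?_ ?_
    · intro p hp
      rcases p with W | P
      · exact absurd (lsqI_up W hmI) hp
      · exact LN_ne_top_odd (hodd P hp).1 hp
    · intro p hp
      rcases p with W | P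
      · exact absurd (lsqI_up W hmI) hp
      · obtain ⟨hP2, hPS⟩ := hodd P hp
        have ha0 := (hSd _ hPS).2.1
        by_cases hev : Even (ord P (iu K L d))
        · refine LN_unram hP2 hev hp ?_
          rw [ord_up, ha0, mul_zero]; exact Even.zero
        · refine lsq_le_LN (Sum.inr P) _ (?_ : iu K L a ∈ lsqF P)
          have hd0 : ord (dn P : Pr K) d ≠ 0 := by
            intro h; apply hev; rw [ord_up, h, mul_zero]; exact Even.zero
          have hPT : (dn P : Pr K) ∈ T := Finset.mem_insert_of_mem (Finset.mem_sdiff.2 ⟨mem_spp.2 hd0, hPS⟩)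
          obtain ⟨⟨k, hk⟩, he2⟩ := heT _ hPT
          by_cases hal : a ∈ lsqF (dn P : Pr K)
          · exact lsqF_up P hal
          obtain ⟨π, hπ⟩ := exists_ord_eq_one (K := K) (dn P)
          have h1 : e * (π ^ (-k)) ^ 2 ∉ lsqF (dn P : Pr K) := by
            rw [(lsqF (dn P : Pr K)).mul_mem_cancel_right (sq_mem_lsqF _ _)]; exact he2
          have h2 : ord (dn P : Pr K) (e * (π ^ (-k)) ^ 2) = 0 := by
            rw [ord_mul, ord_pow, ord_zpow, hπ, hk]; push_cast; ring
          have h3 := lsqF_up P (unit_mul_lsqF (hSd _ hPS).1 ha0 h2 hal h1)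
          rw [← mul_assoc, map_mul, map_mul, ← Q.ru_sq, map_pow] at h3
          exact ((lsqF P).mul_mem_cancel_right (sq_mem_lsqF P _)).1
            (((lsqF P).mul_mem_cancel_right (sq_mem_lsqF P _)).1 h3)
  obtain ⟨X, Y, hXY⟩ := hnorm
  obtain ⟨x0, x1, rfl⟩ := Q.span X
  obtain ⟨y0, y1, rfl⟩ := Q.span Y
  have hr := Q.hr
  have h0 : algebraMap K L (x0 ^ 2 + e * x1 ^ 2 - d * (y0 ^ 2 + e * y1 ^ 2) - a) +
      algebraMap K L (2 * (x0 * x1 - d * y0 * y1)) * Q.r = 0 := by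
    rw [iu_coe, iu_coe] at hXY
    simp only [map_sub, map_add, map_mul, map_pow, map_ofNat]
    linear_combination -hXY - (algebraMap K L x1 ^ 2 - algebraMap K L d * algebraMap K L y1 ^ 2) * hr
  obtain ⟨e1, e2⟩ := Q.indep h0
  apply step5
  refine step4 (e := e) (τ := τ) (x0 := x0) (x1 := x1) (y0 := y0) (y1 := y1) he ?_ ?_
  · linear_combination -e1
  · linear_combination e2 / 2

end C12
end HS

set_option linter.unusedSectionVars false
set_option linter.style.haveILetI false
set_option linter.deprecated false
set_option linter.unusedSimpArgs false

namespace HS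
open NumberField IsDedekindDomain HeightOneSpectrum WithZero

section A13
universe u
variable {K : Type u} [Field K]
open QuadraticMap

lemma gram_eq {n : ℕ} (f : QuadraticForm K (Fin n → K)) : gramMatrix f = LinearMap.toMatrix₂' K (polarBilin f) := by
  ext i j
  rw [LinearMap.toMatrix₂'_apply]; rfl

lemma gram_equiv {n : ℕ} (f g : QuadraticForm K (Fin n → K)) (e : f.IsometryEquiv g) :
    ∃ t : K, (gramMatrix f).det = t ^ 2 * (gramMatrix g).det := by
  refine ⟨(LinearMap.toMatrix' (e.toLinearEquiv : (Fin n → K) →ₗ[K] (Fin n → K))).det, ?_⟩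
  have h : polarBilin f = (polarBilin g).compl₁₂ (e.toLinearEquiv : (Fin n → K) →ₗ[K] (Fin n → K)) (e.toLinearEquiv : (Fin n → K) →ₗ[K] (Fin n → K)) := by
    ext i j
    simp [polar, ← map_add]
  rw [gram_eq, gram_eq, h, LinearMap.toMatrix₂'_compl₁₂, Matrix.det_mul, Matrix.det_mul, Matrix.det_transpose]
  ring

lemma gram_diag (w : Fin 4 → K) : (gramMatrix (weightedSumSquares K w)).det = 16 * (w 0 * w 1 * w 2 * w 3) := by
  have : gramMatrix (weightedSumSquares K w) = Matrix.diagonal fun i => 2 * w i := by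
    ext i j
    simp only [gramMatrix, Matrix.of_apply, polar, weightedSumSquares_apply, Fin.sum_univ_four, smul_eq_mul]
    fin_cases i <;> fin_cases j <;> simp [Pi.single_apply, Matrix.diagonal] <;> ring
  rw [this, Matrix.det_diagonal, Fin.prod_univ_four]; ring

lemma equiv_of_map [CharZero K] (w w' : Fin 4 → K) (hw : ∀ i, w i ≠ 0) (M : (Fin 4 → K) →ₗ[K] (Fin 4 → K))
    (hM : ∀ x, weightedSumSquares K w' (M x) = weightedSumSquares K w x) :
    (weightedSumSquares K w).Equivalent (weightedSumSquares K w') := by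
  have hinj : Function.Injective M := by
    rw [injective_iff_map_eq_zero]
    intro x hx
    have h0 : weightedSumSquares K w x = 0 := by rw [← hM, hx, map_zero]
    funext i
    have h1 : weightedSumSquares K w (x + Pi.single i 1) = weightedSumSquares K w (Pi.single i 1) := by
      rw [← hM, ← hM, map_add, hx, zero_add]
    simp only [weightedSumSquares_apply, Fin.sum_univ_four, smul_eq_mul, Pi.add_apply] at h0 h1
    have : w i * x i * 2 = 0 := by
      have e : ∀ j, (Pi.single i 1 : Fin 4 → K) j = if j = i then 1 else 0 := fun j => Pi.single_apply ..
      rw [e, e, e, e] at h1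
      clear e hx
      fin_cases i
      · change w 0 * x 0 * 2 = 0
        change w 0 * ((x 0 + 1) * (x 0 + 1)) + w 1 * ((x 1 + 0) * (x 1 + 0)) + w 2 * ((x 2 + 0) * (x 2 + 0)) + w 3 * ((x 3 + 0) * (x 3 + 0)) =
          w 0 * (1 * 1) + w 1 * (0 * 0) + w 2 * (0 * 0) + w 3 * (0 * 0) at h1
        linear_combination h1 - h0
      · change w 1 * x 1 * 2 = 0
        change w 0 * ((x 0 + 0) * (x 0 + 0)) + w 1 * ((x 1 + 1) * (x 1 + 1)) + w 2 * ((x 2 + 0) * (x 2 + 0)) + w 3 * ((x 3 + 0) * (x 3 + 0)) =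
          w 0 * (0 * 0) + w 1 * (1 * 1) + w 2 * (0 * 0) + w 3 * (0 * 0) at h1
        linear_combination h1 - h0
      · change w 2 * x 2 * 2 = 0
        change w 0 * ((x 0 + 0) * (x 0 + 0)) + w 1 * ((x 1 + 0) * (x 1 + 0)) + w 2 * ((x 2 + 1) * (x 2 + 1)) + w 3 * ((x 3 + 0) * (x 3 + 0)) =
          w 0 * (0 * 0) + w 1 * (0 * 0) + w 2 * (1 * 1) + w 3 * (0 * 0) at h1
        linear_combination h1 - h0
      · change w 3 * x 3 * 2 = 0
        change w 0 * ((x 0 + 0) * (x 0 + 0)) + w 1 * ((x 1 + 0) * (x 1 + 0)) + w 2 * ((x 2 + 0) * (x 2 + 0)) + w 3 * ((x 3 + 1) * (x 3 + 1)) =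
          w 0 * (0 * 0) + w 1 * (0 * 0) + w 2 * (0 * 0) + w 3 * (1 * 1) at h1
        linear_combination h1 - h0
    have h2 : w i * x i = 0 := by simpa using this
    simpa [hw i] using h2
  exact ⟨{ LinearEquiv.ofInjectiveEndo M hinj with map_app' := fun x => hM x }⟩

lemma equiv_final [CharZero K] (d : Fin 4 → K) (hd : ∀ i, d i ≠ 0) (t : K) (ht : d 0 * d 1 * d 2 * d 3 = t ^ 2)
    (p0 p1 p2 p3 a b : K) (ha : a = - (d 0 * d 1)) (hb : b = - (d 0 * d 2))
    (hp : d 0 = p0 ^ 2 - a * p1 ^ 2 - b * p2 ^ 2 + a * b * p3 ^ 2) :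
    (weightedSumSquares K d).Equivalent (weightedSumSquares K ![1, -a, -b, a * b]) := by
  have h0 := hd 0
  have h1 := hd 1
  have h2 := hd 2
  let s : K := t / (d 0 ^ 2 * d 1 * d 2)
  have hs : a * b * d 0 * s ^ 2 = d 3 := by
    simp only [s, ha, hb]
    field_simp
    linear_combination -ht
  have ha1 : a * (d 0)⁻¹ ^ 2 * d 0 = - d 1 := by rw [ha]; field_simp
  have hb1 : b * (d 0)⁻¹ ^ 2 * d 0 = - d 2 := by rw [hb]; field_simp
  let A : Matrix (Fin 4) (Fin 4) K := !![p0, a * p1 * (d 0)⁻¹, b * p2 * (d 0)⁻¹, - a * b * p3 * s;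
    p1, p0 * (d 0)⁻¹, b * p3 * (d 0)⁻¹, - b * p2 * s;
    p2, - a * p3 * (d 0)⁻¹, p0 * (d 0)⁻¹, a * p1 * s;
    p3, - p2 * (d 0)⁻¹, p1 * (d 0)⁻¹, p0 * s]
  refine equiv_of_map _ _ hd (Matrix.toLin' A) fun x => ?_
  simp only [weightedSumSquares_apply, Fin.sum_univ_four, smul_eq_mul, Matrix.toLin'_apply, Matrix.mulVec,
    dotProduct, A]
  simp only [Matrix.of_apply, Matrix.cons_val]
  generalize (d 0)⁻¹ = r at *
  generalize s = s at *
  have e1 : d 1 = - (a * r ^ 2 * d 0) := by rw [ha1]; ring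
  have e2 : d 2 = - (b * r ^ 2 * d 0) := by rw [hb1]; ring
  rw [e1, e2, ← hs]
  linear_combination -(x 0 ^ 2 - a * (r * x 1) ^ 2 - b * (r * x 2) ^ 2 + a * b * (s * x 3) ^ 2) * hp

end A13
end HS

theorem stmt_2 (K : Type*) [Field K] [NumberField K]
    (f : QuadraticForm K (Fin 4 → K))
    (hdisc : ∃ s : K, s ≠ 0 ∧ (gramMatrix f).det = s ^ 2)
    (hpos : ∀ v : K →+* ℝ, ∃ x : Fin 4 → K, 0 < v (f x)) :
    ∃ a b : K, a ≠ 0 ∧ b ≠ 0 ∧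
      f.Equivalent (QuadraticMap.weightedSumSquares K ![1, -a, -b, a * b]) := by
  obtain ⟨s, hs0, hs⟩ := hdisc
  haveI : Invertible (2 : K) := invertibleOfNonzero two_ne_zero
  have hw := QuadraticForm.equivalent_weightedSumSquares f
  rw [Module.finrank_fin_fun] at hw
  obtain ⟨d, ⟨e⟩⟩ := hw
  obtain ⟨r, hr⟩ := HS.gram_equiv _ _ e
  rw [HS.gram_diag, hs] at hr
  have hr0 : r ≠ 0 := by
    rintro rfl
    apply hs0
    simpa using hr
  have ht : d 0 * d 1 * d 2 * d 3 = (s / (4 * r)) ^ 2 := by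
    field_simp
    linear_combination -hr
  have hprod : d 0 * d 1 * d 2 * d 3 ≠ 0 := by
    intro h
    rw [h] at hr
    apply hs0
    simpa using hr
  have h0 : d 0 ≠ 0 := by intro h; apply hprod; rw [h]; ring
  have h1 : d 1 ≠ 0 := by intro h; apply hprod; rw [h]; ring
  have h2 : d 2 ≠ 0 := by intro h; apply hprod; rw [h]; ring
  have h3 : d 3 ≠ 0 := by intro h; apply hprod; rw [h]; ring
  have hd : ∀ i, d i ≠ 0 := by intro i; fin_cases i <;> assumption
  have ha : - (d 0 * d 1) ≠ 0 := neg_ne_zero.2 (mul_ne_zero h0 h1)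
  have hb : - (d 0 * d 2) ≠ 0 := neg_ne_zero.2 (mul_ne_zero h0 h2)
  refine ⟨_, _, ha, hb, ?_⟩
  have hQ := HS.main_QN (Units.mk0 _ ha) (Units.mk0 _ hb) (Units.mk0 _ h0) (by
    intro φ k1 k2
    simp only [Units.val_mk0, map_neg, map_mul, neg_lt_zero] at k1 k2 ⊢
    have n0 : φ (d 0) ≠ 0 := by rwa [map_ne_zero]
    by_contra hneg
    have l0 : φ (d 0) < 0 := lt_of_le_of_ne (not_lt.1 hneg) n0
    have l1 : φ (d 1) < 0 := by nlinarith
    have l2 : φ (d 2) < 0 := by nlinarith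
    have l3 : φ (d 3) ≤ 0 := by
      by_contra hc
      push Not at hc
      have ht' := congrArg φ ht
      simp only [map_mul, map_pow] at ht'
      have := sq_nonneg (φ (s / (4 * r)))
      rw [← ht'] at this
      have hp : φ (d 0) * φ (d 1) * φ (d 2) < 0 := mul_neg_of_pos_of_neg k1 l2
      have := mul_neg_of_neg_of_pos hp hc
      linarith
    obtain ⟨x, hx⟩ := hpos φ
    rw [← e.map_app] at hx
    generalize e x = y at hx
    simp only [QuadraticMap.weightedSumSquares_apply, Fin.sum_univ_four, smul_eq_mul, map_add, map_mul] at hx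
    have m0 := mul_nonpos_of_nonpos_of_nonneg l0.le (mul_self_nonneg (φ (y 0)))
    have m1 := mul_nonpos_of_nonpos_of_nonneg l1.le (mul_self_nonneg (φ (y 1)))
    have m2 := mul_nonpos_of_nonpos_of_nonneg l2.le (mul_self_nonneg (φ (y 2)))
    have m3 := mul_nonpos_of_nonpos_of_nonneg l3 (mul_self_nonneg (φ (y 3)))
    linarith)
  obtain ⟨p0, p1, p2, p3, hp⟩ := hQ
  simp only [Units.val_mk0] at hp
  exact QuadraticMap.Equivalent.trans ⟨e⟩ (HS.equiv_final d hd _ ht p0 p1 p2 p3 _ _ rfl rfl hp)
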